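/- arXiv:math/0311449 — 3 statements merged into one kernel-verified Lean document; each statement's English description precedes it below -/
import Mathlib

section
/- For every integer k ≥ 3 and every ε > 0 there exists n₀ such that every graph G on n ≥ n₀ vertices with minimum degree at least n·(1 - 1/(9k¹⁰) + ε) has an F_k-decomposition, where F_k = {K_k, K_{2k-1}, K_{2k-1}⁻}. -/
/-- `c` is a copy of `H` in `G`, i.e. a subgraph of `G` isomorphic to `H`. -/
def SimpleGraph.Subgraph.IsCopy {α β : Type*} {G : SimpleGraph α} (c : G.Subgraph)
    (H : SimpleGraph β) : Prop :=
  Nonempty (c.coe ≃g H)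


/-- linear `m`-uniform set systems -/
def IsPacking {V : Type} (m : ℕ) (B : Finset (Finset V)) : Prop :=
  (∀ b ∈ B, b.card = m) ∧
  ∀ b ∈ B, ∀ b' ∈ B, ∀ x y, x ≠ y → x ∈ b → y ∈ b → x ∈ b' → y ∈ b' → b = b'

section PartA
open Finset
open scoped Classical

lemma unit_sub {m p : ℕ} (hp : ∃ a, p = (m-1).factorial * a + 1) {i j : ℕ} (hi : i < m) (hj : j < m)
    (hij : i ≠ j) : IsUnit ((i : ZMod p) - (j : ZMod p)) := by
  obtain ⟨a, ha⟩ := hp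
  have key : ∀ i j : ℕ, j < m → i < j → IsUnit ((j : ZMod p) - (i : ZMod p)) := by
    intro i j hj hlt
    rw [← Nat.cast_sub hlt.le, ZMod.isUnit_iff_coprime]
    have h1 : (j - i) ∣ (m-1).factorial := Nat.dvd_factorial (by omega) (by omega)
    obtain ⟨c, hc⟩ := h1
    rw [ha, hc, mul_assoc]
    simp
  rcases lt_or_gt_of_ne hij with h | h
  · rw [← neg_sub]; exact (key i j hj h).neg
  · exact key j i hi h

lemma line_unique {m p : ℕ} (hp : ∃ a, p = (m-1).factorial * a + 1) {i j : ℕ} (hi : i < m) (hj : j < m)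
    (hij : i ≠ j) {a b a' b' x y : ZMod p} (h1 : x = a + i * b) (h2 : y = a + j * b)
    (h3 : x = a' + i * b') (h4 : y = a' + j * b') : a = a' ∧ b = b' := by
  have hu := unit_sub hp hi hj hij
  have hb : b = b' := by
    have : ((i : ZMod p) - j) * b = ((i : ZMod p) - j) * b' := by
      have e1 : x - y = ((i : ZMod p) - j) * b := by rw [h1, h2]; ring
      have e2 : x - y = ((i : ZMod p) - j) * b' := by rw [h3, h4]; ring
      rw [← e1, e2]
    exact hu.mul_left_cancel this
  subst hb
  refine ⟨?_, rfl⟩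
  have := h1.symm.trans h3
  exact add_right_cancel this

lemma line_exists {m p : ℕ} (hp : ∃ a, p = (m-1).factorial * a + 1) {i j : ℕ} (hi : i < m) (hj : j < m)
    (hij : i ≠ j) (x y : ZMod p) : ∃ a b : ZMod p, x = a + i * b ∧ y = a + j * b := by
  obtain ⟨u, hu⟩ := unit_sub hp hi hj hij
  refine ⟨x - i * (↑u⁻¹ * (x - y)), ↑u⁻¹ * (x - y), by ring, ?_⟩
  have : (u : ZMod p) * (↑u⁻¹ * (x - y)) = x - y := by simp
  rw [hu] at this
  linear_combination this

lemma exists_packing (m : ℕ) (hm : 2 ≤ m) (t : ℕ) : ∃ C : ℕ, ∀ (V : Type) [Fintype V],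
    ∃ B : Finset (Finset V), IsPacking m B ∧
      ∀ v, m ^ t * (univ.filter (fun u => u ≠ v ∧ ∀ b ∈ B, ¬ (v ∈ b ∧ u ∈ b))).card
        ≤ Fintype.card V + C := by
  induction t with
  | zero =>
    refine ⟨0, fun V _ => ⟨∅, ⟨by simp, by simp⟩, fun v => ?_⟩⟩
    simpa using card_le_univ _
  | succ t ih =>
    obtain ⟨C, hC⟩ := ih
    set F := (m-1).factorial with hF
    refine ⟨m * F + m + m * C + m ^ (t+1) * (m * F + m) * m, fun V _ => ?_⟩
    set n := Fintype.card V with hn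
    set p := F * (n / (m * F) + 1) + 1 with hp
    have hFpos : 0 < F := Nat.factorial_pos _
    have hp' : ∃ a, p = (m-1).factorial * a + 1 := ⟨_, rfl⟩
    have hmp : n ≤ m * p := by
      have : n < m * F * (n / (m * F) + 1) := Nat.lt_mul_div_succ n (by positivity)
      calc n ≤ m * F * (n / (m * F) + 1) := this.le
        _ ≤ m * p := by rw [hp]; nlinarith
    have hmp2 : m * p ≤ n + (m * F + m) := by
      have : m * F * (n / (m * F)) ≤ n := Nat.mul_div_le n (m * F)
      rw [hp]; nlinarith
    have : NeZero p := ⟨by rw [hp]; omega⟩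
    obtain ⟨f⟩ : Nonempty (V ↪ Fin m × ZMod p) := by
      rw [Function.Embedding.nonempty_iff_card_le]
      simpa [ZMod.card] using hmp
    let blk : ZMod p × ZMod p → Finset V := fun q =>
      univ.filter (fun v => (f v).2 = q.1 + ((f v).1 : ℕ) * q.2)
    let B1 : Finset (Finset V) := (univ.image blk).filter (fun b => b.card = m)
    have hB1mem : ∀ b ∈ B1, ∃ q, blk q = b := by
      intro b hb
      simp only [B1, mem_filter, mem_image, mem_univ, true_and] at hb
      exact hb.1
    have hfst : ∀ q x y, x ≠ y → x ∈ blk q → y ∈ blk q → (f x).1 ≠ (f y).1 := by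
      intro q x y hxy hx hy h
      simp only [blk, mem_filter, mem_univ, true_and] at hx hy
      apply hxy
      apply f.injective
      apply Prod.ext h
      rw [hx, hy, h]
    choose BI hBI hBIu using fun i : Fin m => hC {v : V // (f v).1 = i}
    let emb : Fin m → Finset (Finset V) := fun i =>
      (BI i).image (fun b => b.map (Function.Embedding.subtype _))
    let B2 : Finset (Finset V) := univ.biUnion emb
    have hB2 : ∀ b, b ∈ B2 ↔ ∃ i, ∃ c ∈ BI i, c.map (Function.Embedding.subtype _) = b := by
      intro b; simp [B2, emb]
    have hB2fst : ∀ b ∈ B2, ∀ x ∈ b, ∀ y ∈ b, (f x).1 = (f y).1 := by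
      intro b hb x hx y hy
      obtain ⟨i, c, hc, rfl⟩ := (hB2 b).1 hb
      simp only [mem_map, Function.Embedding.subtype_apply] at hx hy
      obtain ⟨x', _, rfl⟩ := hx
      obtain ⟨y', _, rfl⟩ := hy
      rw [x'.2, y'.2]
    refine ⟨B1 ∪ B2, ⟨?_, ?_⟩, ?_⟩
    · intro b hb
      rcases mem_union.1 hb with hb | hb
      · exact (mem_filter.1 hb).2
      · obtain ⟨i, c, hc, rfl⟩ := (hB2 b).1 hb
        rw [card_map]; exact (hBI i).1 c hc
    · intro b hb b' hb' x y hxy hxb hyb hxb' hyb'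
      rcases mem_union.1 hb with hb | hb <;> rcases mem_union.1 hb' with hb' | hb'
      · obtain ⟨q, rfl⟩ := hB1mem b hb
        obtain ⟨q', rfl⟩ := hB1mem b' hb'
        have hne := hfst q x y hxy hxb hyb
        simp only [blk, mem_filter, mem_univ, true_and] at hxb hyb hxb' hyb'
        have := line_unique hp' (f x).1.2 (f y).1.2 (fun h => hne (Fin.ext h)) hxb hyb hxb' hyb'
        rw [Prod.ext this.1 this.2]
      · obtain ⟨q, rfl⟩ := hB1mem b hb
        exact absurd (hB2fst _ hb' x hxb' y hyb') (hfst q x y hxy hxb hyb)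
      · obtain ⟨q, rfl⟩ := hB1mem b' hb'
        exact absurd (hB2fst _ hb x hxb y hyb) (hfst q x y hxy hxb' hyb')
      · obtain ⟨i, c, hc, rfl⟩ := (hB2 b).1 hb
        obtain ⟨i', c', hc', rfl⟩ := (hB2 b').1 hb'
        simp only [mem_map, Function.Embedding.subtype_apply] at hxb hyb hxb' hyb'
        obtain ⟨x1, hx1, rfl⟩ := hxb
        obtain ⟨y1, hy1, rfl⟩ := hyb
        obtain ⟨x2, hx2, hx12⟩ := hxb'
        obtain ⟨y2, hy2, hy12⟩ := hyb'
        obtain rfl : i = i' := by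
          rw [← x1.2, ← x2.2, hx12]
        obtain rfl := Subtype.ext hx12
        obtain rfl := Subtype.ext hy12
        rw [(hBI i).2 c hc c' hc' x2 y2 (fun h => hxy (by rw [h])) hx1 hy1 hx2 hy2]
    · intro v
      set i := (f v).1 with hi
      set S := univ.filter (fun u => u ≠ v ∧ ∀ b ∈ B1 ∪ B2, ¬ (v ∈ b ∧ u ∈ b)) with hS
      have hsplit := card_filter_add_card_filter_not (s := S) (fun u => (f u).1 = i)
      -- same part
      have hcardI : Fintype.card {v : V // (f v).1 = i} ≤ p := by
        have : Function.Injective (fun u : {v : V // (f v).1 = i} => (f u.1).2) := by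
          intro a b hab
          apply Subtype.ext
          apply f.injective
          exact Prod.ext (a.2.trans b.2.symm) hab
        simpa [ZMod.card] using Fintype.card_le_of_injective _ this
      have h1 : (S.filter (fun u => (f u).1 = i)).card ≤
          (univ.filter (fun u : {v : V // (f v).1 = i} => u ≠ ⟨v, rfl⟩ ∧
            ∀ b ∈ BI i, ¬ (⟨v, rfl⟩ ∈ b ∧ u ∈ b))).card := by
        rw [← card_map (Function.Embedding.subtype _)]
        apply card_le_card
        intro u hu
        simp only [hS, mem_filter, mem_univ, true_and] at hu
        obtain ⟨⟨huv, hub⟩, hui⟩ := hu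
        simp only [mem_map, mem_filter, mem_univ, true_and]
        refine ⟨⟨u, hui⟩, ⟨fun h => huv (congrArg Subtype.val h), ?_⟩, rfl⟩
        rintro b hb ⟨hvb, hub'⟩
        refine hub (b.map (Function.Embedding.subtype _))
          (mem_union_right _ ((hB2 _).2 ⟨i, b, hb, rfl⟩)) ⟨?_, ?_⟩
        · exact mem_map.2 ⟨_, hvb, rfl⟩
        · exact mem_map.2 ⟨_, hub', rfl⟩
      have h1' := hBIu i ⟨v, rfl⟩
      -- different part
      have h2 : (S.filter (fun u => ¬ (f u).1 = i)).card ≤ (m * F + m) * m := by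
        have hmiss : ∀ u ∈ S.filter (fun u => ¬ (f u).1 = i), ∃ q : ZMod p × ZMod p,
            v ∈ blk q ∧ u ∈ blk q ∧ ∃ j : Fin m, (j, q.1 + (j : ℕ) * q.2) ∉ Set.range f := by
          intro u hu
          simp only [hS, mem_filter, mem_univ, true_and] at hu
          obtain ⟨⟨huv, hub⟩, hui⟩ := hu
          obtain ⟨a, b, hx, hy⟩ := line_exists hp' (f v).1.2 (f u).1.2
            (fun h => hui (Fin.ext h).symm) (f v).2 (f u).2
          have hvq : v ∈ blk (a, b) := by simp [blk, hx]
          have huq : u ∈ blk (a, b) := by simp [blk, hy]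
          refine ⟨(a, b), hvq, huq, ?_⟩
          by_contra hcon
          push Not at hcon
          refine hub (blk (a, b)) (mem_union_left _ (mem_filter.2 ⟨by simp, ?_⟩)) ⟨hvq, huq⟩
          choose g hg using hcon
          have : (blk (a,b)) = univ.image g := by
            ext w
            simp only [mem_image, mem_univ, true_and]
            constructor
            · intro hw
              refine ⟨(f w).1, ?_⟩
              apply f.injective
              rw [hg]
              simp only [blk, mem_filter, mem_univ, true_and] at hw
              exact Prod.ext rfl hw.symm
            · rintro ⟨j, rfl⟩
              simp only [blk, mem_filter, mem_univ, true_and]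
              rw [hg]
          rw [this, card_image_of_injective]
          · simp
          · intro j j' h
            have := congrArg (fun z => (f z).1) h
            simpa [hg] using this
        have : Nonempty (Fin m) := ⟨i⟩
        choose! q hq1 hq2 j hj using hmiss
        have hle := card_le_card_of_injOn
          (s := S.filter (fun u => ¬ (f u).1 = i))
          (t := ((univ.image f)ᶜ) ×ˢ (univ : Finset (Fin m)))
          (fun u => ((j u, (q u).1 + (j u : ℕ) * (q u).2), (f u).1)) ?_ ?_
        · refine hle.trans ?_
          rw [card_product, card_compl, card_image_of_injective _ f.injective]
          simp only [Fintype.card_prod, Fintype.card_fin, ZMod.card, card_univ]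
          gcongr
          omega
        · intro u hu
          have := hj u hu
          simp only [Set.mem_range, not_exists] at this
          simp only [coe_product, Set.mem_prod, mem_coe, mem_compl, mem_image, mem_univ, true_and,
            not_exists, and_true]
          exact this
        · intro u hu u' hu' h
          simp only [Prod.mk.injEq] at h
          obtain ⟨⟨hj1, hj2⟩, hf1⟩ := h
          have a1 := hq1 u hu
          have a2 := hq1 u' hu'
          have b1 := hq2 u hu
          have b2 := hq2 u' hu'
          have hne : ((f v).1 : ℕ) ≠ (j u : ℕ) := by
            intro h
            have h' : (f v).1 = j u := Fin.ext h
            apply hj u hu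
            refine ⟨v, Prod.ext h' ?_⟩
            simp only [blk, mem_filter, mem_univ, true_and] at a1
            rw [a1, h]
          simp only [blk, mem_filter, mem_univ, true_and] at a1 a2 b1 b2
          have := line_unique hp' (f v).1.2 (j u).2 hne a1 rfl a2 (hj1 ▸ hj2)
          apply f.injective
          refine Prod.ext hf1 ?_
          rw [b1, b2, hf1, this.1, this.2]
      rw [← hsplit, mul_add]
      have e1 : m ^ (t+1) * (S.filter (fun u => (f u).1 = i)).card ≤ m * (p + C) := by
        calc _ ≤ m * (m ^ t * (univ.filter (fun u : {v : V // (f v).1 = i} => u ≠ ⟨v, rfl⟩ ∧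
            ∀ b ∈ BI i, ¬ (⟨v, rfl⟩ ∈ b ∧ u ∈ b))).card) := by
              rw [pow_succ, mul_comm (m^t) m, mul_assoc]; gcongr
          _ ≤ m * (Fintype.card {v : V // (f v).1 = i} + C) := by
              apply Nat.mul_le_mul_left; convert h1'
          _ ≤ _ := by gcongr
      have e2 : m ^ (t+1) * (S.filter (fun u => ¬ (f u).1 = i)).card ≤
        m ^ (t+1) * ((m * F + m) * m) := by gcongr
      nlinarith
end PartA
section PartB
open Finset Equiv
open scoped Classical

lemma swap_count {V : Type} [Fintype V] (A : Finset (Perm V)) (N : Perm V → Finset V)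
    (T : Finset V) (z : V) (d : ℕ)
    (hA : ∀ σ ∈ A, ∀ z' ∉ T, σ * swap z z' ∈ A)
    (hN : ∀ σ, ∀ z' ∉ T, N (σ * swap z z') = N σ)
    (hd : ∀ σ, (N σ).card ≤ d) :
    (Fintype.card V - T.card) * (A.filter (fun σ => σ z ∈ N σ)).card ≤ d * A.card := by
  have h1 : ∀ z' ∈ Tᶜ, (A.filter (fun σ => σ z ∈ N σ)).card ≤
      (A.filter (fun σ => σ z' ∈ N σ)).card := by
    intro z' hz'
    rw [mem_compl] at hz'
    apply card_le_card_of_injOn (fun σ => σ * swap z z')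
    · intro σ hσ
      simp only [coe_filter, Set.mem_ofPred_eq] at hσ ⊢
      refine ⟨hA σ hσ.1 z' hz', ?_⟩
      rw [hN σ z' hz']
      simpa using hσ.2
    · intro σ _ τ _ h
      exact mul_right_cancel h
  calc (Fintype.card V - T.card) * (A.filter (fun σ => σ z ∈ N σ)).card
      = ∑ z' ∈ Tᶜ, (A.filter (fun σ => σ z ∈ N σ)).card := by
        rw [sum_const, card_compl, smul_eq_mul]
    _ ≤ ∑ z' ∈ Tᶜ, (A.filter (fun σ => σ z' ∈ N σ)).card := sum_le_sum h1
    _ = ∑ σ ∈ A, (Tᶜ.filter (fun z' => σ z' ∈ N σ)).card := by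
        simp only [card_filter]
        exact sum_comm
    _ ≤ ∑ σ ∈ A, d := by
        apply sum_le_sum
        intro σ _
        refine le_trans ?_ (hd σ)
        apply card_le_card_of_injOn σ
        · intro z' hz'
          simp only [coe_filter, Set.mem_ofPred_eq] at hz'
          exact hz'.2
        · exact σ.injective.injOn
    _ = d * A.card := by rw [sum_const, smul_eq_mul, mul_comm]

lemma pairs_count {V : Type} [Fintype V] (G : SimpleGraph V) (d r : ℕ)
    (hd : ∀ v, (univ.filter (fun w => ¬ G.Adj v w)).card ≤ d)
    (S : Finset (V × V)) (hS : S.card ≤ r)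
    (hz : ∀ a ∈ S, ∀ b ∈ S, a.2 = b.2 → a = b) (hy : ∀ a ∈ S, ∀ b ∈ S, a.1 ≠ b.2) :
    (Fintype.card V - 2 * r) ^ S.card *
      (univ.filter (fun σ : Perm V => ∀ a ∈ S, ¬ G.Adj (σ a.1) (σ a.2))).card
      ≤ d ^ S.card * (Fintype.card (Perm V)) := by
  induction S using Finset.induction_on with
  | empty => simp
  | insert a S ha ih =>
    have ih' := ih (by rw [card_insert_of_notMem ha] at hS; omega)
      (fun x hx y hy => hz x (mem_insert_of_mem hx) y (mem_insert_of_mem hy))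
      (fun x hx y hy' => hy x (mem_insert_of_mem hx) y (mem_insert_of_mem hy'))
    set A := univ.filter (fun σ : Perm V => ∀ a ∈ S, ¬ G.Adj (σ a.1) (σ a.2)) with hAdef
    set T := (insert a S).image Prod.fst ∪ S.image Prod.snd with hT
    have hTc : T.card ≤ 2 * r := by
      have h1 : ((insert a S).image Prod.fst).card ≤ r := card_image_le.trans hS
      have h2 : (S.image Prod.snd).card ≤ r :=
        card_image_le.trans ((card_le_card (subset_insert a S)).trans hS)
      calc T.card ≤ _ := card_union_le _ _
        _ ≤ r + r := add_le_add h1 h2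
        _ = 2 * r := by ring
    have haT : a.2 ∉ T := by
      simp only [hT, mem_union, mem_image, not_or, not_exists, not_and]
      refine ⟨fun x hx => hy x hx a (mem_insert_self _ _), fun x hx h => ha ?_⟩
      rw [← hz x (mem_insert_of_mem hx) a (mem_insert_self _ _) h]; exact hx
    have hfix : ∀ z' ∉ T, ∀ x ∈ T, swap a.2 z' x = x := by
      intro z' hz' x hx
      apply swap_apply_of_ne_of_ne
      · rintro rfl; exact haT hx
      · rintro rfl; exact hz' hx
    have hm1 : ∀ x ∈ insert a S, x.1 ∈ T := fun x hx =>
      mem_union_left _ (mem_image_of_mem _ hx)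
    have hm2 : ∀ x ∈ S, x.2 ∈ T := fun x hx =>
      mem_union_right _ (mem_image_of_mem _ hx)
    have key := swap_count A (fun σ => univ.filter (fun w => ¬ G.Adj (σ a.1) w)) T a.2 d ?_ ?_
      (fun σ => hd _)
    · have heq : (univ.filter (fun σ : Perm V => ∀ b ∈ insert a S, ¬ G.Adj (σ b.1) (σ b.2))) =
          A.filter (fun σ => σ a.2 ∈ univ.filter (fun w => ¬ G.Adj (σ a.1) w)) := by
        ext σ
        simp only [hAdef, mem_filter, mem_univ, true_and, mem_insert, forall_eq_or_imp]
        tauto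
      rw [heq, card_insert_of_notMem ha, pow_succ, pow_succ, mul_assoc]
      calc _ ≤ (Fintype.card V - 2 * r) ^ S.card * (d * A.card) := by
            apply Nat.mul_le_mul_left
            refine le_trans (Nat.mul_le_mul_right _ ?_) key
            omega
        _ = d * ((Fintype.card V - 2 * r) ^ S.card * A.card) := by ring
        _ ≤ d * (d ^ S.card * (Fintype.card (Perm V))) := Nat.mul_le_mul_left _ ih'
        _ = _ := by ring
    · intro σ hσ z' hz'
      simp only [hAdef, mem_filter, mem_univ, true_and] at hσ ⊢
      intro x hx
      rw [Perm.mul_apply, Perm.mul_apply, hfix z' hz' _ (hm1 x (mem_insert_of_mem hx)),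
        hfix z' hz' _ (hm2 x hx)]
      exact hσ x hx
    · intro σ z' hz'
      rw [Perm.mul_apply, hfix z' hz' _ (hm1 a (mem_insert_self _ _))]

lemma exists_good_perm {V : Type} [Fintype V] (G : SimpleGraph V) (m d r s : ℕ)
    (hd : ∀ v, (univ.filter (fun w => ¬ G.Adj v w)).card ≤ d)
    (B : Finset (Finset V)) (hB : IsPacking m B)
    (hr : Fintype.card V < 2 ^ r) (hrs : r ≤ s) (hrn : 2 * r < Fintype.card V)
    (hnum : 2 * ((m * Fintype.card V) * d) ≤ (s + 1 - r) * (Fintype.card V - 2 * r)) :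
    ∃ σ : Perm V, ∀ x, (B.filter (fun b => x ∈ b ∧
      ∃ y ∈ b, ∃ z ∈ b, y ≠ z ∧ ¬ G.Adj (σ y) (σ z))).card < s := by
  set n := Fintype.card V with hn
  by_contra hcon
  push Not at hcon
  let Q : V → Finset (V × V) := fun x => univ.filter (fun a =>
    ∃ b ∈ B, x ∈ b ∧ a.1 ∈ b ∧ a.2 ∈ b ∧ a.2 ≠ x ∧ a.1 ≠ a.2)
  have hQ : ∀ x, (Q x).card ≤ m * n := by
    intro x
    have : (Q x) ⊆ univ.biUnion (fun z : V => if z = x then ∅ else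
        (B.filter (fun b => x ∈ b ∧ z ∈ b)).biUnion (fun b => b.image (fun y => (y, z)))) := by
      intro a ha
      simp only [Q, mem_filter, mem_univ, true_and] at ha
      obtain ⟨b, hb, hx, h1, h2, h3, h4⟩ := ha
      simp only [mem_biUnion, mem_univ, true_and]
      refine ⟨a.2, ?_⟩
      rw [if_neg h3]
      simp only [mem_biUnion, mem_filter, mem_image]
      exact ⟨b, ⟨hb, hx, h2⟩, a.1, h1, rfl⟩
    refine (card_le_card this).trans (card_biUnion_le.trans ?_)
    have : ∀ z ∈ (univ : Finset V), (if z = x then ∅ else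
        (B.filter (fun b => x ∈ b ∧ z ∈ b)).biUnion (fun b => b.image (fun y => (y, z)))).card
        ≤ m := by
      intro z _
      split_ifs with h
      · simp
      · refine card_biUnion_le.trans ?_
        have hc : (B.filter (fun b => x ∈ b ∧ z ∈ b)).card ≤ 1 := by
          rw [card_le_one]
          intro b hb b' hb'
          simp only [mem_filter] at hb hb'
          exact hB.2 b hb.1 b' hb'.1 x z (Ne.symm h) hb.2.1 hb.2.2 hb'.2.1 hb'.2.2
        calc _ ≤ ∑ b ∈ (B.filter (fun b => x ∈ b ∧ z ∈ b)), m := by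
              apply sum_le_sum
              intro b hb
              exact card_image_le.trans (hB.1 b (mem_filter.1 hb).1).le
          _ = (B.filter (fun b => x ∈ b ∧ z ∈ b)).card * m := by simp
          _ ≤ 1 * m := Nat.mul_le_mul_right _ hc
          _ = m := one_mul m
    refine (sum_le_sum this).trans ?_
    simp [mul_comm, hn]
  -- valid r-subsets
  let 𝒮 : V → Finset (Finset (V × V)) := fun x => ((Q x).powersetCard r).filter (fun S =>
    (∀ a ∈ S, ∀ b ∈ S, a.2 = b.2 → a = b) ∧ (∀ a ∈ S, ∀ b ∈ S, a.1 ≠ b.2))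
  let E : V → Finset (Perm V) := fun x => univ.filter (fun σ => s ≤ (B.filter (fun b => x ∈ b ∧
      ∃ y ∈ b, ∃ z ∈ b, y ≠ z ∧ ¬ G.Adj (σ y) (σ z))).card)
  let good : Perm V → Finset (V × V) → Prop := fun σ S => ∀ a ∈ S, ¬ G.Adj (σ a.1) (σ a.2)
  have hmany : ∀ x, ∀ σ ∈ E x, s.choose r ≤ ((𝒮 x).filter (fun S => good σ S)).card := by
    intro x σ hσ
    simp only [E, mem_filter, mem_univ, true_and] at hσ
    set Bx := (B.filter (fun b => x ∈ b ∧
      ∃ y ∈ b, ∃ z ∈ b, y ≠ z ∧ ¬ G.Adj (σ y) (σ z))) with hBx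
    have hch : ∀ b ∈ Bx, ∃ a : V × V, a.1 ∈ b ∧ a.2 ∈ b ∧ a.2 ≠ x ∧ a.1 ≠ a.2 ∧
        ¬ G.Adj (σ a.1) (σ a.2) := by
      intro b hb
      simp only [hBx, mem_filter] at hb
      obtain ⟨hb, hx, y, hy, z, hz, hyz, hadj⟩ := hb
      by_cases hzx : z = x
      · refine ⟨(z, y), hz, hy, ?_, hyz.symm, fun h => hadj h.symm⟩
        rintro rfl
        exact hyz hzx.symm
      · exact ⟨(y, z), hy, hz, hzx, hyz, hadj⟩
    have hchN : Nonempty (V × V) := ⟨(x, x)⟩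
    choose! φ h1 h2 h3 h4 h5 using hch
    have hBB : ∀ b ∈ Bx, b ∈ B ∧ x ∈ b := by
      intro b hb; simp only [hBx, mem_filter] at hb; exact ⟨hb.1, hb.2.1⟩
    have hsnd : ∀ b ∈ Bx, ∀ b' ∈ Bx, (φ b).2 ∈ b' → b = b' := by
      intro b hb b' hb' h
      exact hB.2 b (hBB b hb).1 b' (hBB b' hb').1 x _ (Ne.symm (h3 b hb)) (hBB b hb).2 (h2 b hb)
        (hBB b' hb').2 h
    have hinj : Set.InjOn φ Bx := by
      intro b hb b' hb' h
      apply hsnd b hb b' hb'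
      rw [h]; exact h2 b' hb'
    calc s.choose r ≤ Bx.card.choose r := Nat.choose_le_choose r hσ
      _ = ((Bx.image φ).powersetCard r).card := by
          rw [card_powersetCard, card_image_of_injOn hinj]
      _ ≤ _ := by
          apply card_le_card
          intro S hS
          rw [mem_powersetCard] at hS
          have hSφ : ∀ a ∈ S, ∃ b ∈ Bx, φ b = a := fun a ha => mem_image.1 (hS.1 ha)
          simp only [𝒮, mem_filter, mem_powersetCard]
          refine ⟨⟨⟨?_, hS.2⟩, ?_, ?_⟩, ?_⟩
          · intro a ha
            obtain ⟨b, hb, rfl⟩ := hSφ a ha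
            simp only [Q, mem_filter, mem_univ, true_and]
            exact ⟨b, (hBB b hb).1, (hBB b hb).2, h1 b hb, h2 b hb, h3 b hb, h4 b hb⟩
          · intro a ha a' ha' h
            obtain ⟨b, hb, rfl⟩ := hSφ a ha
            obtain ⟨b', hb', rfl⟩ := hSφ a' ha'
            rw [hsnd b hb b' hb' (h ▸ h2 b' hb')]
          · intro a ha a' ha' h
            obtain ⟨b, hb, rfl⟩ := hSφ a ha
            obtain ⟨b', hb', rfl⟩ := hSφ a' ha'
            have := hsnd b' hb' b hb (h ▸ h1 b hb)
            subst this
            exact h4 _ hb h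
          · intro a ha
            obtain ⟨b, hb, rfl⟩ := hSφ a ha
            exact h5 b hb
  have hEx : ∀ x, s.choose r * (E x).card * (n - 2 * r) ^ r ≤
      (m * n).choose r * (d ^ r * Fintype.card (Perm V)) := by
    intro x
    calc s.choose r * (E x).card * (n - 2 * r) ^ r
        ≤ (∑ σ ∈ E x, ((𝒮 x).filter (fun S => good σ S)).card) * (n - 2 * r) ^ r := by
          apply Nat.mul_le_mul_right
          rw [mul_comm, ← smul_eq_mul, ← sum_const]
          exact sum_le_sum (hmany x)
      _ ≤ (∑ σ : Perm V, ((𝒮 x).filter (fun S => good σ S)).card) * (n - 2 * r) ^ r := by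
          apply Nat.mul_le_mul_right
          exact sum_le_sum_of_subset (subset_univ _)
      _ = (∑ S ∈ 𝒮 x, (univ.filter (fun σ => good σ S)).card) * (n - 2 * r) ^ r := by
          congr 1
          simp only [card_filter]
          exact sum_comm
      _ = ∑ S ∈ 𝒮 x, (n - 2 * r) ^ r * (univ.filter (fun σ => good σ S)).card := by
          rw [sum_mul]; simp only [mul_comm]
      _ ≤ ∑ S ∈ 𝒮 x, d ^ r * Fintype.card (Perm V) := by
          apply sum_le_sum
          intro S hS
          simp only [𝒮, mem_filter, mem_powersetCard] at hS
          have := pairs_count G d r hd S hS.1.2.le hS.2.1 hS.2.2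
          rw [hS.1.2] at this
          exact this
      _ = (𝒮 x).card * (d ^ r * Fintype.card (Perm V)) := by
          rw [sum_const, smul_eq_mul]
      _ ≤ _ := by
          apply Nat.mul_le_mul_right
          calc (𝒮 x).card ≤ ((Q x).powersetCard r).card := card_filter_le _ _
            _ = (Q x).card.choose r := card_powersetCard _ _
            _ ≤ _ := Nat.choose_le_choose r (hQ x)
  have hall : Fintype.card (Perm V) ≤ ∑ x, (E x).card := by
    refine le_trans ?_ card_biUnion_le
    rw [← card_univ]
    apply card_le_card
    intro σ _
    obtain ⟨x, hx⟩ := hcon σ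
    simp only [mem_biUnion, mem_univ, true_and]
    exact ⟨x, by simpa [E] using hx⟩
  set P := Fintype.card (Perm V) with hP
  have hPpos : 0 < P := Fintype.card_pos
  have htot : s.choose r * P * (n - 2 * r) ^ r ≤ n * ((m * n).choose r * (d ^ r * P)) := by
    calc s.choose r * P * (n - 2 * r) ^ r ≤ s.choose r * (∑ x, (E x).card) * (n - 2 * r) ^ r := by
          gcongr
      _ = ∑ x, s.choose r * (E x).card * (n - 2 * r) ^ r := by
          rw [mul_sum, sum_mul]
      _ ≤ ∑ x : V, (m * n).choose r * (d ^ r * P) := sum_le_sum (fun x _ => hEx x)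
      _ = _ := by rw [sum_const, smul_eq_mul, card_univ]
  have htot2 : s.choose r * (n - 2 * r) ^ r ≤ n * ((m * n).choose r * d ^ r) := by
    apply Nat.le_of_mul_le_mul_right _ hPpos
    calc _ = s.choose r * P * (n - 2 * r) ^ r := by ring
      _ ≤ _ := htot
      _ = _ := by ring
  have htot3 : s.descFactorial r * (n - 2 * r) ^ r ≤ n * ((m * n).descFactorial r * d ^ r) := by
    rw [Nat.descFactorial_eq_factorial_mul_choose, Nat.descFactorial_eq_factorial_mul_choose]
    calc _ = r.factorial * (s.choose r * (n - 2 * r) ^ r) := by ring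
      _ ≤ r.factorial * (n * ((m * n).choose r * d ^ r)) := Nat.mul_le_mul_left _ htot2
      _ = _ := by ring
  have h4 : ((s + 1 - r) * (n - 2 * r)) ^ r ≤ n * ((m * n) * d) ^ r := by
    rw [mul_pow, mul_pow]
    calc _ ≤ s.descFactorial r * (n - 2 * r) ^ r :=
          Nat.mul_le_mul_right _ (Nat.pow_sub_le_descFactorial s r)
      _ ≤ _ := htot3
      _ ≤ _ := Nat.mul_le_mul_left _ (Nat.mul_le_mul_right _ (Nat.descFactorial_le_pow _ _))
  have hpos : 0 < ((s + 1 - r) * (n - 2 * r)) ^ r := by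
    apply pow_pos
    apply Nat.mul_pos <;> omega
  have hpos2 : 0 < ((m * n) * d) ^ r := by
    rcases Nat.eq_zero_or_pos (((m * n) * d) ^ r) with h | h
    · rw [h] at h4; omega
    · exact h
  have h5 : 2 ^ r * ((m * n) * d) ^ r ≤ n * ((m * n) * d) ^ r := by
    rw [← mul_pow]
    exact (Nat.pow_le_pow_left hnum r).trans h4
  have := Nat.le_of_mul_le_mul_right h5 hpos2
  omega
end PartB

section PartAB
open Finset Equiv
open scoped Classical

lemma sq_le_two_pow_aux (r : ℕ) (hr : 4 ≤ r) : r ^ 2 ≤ 2 ^ r := by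
  induction r, hr using Nat.le_induction with
  | base => norm_num
  | succ r hr ih => rw [pow_succ 2 r]; nlinarith

lemma blocks_of_perm {V : Type} [Fintype V] (G : SimpleGraph V) (m s a : ℕ)
    (B : Finset (Finset V)) (hB : IsPacking m B) (σ : Perm V)
    (ha : ∀ v, (univ.filter (fun u => u ≠ v ∧ ∀ b ∈ B, ¬ (v ∈ b ∧ u ∈ b))).card ≤ a)
    (hs : ∀ x, (B.filter (fun b => x ∈ b ∧
      ∃ y ∈ b, ∃ z ∈ b, y ≠ z ∧ ¬ G.Adj (σ y) (σ z))).card ≤ s) :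
    ∃ R : Finset (Finset V), IsPacking m R ∧
      (∀ b ∈ R, ∀ x ∈ b, ∀ y ∈ b, x ≠ y → G.Adj x y) ∧
      ∀ v, (univ.filter (fun u => G.Adj v u ∧ ∀ b ∈ R, ¬ (v ∈ b ∧ u ∈ b))).card
        ≤ a + s * (m - 1) := by
  let R : Finset (Finset V) := (B.filter (fun b => ∀ y ∈ b, ∀ z ∈ b, y ≠ z → G.Adj (σ y) (σ z))).image
    (fun b => b.map σ.toEmbedding)
  have hR : ∀ c, c ∈ R ↔ ∃ b ∈ B, (∀ y ∈ b, ∀ z ∈ b, y ≠ z → G.Adj (σ y) (σ z)) ∧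
      b.map σ.toEmbedding = c := by
    intro c
    simp only [R, mem_image, mem_filter, and_assoc]
  refine ⟨R, ⟨?_, ?_⟩, ?_, ?_⟩
  · intro c hc
    obtain ⟨b, hb, _, rfl⟩ := (hR c).1 hc
    rw [card_map]; exact hB.1 b hb
  · intro c hc c' hc' x y hxy h1 h2 h3 h4
    obtain ⟨b, hb, _, rfl⟩ := (hR c).1 hc
    obtain ⟨b', hb', _, rfl⟩ := (hR c').1 hc'
    rw [mem_map_equiv] at h1 h2 h3 h4
    rw [hB.2 b hb b' hb' _ _ (fun h => hxy (σ.symm.injective h)) h1 h2 h3 h4]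
  · intro c hc x hx y hy hxy
    obtain ⟨b, hb, h, rfl⟩ := (hR c).1 hc
    rw [mem_map_equiv] at hx hy
    have := h _ hx _ hy (fun h => hxy (σ.symm.injective h))
    simpa using this
  · intro v
    set x := σ.symm v with hx
    set U := univ.filter (fun u => u ≠ x ∧ ∀ b ∈ B, ¬ (x ∈ b ∧ u ∈ b)) with hU
    set Bx := (B.filter (fun b => x ∈ b ∧
      ∃ y ∈ b, ∃ z ∈ b, y ≠ z ∧ ¬ G.Adj (σ y) (σ z))) with hBx
    have hsub : (univ.filter (fun u => G.Adj v u ∧ ∀ b ∈ R, ¬ (v ∈ b ∧ u ∈ b))) ⊆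
        (U ∪ Bx.biUnion (fun b => b.erase x)).map σ.toEmbedding := by
      intro u hu
      simp only [mem_filter, mem_univ, true_and] at hu
      rw [mem_map_equiv, mem_union]
      have hne : σ.symm u ≠ x := fun h => hu.1.ne (σ.symm.injective h).symm
      by_cases hc : σ.symm u ∈ U
      · exact Or.inl hc
      · right
        simp only [hU, mem_filter, mem_univ, true_and, not_and, not_forall, not_not] at hc
        obtain ⟨b, hb, hxb, hub⟩ := hc hne
        simp only [mem_biUnion, mem_erase]
        refine ⟨b, ?_, hne, hub⟩
        simp only [hBx, mem_filter]
        refine ⟨hb, hxb, ?_⟩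
        by_contra hcon
        push Not at hcon
        refine hu.2 (b.map σ.toEmbedding) ((hR _).2 ⟨b, hb, hcon, rfl⟩) ⟨?_, ?_⟩
        · rw [mem_map_equiv]; exact hxb
        · rw [mem_map_equiv]; exact hub
    refine (card_le_card hsub).trans ?_
    rw [card_map]
    refine (card_union_le _ _).trans (add_le_add (ha x) ?_)
    refine (card_biUnion_le_card_mul _ _ (m - 1) ?_).trans (Nat.mul_le_mul_right _ (hs x))
    intro b hb
    simp only [hBx, mem_filter] at hb
    rw [card_erase_of_mem hb.2.1, hB.1 b hb.1]

lemma blocks_numerics (k m n C K r d q a : ℕ) (hk : 3 ≤ k) (hm' : m + 1 = 2 * k)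
    (hK : K = 200 * k ^ 9 + C + 200) (hrK : r * K ≤ n) (hr200 : 200 * r ≤ n) (hrpos : 0 < r)
    (hdle : 9 * k ^ 10 * d ≤ n) (hqle : q * (n - 2 * r) ≤ 2 * ((m * n) * d))
    (hale : m ^ 10 * a ≤ n + C) : k ^ 8 * (a + (r + q) * (m - 1)) ≤ n := by
  -- numerics
  have hm5 : 5 ≤ m := by omega
  have hkm : k ≤ m := by omega
  have hma : 25 * (k ^ 8 * a) ≤ n + C := by
    refine le_trans ?_ hale
    have : 25 * k ^ 8 ≤ m ^ 10 := by
      calc 25 * k ^ 8 ≤ m ^ 2 * m ^ 8 := by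
            apply Nat.mul_le_mul
            · nlinarith
            · exact Nat.pow_le_pow_left hkm 8
        _ = m ^ 10 := by ring
    calc _ = 25 * k ^ 8 * a := by ring
      _ ≤ _ := Nat.mul_le_mul_right _ this
  have hqn : 99 * q ≤ 200 * (m * d) := by
    have hnpos : 0 < n := by omega
    have e1 : 99 * n ≤ 100 * (n - 2 * r) := by omega
    apply Nat.le_of_mul_le_mul_right _ hnpos
    calc 99 * q * n = q * (99 * n) := by ring
      _ ≤ q * (100 * (n - 2 * r)) := Nat.mul_le_mul_left _ e1
      _ = 100 * (q * (n - 2 * r)) := by ring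
      _ ≤ 100 * (2 * ((m * n) * d)) := Nat.mul_le_mul_left _ hqle
      _ = _ := by ring
  have hqk : 891 * (k ^ 8 * (q * (m - 1))) ≤ 800 * n := by
    calc 891 * (k ^ 8 * (q * (m - 1))) = 9 * k ^ 8 * (m - 1) * (99 * q) := by ring
      _ ≤ 9 * k ^ 8 * (m - 1) * (200 * (m * d)) := Nat.mul_le_mul_left _ hqn
      _ ≤ 9 * k ^ 8 * (2 * k) * (200 * (2 * k * d)) := by
          gcongr <;> omega
      _ = 800 * (9 * k ^ 10 * d) := by ring
      _ ≤ 800 * n := Nat.mul_le_mul_left _ hdle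
  have hrk : 100 * (k ^ 8 * (r * (m - 1))) + C ≤ n := by
    refine le_trans ?_ hrK
    have : k ^ 8 * (r * (m - 1)) ≤ 2 * k ^ 9 * r := by
      calc _ ≤ k ^ 8 * (r * (2 * k)) := by gcongr; omega
        _ = _ := by ring
    have hCr : C ≤ r * C := Nat.le_mul_of_pos_left C hrpos
    rw [hK]
    nlinarith
  have : k ^ 8 * (a + (r + q) * (m - 1)) =
      k ^ 8 * a + k ^ 8 * (r * (m - 1)) + k ^ 8 * (q * (m - 1)) := by ring
  rw [this]
  omega

lemma exists_blocks (k : ℕ) (hk : 3 ≤ k) : ∃ n₀ : ℕ, ∀ (V : Type) [Fintype V] (n : ℕ),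
    Fintype.card V = n → n₀ ≤ n → ∀ G : SimpleGraph V,
    (∀ v, 9 * k ^ 10 * (univ.filter (fun w => ¬ G.Adj v w)).card ≤ n) →
    ∃ R : Finset (Finset V), IsPacking (2 * k - 1) R ∧
      (∀ b ∈ R, ∀ x ∈ b, ∀ y ∈ b, x ≠ y → G.Adj x y) ∧
      ∀ v, k ^ 8 * (univ.filter (fun u => G.Adj v u ∧ ∀ b ∈ R, ¬ (v ∈ b ∧ u ∈ b))).card
        ≤ n := by
  obtain ⟨m, hm⟩ : ∃ x, x = 2 * k - 1 := ⟨_, rfl⟩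
  rw [← hm]
  have hm' : m + 1 = 2 * k := by omega
  obtain ⟨C, hC⟩ := exists_packing m (by omega) 10
  obtain ⟨K, hK⟩ : ∃ x, x = 200 * k ^ 9 + C + 200 := ⟨_, rfl⟩
  refine ⟨(2 * K + 4) ^ 2, fun V _ n hVn hn G hG => ?_⟩
  obtain ⟨B, hB, hBu⟩ := hC V
  obtain ⟨r, hr⟩ : ∃ x, x = Nat.sqrt n + 1 := ⟨_, rfl⟩
  have hsq : 2 * K + 4 ≤ Nat.sqrt n := by rw [Nat.le_sqrt']; exact hn
  have hsq2 : Nat.sqrt n * Nat.sqrt n ≤ n := Nat.sqrt_le n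
  have hrK : r * K ≤ n := by rw [hr]; nlinarith
  have h2r : n < 2 ^ r := by
    rw [hr]
    refine lt_of_lt_of_le (Nat.lt_succ_sqrt' n) (sq_le_two_pow_aux _ (by omega))
  have hr200 : 200 * r ≤ n := by
    refine le_trans ?_ hrK
    rw [mul_comm]
    exact Nat.mul_le_mul_left _ (by omega)
  have hrpos : 0 < r := by omega
  obtain ⟨d, hd⟩ : ∃ x, x = n / (9 * k ^ 10) := ⟨_, rfl⟩
  have hdle : 9 * k ^ 10 * d ≤ n := by rw [hd]; exact Nat.mul_div_le n _
  have hGd : ∀ v, (univ.filter (fun w => ¬ G.Adj v w)).card ≤ d := by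
    intro v
    rw [hd, Nat.le_div_iff_mul_le (by positivity), mul_comm]
    exact hG v
  obtain ⟨q, hq⟩ : ∃ x, x = (2 * ((m * n) * d)) / (n - 2 * r) := ⟨_, rfl⟩
  have hqle : q * (n - 2 * r) ≤ 2 * ((m * n) * d) := by
    rw [hq]; exact Nat.div_mul_le_self _ _
  have hqlt : 2 * ((m * n) * d) < (n - 2 * r) * (q + 1) := by
    rw [hq]; exact Nat.lt_mul_div_succ _ (by omega)
  obtain ⟨σ, hσ⟩ := exists_good_perm G m d r (r + q) hGd B hB (by rw [hVn]; exact h2r) (by omega)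
    (by simp only [hVn]; omega) (by
      simp only [hVn]
      rw [show r + q + 1 - r = q + 1 by omega, mul_comm (q+1)]
      exact hqlt.le)
  obtain ⟨a, ha⟩ : ∃ x, x = (n + C) / m ^ 10 := ⟨_, rfl⟩
  obtain ⟨R, h1, h2, h3⟩ := blocks_of_perm G m (r + q) a B hB σ (by
    intro v
    rw [ha, Nat.le_div_iff_mul_le (Nat.pow_pos (by omega)), mul_comm]
    rw [← hVn]; exact hBu v) (fun x => (hσ x).le)
  refine ⟨R, h1, h2, fun v => ?_⟩
  refine (Nat.mul_le_mul_left _ (h3 v)).trans ?_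
  have hale : m ^ 10 * a ≤ n + C := by rw [ha]; exact Nat.mul_div_le _ _
  exact blocks_numerics k m n C K r d q a hk hm' hK hrK hr200 hrpos hdle hqle hale
end PartAB

section PartC
open Finset
open scoped Classical

lemma clique_extend {V : Type} [Fintype V] (m k D : ℕ) (L : Finset (Finset V))
    (hL : IsPacking m L) (u v : V) (huv : u ≠ v) (hcov : ∀ b ∈ L, ¬ (u ∈ b ∧ v ∈ b))
    (hD : ∀ x, (x = u ∨ x = v ∨ ∃ b ∈ L, x ∈ b) →
      (univ.filter (fun w => ∀ b ∈ L, ¬ (x ∈ b ∧ w ∈ b))).card ≤ D)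
    (hnum : (k - 1) * D + k + k ^ 2 * m < Fintype.card V) :
    ∀ j, j + 2 ≤ k → ∃ W : Finset V, ∃ N : Finset (Finset V), u ∈ W ∧ v ∈ W ∧
      W.card = j + 2 ∧ N ⊆ L ∧ 2 * N.card ≤ (j + 2) * (j + 1) ∧
      (∀ x ∈ W, x = u ∨ x = v ∨ ∃ b ∈ L, x ∈ b) ∧
      (∀ x ∈ W, ∀ y ∈ W, x ≠ y → s(x, y) = s(u, v) ∨ ∃ b ∈ N, x ∈ b ∧ y ∈ b) ∧
      (∀ b ∈ N, (b ∩ W).card ≤ 2) := by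
  intro j
  induction j with
  | zero =>
    intro _
    refine ⟨{u, v}, ∅, by simp, by simp, card_pair huv, by simp, by simp, ?_, ?_, by simp⟩
    · intro x hx
      simp only [mem_insert, mem_singleton] at hx
      tauto
    · intro x hx y hy hxy
      left
      simp only [mem_insert, mem_singleton] at hx hy
      rw [Sym2.eq_iff]
      rcases hx with rfl | rfl <;> rcases hy with rfl | rfl <;> simp_all
  | succ j ih =>
    intro hj
    obtain ⟨W, N, huW, hvW, hWc, hNL, hNc, hW, hpair, hinter⟩ := ih (by omega)
    -- choose a new vertex
    set Forb := (W.biUnion (fun x => univ.filter (fun w => ∀ b ∈ L, ¬ (x ∈ b ∧ w ∈ b)))) ∪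
      (W ∪ N.biUnion id) with hForb
    have hForbc : Forb.card < Fintype.card V := by
      refine lt_of_le_of_lt ?_ hnum
      have e1 : (W.biUnion (fun x => univ.filter (fun w => ∀ b ∈ L, ¬ (x ∈ b ∧ w ∈ b)))).card
          ≤ (k - 1) * D := by
        refine (card_biUnion_le_card_mul _ _ D (fun x hx => hD x (hW x hx))).trans ?_
        apply Nat.mul_le_mul_right
        omega
      have e2 : (N.biUnion id).card ≤ k ^ 2 * m := by
        refine (card_biUnion_le_card_mul _ _ m (fun b hb => (hL.1 b (hNL hb)).le)).trans ?_
        apply Nat.mul_le_mul_right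
        nlinarith
      calc Forb.card ≤ _ := card_union_le _ _
        _ ≤ (k - 1) * D + (k + k ^ 2 * m) := by
            refine add_le_add e1 ((card_union_le _ _).trans (add_le_add (by omega) e2))
        _ = _ := by ring
    obtain ⟨w, hw⟩ : ∃ w, w ∉ Forb := by
      by_contra hcon
      push Not at hcon
      have : Forb = univ := eq_univ_of_forall hcon
      rw [this, card_univ] at hForbc
      omega
    simp only [hForb, mem_union, mem_biUnion, mem_filter, mem_univ, true_and, not_or, not_exists,
      not_and, not_forall, not_not, id] at hw
    obtain ⟨hw1, hwW, hwN⟩ := hw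
    have hw1' : ∀ x ∈ W, ∃ b ∈ L, x ∈ b ∧ w ∈ b := by
      intro x hx
      obtain ⟨b, hb, h1, h2⟩ := hw1 x hx
      exact ⟨b, hb, h1, h2⟩
    choose! β hβL hβx hβw using hw1'
    have hβW : ∀ x ∈ W, ∀ y ∈ W, y ∈ β x → y = x := by
      intro x hx y hy hyb
      by_contra hne
      rcases hpair y hy x hx hne with h | ⟨b, hb, h1, h2⟩
      · apply hcov (β x) (hβL x hx)
        rw [Sym2.eq_iff] at h
        rcases h with ⟨rfl, rfl⟩ | ⟨rfl, rfl⟩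
        · exact ⟨hyb, hβx _ hx⟩
        · exact ⟨hβx _ hx, hyb⟩
      · have := hL.2 b (hNL hb) (β x) (hβL x hx) y x hne h1 h2 hyb (hβx x hx)
        apply hwN b hb
        rw [this]; exact hβw x hx
    refine ⟨insert w W, N ∪ W.image β, mem_insert_of_mem huW, mem_insert_of_mem hvW, ?_, ?_, ?_,
      ?_, ?_, ?_⟩
    · rw [card_insert_of_notMem hwW, hWc]
    · intro b hb
      rcases mem_union.1 hb with hb | hb
      · exact hNL hb
      · obtain ⟨x, hx, rfl⟩ := mem_image.1 hb
        exact hβL x hx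
    · have : (N ∪ W.image β).card ≤ N.card + (j + 2) :=
        (card_union_le _ _).trans (add_le_add le_rfl (card_image_le.trans hWc.le))
      nlinarith
    · intro x hx
      rcases mem_insert.1 hx with rfl | hx
      · exact Or.inr (Or.inr ⟨β u, hβL u huW, hβw u huW⟩)
      · exact hW x hx
    · intro x hx y hy hxy
      rcases mem_insert.1 hx with hxw | hxW <;> rcases mem_insert.1 hy with hyw | hyW
      · exact absurd (hxw.trans hyw.symm) hxy
      · subst hxw
        exact Or.inr ⟨β y, mem_union_right _ (mem_image_of_mem _ hyW), hβw y hyW, hβx y hyW⟩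
      · subst hyw
        exact Or.inr ⟨β x, mem_union_right _ (mem_image_of_mem _ hxW), hβx x hxW, hβw x hxW⟩
      · rcases hpair x hxW y hyW hxy with h | ⟨b, hb, h⟩
        · exact Or.inl h
        · exact Or.inr ⟨b, mem_union_left _ hb, h⟩
    · intro b hb
      rcases mem_union.1 hb with hb | hb
      · rw [inter_insert_of_notMem (hwN b hb)]
        exact hinter b hb
      · obtain ⟨x, hx, rfl⟩ := mem_image.1 hb
        refine (card_le_card (t := {x, w}) ?_).trans card_le_two
        intro y hy
        rw [mem_inter, mem_insert] at hy
        rw [mem_insert, mem_singleton]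
        rcases hy with ⟨h1, rfl | h2⟩
        · exact Or.inr rfl
        · exact Or.inl (hβW x hx y h2 h1)

lemma pair_eq_of_card_le_two {V : Type} {S : Finset V} (hS : S.card ≤ 2) {x y x' y' : V}
    (hxy : x ≠ y) (hxy' : x' ≠ y') (hx : x ∈ S) (hy : y ∈ S) (hx' : x' ∈ S) (hy' : y' ∈ S) :
    s(x, y) = s(x', y') := by
  have h : ({x, y} : Finset V) = S := by
    apply eq_of_subset_of_card_le
    · intro z hz; simp only [mem_insert, mem_singleton] at hz; rcases hz with rfl | rfl <;> assumption
    · rw [card_pair hxy]; exact hS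
  rw [← h] at hx' hy'
  simp only [mem_insert, mem_singleton] at hx' hy'
  rw [Sym2.eq_iff]
  rcases hx' with rfl | rfl <;> rcases hy' with rfl | rfl <;> simp_all

lemma greedy {V : Type} [Fintype V] (G : SimpleGraph V) (m k d h τ n : ℕ) (hn : Fintype.card V = n)
    (hk : 2 ≤ k)
    (R : Finset (Finset V)) (hR : IsPacking m R)
    (hd : ∀ v, (univ.filter (fun w => ¬ G.Adj v w)).card ≤ d)
    (hh : ∀ v, (univ.filter (fun u => G.Adj v u ∧ ∀ b ∈ R, ¬ (v ∈ b ∧ u ∈ b))).card ≤ h)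
    (HE : Finset (Sym2 V))
    (hHE : ∀ u v, s(u, v) ∈ HE → u ≠ v ∧ ∀ b ∈ R, ¬ (u ∈ b ∧ v ∈ b))
    (hHEd : ∀ w, (HE.filter (fun e => w ∈ e)).card ≤ h)
    (hHEc : 2 * HE.card ≤ n * h)
    (hτ : ∀ o, 4 * (o * τ) ≤ m * (k * (k - 1)) * (n * h) →
      (k - 1) * (d + h + (τ + k ^ 2 + k ^ 2 * h) * m + o * m) + k + k ^ 2 * m < n) :
    ∀ E ⊆ HE, ∃ K : Sym2 V → Finset V, ∃ U : Finset (Finset V), U ⊆ R ∧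
      (∀ e ∈ E, (K e).card = k ∧ ∀ v ∈ e, v ∈ K e) ∧
      (∀ e ∈ E, ∀ x ∈ K e, ∀ y ∈ K e, x ≠ y → s(x, y) = e ∨ ∃ b ∈ U, x ∈ b ∧ y ∈ b) ∧
      (∀ b ∈ U, ∀ e ∈ E, ∀ e' ∈ E, ∀ x y x' y', x ≠ y → x' ≠ y' → x ∈ b → y ∈ b → x' ∈ b → y' ∈ b →
        x ∈ K e → y ∈ K e → x' ∈ K e' → y' ∈ K e' → e = e' ∧ s(x, y) = s(x', y')) ∧
      (∀ w, (U.filter (fun b => w ∈ b)).card ≤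
        τ + k ^ 2 + k ^ 2 * (E.filter (fun e => w ∈ e)).card) ∧
      2 * U.card ≤ k * (k - 1) * E.card := by
  intro E
  induction E using Finset.induction_on with
  | empty =>
    intro _
    exact ⟨fun _ => ∅, ∅, by simp, by simp, by simp, by simp, by simp, by simp⟩
  | insert e E heE ih =>
    intro hsub
    have hEHE : E ⊆ HE := (subset_insert e E).trans hsub
    obtain ⟨K, U, hUR, hK1, hK2, hK3, hκ, hUc⟩ := ih hEHE
    have heHE : e ∈ HE := hsub (mem_insert_self _ _)
    induction e using Sym2.ind with
    | _ u v =>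
    obtain ⟨huv, hcov⟩ := hHE u v heHE
    -- overloaded vertices
    set O := univ.filter (fun z => τ ≤ (U.filter (fun b => z ∈ b)).card) with hO
    have hOc : 4 * (O.card * τ) ≤ m * (k * (k - 1)) * (n * h) := by
      have e1 : O.card * τ ≤ m * U.card := by
        calc O.card * τ = ∑ z ∈ O, τ := by rw [sum_const, smul_eq_mul]
          _ ≤ ∑ z ∈ O, (U.filter (fun b => z ∈ b)).card := by
              apply sum_le_sum
              intro z hz
              simpa [hO] using hz
          _ ≤ ∑ z, (U.filter (fun b => z ∈ b)).card := sum_le_sum_of_subset (subset_univ _)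
          _ = ∑ b ∈ U, (univ.filter (fun z => z ∈ b)).card := by
              simp only [card_filter]
              exact sum_comm
          _ = ∑ b ∈ U, m := by
              apply sum_congr rfl
              intro b hb
              rw [← hR.1 b (hUR hb)]
              congr 1
              ext z; simp
          _ = m * U.card := by rw [sum_const, smul_eq_mul, mul_comm]
      have e2 : 2 * E.card ≤ n * h := (Nat.mul_le_mul_left 2 (card_le_card hEHE)).trans hHEc
      calc 4 * (O.card * τ) ≤ 4 * (m * U.card) := Nat.mul_le_mul_left _ e1
        _ = 2 * m * (2 * U.card) := by ring
        _ ≤ 2 * m * (k * (k - 1) * E.card) := Nat.mul_le_mul_left _ hUc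
        _ = m * (k * (k - 1)) * (2 * E.card) := by ring
        _ ≤ _ := Nat.mul_le_mul_left _ e2
    set L := R.filter (fun b => b ∉ U ∧ ∀ z ∈ b, z ∈ O → z = u ∨ z = v) with hLdef
    have hLR : L ⊆ R := filter_subset _ _
    have hLU : ∀ b ∈ L, b ∉ U := fun b hb => (mem_filter.1 hb).2.1
    have hLO : ∀ b ∈ L, ∀ z ∈ b, z ∈ O → z = u ∨ z = v := fun b hb => (mem_filter.1 hb).2.2
    have hLp : IsPacking m L := ⟨fun b hb => hR.1 b (hLR hb),
      fun b hb b' hb' => hR.2 b (hLR hb) b' (hLR hb')⟩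
    set D := d + h + (τ + k ^ 2 + k ^ 2 * h) * m + O.card * m with hDdef
    have hD : ∀ x, (x = u ∨ x = v ∨ ∃ b ∈ L, x ∈ b) →
      (univ.filter (fun w => ∀ b ∈ L, ¬ (x ∈ b ∧ w ∈ b))).card ≤ D := by
      intro x hx
      have hxO : x ∈ O → x = u ∨ x = v := by
        intro hxO
        rcases hx with h | h | ⟨b, hb, hxb⟩
        · exact Or.inl h
        · exact Or.inr h
        · exact hLO b hb x hxb hxO
      set A1 := univ.filter (fun w => ¬ G.Adj x w) with hA1
      set A2 := univ.filter (fun w => G.Adj x w ∧ ∀ b ∈ R, ¬ (x ∈ b ∧ w ∈ b)) with hA2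
      set A3 := (U.filter (fun b => x ∈ b)).biUnion id with hA3
      set A4 := O.biUnion (fun z => if z = x then ∅ else
        (R.filter (fun b => x ∈ b ∧ z ∈ b)).biUnion id) with hA4
      have hsubA : (univ.filter (fun w => ∀ b ∈ L, ¬ (x ∈ b ∧ w ∈ b))) ⊆
          ((A1 ∪ A2) ∪ A3) ∪ A4 := by
        intro w hw
        simp only [mem_filter, mem_univ, true_and] at hw
        by_contra hcon
        simp only [mem_union, not_or] at hcon
        obtain ⟨⟨⟨h1, h2⟩, h3⟩, h4⟩ := hcon
        simp only [hA1, mem_filter, mem_univ, true_and, not_not] at h1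
        simp only [hA2, mem_filter, mem_univ, true_and, not_and, not_forall, not_not] at h2
        obtain ⟨b, hb, hxb, hwb⟩ := h2 h1
        apply hw b _ ⟨hxb, hwb⟩
        refine mem_filter.2 ⟨hb, ?_, ?_⟩
        · intro hbU
          apply h3
          simp only [hA3, mem_biUnion, mem_filter, id]
          exact ⟨b, ⟨hbU, hxb⟩, hwb⟩
        · intro z hzb hzO
          by_contra hz
          apply h4
          simp only [hA4, mem_biUnion]
          refine ⟨z, hzO, ?_⟩
          have hzx : z ≠ x := by
            rintro rfl
            exact hz (hxO hzO)
          rw [if_neg hzx]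
          simp only [mem_biUnion, mem_filter, id]
          exact ⟨b, ⟨hb, hxb, hzb⟩, hwb⟩
      have c3 : A3.card ≤ (τ + k ^ 2 + k ^ 2 * h) * m := by
        refine (card_biUnion_le_card_mul _ _ m ?_).trans (Nat.mul_le_mul_right _ ?_)
        · intro b hb
          exact (hR.1 b (hUR (mem_filter.1 hb).1)).le
        · refine (hκ x).trans ?_
          gcongr
          exact (card_le_card (filter_subset_filter _ hEHE)).trans (hHEd x)
      have c4 : A4.card ≤ O.card * m := by
        refine card_biUnion_le_card_mul _ _ m ?_
        intro z _
        split_ifs with hzx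
        · simp
        · have hc : (R.filter (fun b => x ∈ b ∧ z ∈ b)).card ≤ 1 := by
            rw [card_le_one]
            intro b hb b' hb'
            simp only [mem_filter] at hb hb'
            exact hR.2 b hb.1 b' hb'.1 x z (Ne.symm hzx) hb.2.1 hb.2.2 hb'.2.1 hb'.2.2
          calc _ ≤ (R.filter (fun b => x ∈ b ∧ z ∈ b)).card * m :=
                card_biUnion_le_card_mul _ _ m (fun b hb => (hR.1 b (mem_filter.1 hb).1).le)
            _ ≤ 1 * m := Nat.mul_le_mul_right _ hc
            _ = m := one_mul m
      calc _ ≤ _ := card_le_card hsubA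
        _ ≤ ((A1 ∪ A2) ∪ A3).card + A4.card := card_union_le _ _
        _ ≤ ((A1 ∪ A2).card + A3.card) + A4.card := by gcongr; exact card_union_le _ _
        _ ≤ ((A1.card + A2.card) + A3.card) + A4.card := by gcongr; exact card_union_le _ _
        _ ≤ D := by
          rw [hDdef]
          exact add_le_add (add_le_add (add_le_add (hd x) (hh x)) c3) c4
    obtain ⟨W, N, huW, hvW, hWc, hNL, hNc, hW, hpair, hinter⟩ :=
      clique_extend m k D L hLp u v huv (fun b hb => hcov b (hLR hb)) hD
        (by rw [hn]; exact hτ O.card hOc) (k - 2) (by omega)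
    obtain ⟨k', rfl⟩ : ∃ k', k = k' + 2 := ⟨k - 2, by omega⟩
    have hNc' : 2 * N.card ≤ (k' + 2) * (k' + 1) := hNc
    have hKold : ∀ e ∈ E, Function.update K s(u, v) W e = K e := by
      intro e he
      apply Function.update_of_ne
      rintro rfl
      exact heE he
    have hKnew : Function.update K s(u, v) W s(u, v) = W := Function.update_self _ _ _
    have hNU : ∀ b ∈ N, b ∉ U := fun b hb => hLU b (hNL hb)
    -- a pair of an old clique in a block forces the block to be in `U`
    have hold : ∀ e ∈ E, ∀ b ∈ R, ∀ x y, x ≠ y → x ∈ b → y ∈ b → x ∈ K e → y ∈ K e → b ∈ U := by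
      intro e he b hb x y hxy hxb hyb hx hy
      rcases hK2 e he x hx y hy hxy with h | ⟨b', hb', h1, h2⟩
      · exact absurd ⟨hxb, hyb⟩ ((hHE x y (h ▸ hEHE he)).2 b hb)
      · rw [hR.2 b hb b' (hUR hb') x y hxy hxb hyb h1 h2]; exact hb'
    have hnew : ∀ b ∈ R, ∀ x y, x ≠ y → x ∈ b → y ∈ b → x ∈ W → y ∈ W → b ∈ N := by
      intro b hb x y hxy hxb hyb hx hy
      rcases hpair x hx y hy hxy with h | ⟨b', hb', h1, h2⟩
      · exact absurd ⟨hxb, hyb⟩ ((hHE x y (h ▸ heHE)).2 b hb)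
      · rw [hR.2 b hb b' (hLR (hNL hb')) x y hxy hxb hyb h1 h2]; exact hb'
    have hUN : U ∪ N ⊆ R := union_subset hUR (hNL.trans hLR)
    refine ⟨Function.update K s(u, v) W, U ∪ N, hUN, ?_, ?_, ?_, ?_, ?_⟩
    · intro e he
      rcases mem_insert.1 he with rfl | he
      · rw [hKnew]
        refine ⟨by rw [hWc]; omega, ?_⟩
        intro x hx
        rcases Sym2.mem_iff.1 hx with rfl | rfl <;> assumption
      · rw [hKold e he]; exact hK1 e he
    · intro e he
      rcases mem_insert.1 he with rfl | he
      · rw [hKnew]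
        intro x hx y hy hxy
        rcases hpair x hx y hy hxy with h | ⟨b, hb, h⟩
        · exact Or.inl h
        · exact Or.inr ⟨b, mem_union_right _ hb, h⟩
      · rw [hKold e he]
        intro x hx y hy hxy
        rcases hK2 e he x hx y hy hxy with h | ⟨b, hb, h⟩
        · exact Or.inl h
        · exact Or.inr ⟨b, mem_union_left _ hb, h⟩
    · intro b hb e he e' he' x y x' y' hxy hxy' hxb hyb hxb' hyb' hx hy hx' hy'
      have hbR := hUN hb
      rcases mem_insert.1 he with rfl | he <;> rcases mem_insert.1 he' with rfl | he'
      · rw [hKnew] at hx hy hx' hy'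
        have hbN := hnew b hbR x y hxy hxb hyb hx hy
        exact ⟨rfl, pair_eq_of_card_le_two (hinter b hbN) hxy hxy' (mem_inter.2 ⟨hxb, hx⟩)
          (mem_inter.2 ⟨hyb, hy⟩) (mem_inter.2 ⟨hxb', hx'⟩) (mem_inter.2 ⟨hyb', hy'⟩)⟩
      · rw [hKnew] at hx hy
        rw [hKold e' he'] at hx' hy'
        exact absurd (hold e' he' b hbR x' y' hxy' hxb' hyb' hx' hy')
          (hNU b (hnew b hbR x y hxy hxb hyb hx hy))
      · rw [hKnew] at hx' hy'
        rw [hKold e he] at hx hy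
        exact absurd (hold e he b hbR x y hxy hxb hyb hx hy)
          (hNU b (hnew b hbR x' y' hxy' hxb' hyb' hx' hy'))
      · rw [hKold e he] at hx hy
        rw [hKold e' he'] at hx' hy'
        exact hK3 b (hold e he b hbR x y hxy hxb hyb hx hy) e he e' he' x y x' y' hxy hxy'
          hxb hyb hxb' hyb' hx hy hx' hy'
    · intro w
      have hNk : N.card ≤ (k' + 2) ^ 2 := by nlinarith
      have hfu : ((U ∪ N).filter (fun b => w ∈ b)).card ≤
          (U.filter (fun b => w ∈ b)).card + (N.filter (fun b => w ∈ b)).card := by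
        rw [filter_union]; exact card_union_le _ _
      have hNw : (N.filter (fun b => w ∈ b)).card ≤ (k' + 2) ^ 2 :=
        (card_filter_le _ _).trans hNk
      by_cases hwe : w ∈ s(u, v)
      · rw [filter_insert, if_pos hwe, card_insert_of_notMem (by simp [heE])]
        have := hκ w
        nlinarith
      · rw [filter_insert, if_neg hwe]
        by_cases hex : ∃ b ∈ N, w ∈ b
        · obtain ⟨b, hb, hwb⟩ := hex
          have hwO : w ∉ O := by
            intro hwO
            apply hwe
            rw [Sym2.mem_iff]
            exact hLO b (hNL hb) w hwb hwO
          simp only [hO, mem_filter, mem_univ, true_and, not_le] at hwO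
          omega
        · push Not at hex
          have : (N.filter (fun b => w ∈ b)) = ∅ := filter_eq_empty_iff.2 (fun b hb => hex b hb)
          rw [this, card_empty] at hfu
          have := hκ w
          omega
    · rw [card_insert_of_notMem heE]
      have := card_union_le U N
      have e1 : k' + 2 - 1 = k' + 1 := by omega
      rw [e1] at hUc ⊢
      nlinarith
end PartC

section PartD1

lemma greedy_numerics (k : ℕ) (hk : 3 ≤ k) : ∃ n₀ : ℕ, ∀ n ≥ n₀, ∀ d h : ℕ,
    9 * k ^ 10 * d ≤ n → k ^ 8 * h ≤ n → ∃ τ : ℕ, ∀ o,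
      4 * (o * τ) ≤ (2 * k - 1) * (k * (k - 1)) * (n * h) →
      (k - 1) * (d + h + (τ + k ^ 2 + k ^ 2 * h) * (2 * k - 1) + o * (2 * k - 1)) + k
        + k ^ 2 * (2 * k - 1) < n := by
  obtain ⟨j, rfl⟩ : ∃ j, k = j + 3 := ⟨k - 3, by omega⟩
  have e1 : 2 * (j + 3) - 1 = 2 * j + 5 := by omega
  have e2 : j + 3 - 1 = j + 2 := by omega
  rw [e1, e2]
  obtain ⟨k, hkj⟩ : ∃ k, k = j + 3 := ⟨_, rfl⟩
  rw [← hkj]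
  obtain ⟨m, hm⟩ : ∃ m, m = 2 * j + 5 := ⟨_, rfl⟩
  rw [← hm]
  obtain ⟨q, hq⟩ : ∃ q, q = j + 2 := ⟨_, rfl⟩
  rw [← hq]
  have hk0 : 0 < k := by omega
  refine ⟨q * (m * (36 * k ^ 10 + 36 * k ^ 12)) + 36 * k ^ 10 * (k + k ^ 2 * m) + 1, ?_⟩
  intro n hn d h hd hh
  have hn0 : 0 < n := by omega
  refine ⟨n / (4 * k ^ 2) + 1, ?_⟩
  obtain ⟨τ, hτ⟩ : ∃ τ, τ = n / (4 * k ^ 2) + 1 := ⟨_, rfl⟩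
  rw [← hτ]
  have hτ1 : n ≤ 4 * k ^ 2 * τ := by
    rw [hτ]
    exact (Nat.lt_mul_div_succ n (by positivity)).le
  have hτ2 : 4 * k ^ 2 * τ ≤ n + 4 * k ^ 2 := by
    rw [hτ, mul_add, mul_one]
    exact Nat.add_le_add_right (Nat.mul_div_le _ _) _
  intro o ho
  have ho1 : o ≤ m * k ^ 3 * q * h := by
    have : n * o ≤ n * (m * k ^ 3 * q * h) := by
      calc n * o ≤ 4 * k ^ 2 * τ * o := Nat.mul_le_mul_right _ hτ1
        _ = k ^ 2 * (4 * (o * τ)) := by ring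
        _ ≤ k ^ 2 * (m * (k * q) * (n * h)) := Nat.mul_le_mul_left _ ho
        _ = _ := by ring
    exact Nat.le_of_mul_le_mul_left this hn0
  have ho2 : k ^ 5 * o ≤ m * q * n := by
    calc k ^ 5 * o ≤ k ^ 5 * (m * k ^ 3 * q * h) := Nat.mul_le_mul_left _ ho1
      _ = m * q * (k ^ 8 * h) := by ring
      _ ≤ _ := Nat.mul_le_mul_left _ hh
  have hP : q * (4 + 36 * k ^ 2 + m * (9 * k ^ 8 + 36 * k ^ 4) + m ^ 2 * 36 * k ^ 5 * q) + 1
      ≤ 36 * k ^ 10 := by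
    rw [hq, hm, hkj]
    zify
    rw [← sub_nonneg]
    ring_nf
    positivity
  have hmain : 36 * k ^ 10 * (q * (d + h + (τ + k ^ 2 + k ^ 2 * h) * m + o * m) + k + k ^ 2 * m)
      ≤ q * (4 + 36 * k ^ 2 + m * (9 * k ^ 8 + 36 * k ^ 4) + m ^ 2 * 36 * k ^ 5 * q) * n
        + (q * (m * (36 * k ^ 10 + 36 * k ^ 12)) + 36 * k ^ 10 * (k + k ^ 2 * m)) := by
    calc _ = q * (4 * (9 * k ^ 10 * d) + 36 * k ^ 2 * (k ^ 8 * h) + m * (9 * k ^ 8 * (4 * k ^ 2 * τ)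
            + 36 * k ^ 12 + 36 * k ^ 4 * (k ^ 8 * h)) + m * (36 * k ^ 5 * (k ^ 5 * o)))
            + 36 * k ^ 10 * (k + k ^ 2 * m) := by ring
      _ ≤ q * (4 * n + 36 * k ^ 2 * n + m * (9 * k ^ 8 * (n + 4 * k ^ 2)
            + 36 * k ^ 12 + 36 * k ^ 4 * n) + m * (36 * k ^ 5 * (m * q * n)))
            + 36 * k ^ 10 * (k + k ^ 2 * m) := by gcongr
      _ = _ := by ring
  have h3 := Nat.mul_le_mul_right n hP
  rw [add_mul, one_mul] at h3
  have h4 : 36 * k ^ 10 * (q * (d + h + (τ + k ^ 2 + k ^ 2 * h) * m + o * m) + k + k ^ 2 * m)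
      < 36 * k ^ 10 * n := by omega
  exact Nat.lt_of_mul_lt_mul_left h4

end PartD1

section PartD2
open Finset
open scoped Classical

/-- edges of `G` not covered by a block of `R` -/
noncomputable def uncov {V : Type} [Fintype V] (G : SimpleGraph V) (R : Finset (Finset V)) :
    Finset (Sym2 V) :=
  univ.filter (fun e => e ∈ G.edgeSet ∧ ∀ b ∈ R, ¬ ∀ x ∈ e, x ∈ b)

lemma mem_uncov {V : Type} [Fintype V] (G : SimpleGraph V) (R : Finset (Finset V)) (u v : V) :
    s(u, v) ∈ uncov G R ↔ G.Adj u v ∧ ∀ b ∈ R, ¬ (u ∈ b ∧ v ∈ b) := by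
  simp only [uncov, mem_filter, mem_univ, true_and, Sym2.ball, SimpleGraph.mem_edgeSet]

lemma uncov_deg {V : Type} [Fintype V] (G : SimpleGraph V) (R : Finset (Finset V)) (h : ℕ)
    (hh : ∀ v, (univ.filter (fun u => G.Adj v u ∧ ∀ b ∈ R, ¬ (v ∈ b ∧ u ∈ b))).card ≤ h) (w : V) :
    ((uncov G R).filter (fun e => w ∈ e)).card ≤ h := by
  refine le_trans ?_ (hh w)
  refine (card_le_card (t := (univ.filter
    (fun u => G.Adj w u ∧ ∀ b ∈ R, ¬ (w ∈ b ∧ u ∈ b))).image (fun u => s(w, u))) ?_).trans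
    card_image_le
  intro e he
  obtain ⟨he, hw⟩ := mem_filter.1 he
  obtain ⟨u, rfl⟩ := Sym2.mem_iff_exists.1 hw
  rw [mem_uncov] at he
  exact mem_image.2 ⟨u, by simpa using he, rfl⟩

lemma uncov_card {V : Type} [Fintype V] (G : SimpleGraph V) (R : Finset (Finset V)) (h n : ℕ)
    (hn : Fintype.card V = n)
    (hh : ∀ v, (univ.filter (fun u => G.Adj v u ∧ ∀ b ∈ R, ¬ (v ∈ b ∧ u ∈ b))).card ≤ h) :
    2 * (uncov G R).card ≤ n * h := by
  have h1 : ∑ w : V, ((uncov G R).filter (fun e => w ∈ e)).card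
      = ∑ e ∈ uncov G R, (univ.filter (fun w : V => w ∈ e)).card :=
    sum_card_bipartiteAbove_eq_sum_card_bipartiteBelow (fun (w : V) (e : Sym2 V) => w ∈ e)
  have h2 : ∑ w : V, ((uncov G R).filter (fun e => w ∈ e)).card ≤ n * h := by
    refine (sum_le_card_nsmul univ _ h (fun w _ => uncov_deg G R h hh w)).trans ?_
    rw [card_univ, hn, smul_eq_mul]
  have h3 : ∑ e ∈ uncov G R, 2 ≤ ∑ e ∈ uncov G R, (univ.filter (fun w : V => w ∈ e)).card := by
    apply sum_le_sum
    intro e he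
    induction e using Sym2.ind with
    | _ u v =>
    have huv := ((mem_uncov G R u v).1 he).1.ne
    rw [← card_pair huv]
    apply card_le_card
    intro x hx
    simpa using hx
  rw [sum_const, smul_eq_mul] at h3
  omega

/-- a labelling of a finset with prescribed first two elements -/
lemma exists_label {V : Type} (m : ℕ) (hm : 2 ≤ m) (b : Finset V) (hb : b.card = m)
    (x y : b) (hxy : x ≠ y) : ∃ f : b ≃ Fin m, f x = ⟨0, by omega⟩ ∧ f y = ⟨1, by omega⟩ := by
  let f₀ : b ≃ Fin m := b.equivFinOfCardEq hb
  let f₁ := f₀.trans (Equiv.swap (f₀ x) ⟨0, by omega⟩)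
  have h1 : f₁ x = ⟨0, by omega⟩ := by simp [f₁]
  have h2 : f₁ y ≠ ⟨0, by omega⟩ := by
    rw [← h1]; exact fun h => hxy (f₁.injective h).symm
  refine ⟨f₁.trans (Equiv.swap (f₁ y) ⟨1, by omega⟩), ?_, ?_⟩
  · rw [Equiv.trans_apply, h1]
    exact Equiv.swap_apply_of_ne_of_ne h2.symm (by simp)
  · simp

/-- the subgraph on `b` whose edges are the pairs satisfying `P` -/
def pieceOf {V : Type} (G : SimpleGraph V) (b : Finset V) (P : Sym2 V → Prop) : G.Subgraph where
  verts := b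
  Adj x y := x ∈ b ∧ y ∈ b ∧ G.Adj x y ∧ P s(x, y)
  adj_sub h := h.2.2.1
  edge_vert h := h.1
  symm := ⟨fun _ _ h => ⟨h.2.1, h.1, h.2.2.1.symm, Sym2.eq_swap ▸ h.2.2.2⟩⟩

lemma pieceOf_top {V : Type} (G : SimpleGraph V) (b : Finset V) (P : Sym2 V → Prop) (m : ℕ)
    (hb : b.card = m) (hG : ∀ x ∈ b, ∀ y ∈ b, x ≠ y → G.Adj x y ∧ P s(x, y)) :
    (pieceOf G b P).IsCopy (⊤ : SimpleGraph (Fin m)) := by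
  refine ⟨⟨(b.equivFinOfCardEq hb : b ≃ Fin m), ?_⟩⟩
  rintro ⟨x, hx⟩ ⟨y, hy⟩
  have hx' : x ∈ b := hx
  have hy' : y ∈ b := hy
  rw [SimpleGraph.top_adj, SimpleGraph.Subgraph.coe_adj]
  constructor
  · intro h
    have hne : x ≠ y := by rintro rfl; exact h rfl
    exact ⟨hx', hy', hG x hx' y hy' hne⟩
  · intro h hf
    have := (b.equivFinOfCardEq hb).injective hf
    exact h.2.2.1.ne (congrArg Subtype.val this)

lemma pieceOf_minus {V : Type} (G : SimpleGraph V) (b : Finset V) (P : Sym2 V → Prop) (m : ℕ)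
    (hm : 2 ≤ m) (hb : b.card = m) (u v : V) (hu : u ∈ b) (hv : v ∈ b) (huv : u ≠ v)
    (hG : ∀ x ∈ b, ∀ y ∈ b, x ≠ y → G.Adj x y)
    (hP : ∀ x ∈ b, ∀ y ∈ b, x ≠ y → (P s(x, y) ↔ s(x, y) ≠ s(u, v))) :
    (pieceOf G b P).IsCopy ((⊤ : SimpleGraph (Fin m)).deleteEdges
            {s((⟨0, by omega⟩ : Fin m), (⟨1, by omega⟩ : Fin m))}) := by
  obtain ⟨f, hfu, hfv⟩ := exists_label m hm b hb ⟨u, hu⟩ ⟨v, hv⟩ (by simpa using huv)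
  refine ⟨⟨f, ?_⟩⟩
  rintro ⟨x, hx⟩ ⟨y, hy⟩
  have hx' : x ∈ b := hx
  have hy' : y ∈ b := hy
  rw [SimpleGraph.deleteEdges_adj, SimpleGraph.top_adj, SimpleGraph.Subgraph.coe_adj,
    Set.mem_singleton_iff]
  have key : s(f ⟨x, hx'⟩, f ⟨y, hy'⟩) = s((⟨0, by omega⟩ : Fin m), (⟨1, by omega⟩ : Fin m))
      ↔ s(x, y) = s(u, v) := by
    rw [← hfu, ← hfv, ← Sym2.map_mk, ← Sym2.map_mk, (Sym2.map.injective f.injective).eq_iff]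
    simp
  constructor
  · rintro ⟨h1, h2⟩
    have hne : x ≠ y := by rintro rfl; exact h1 rfl
    exact ⟨hx', hy', hG x hx' y hy' hne, (hP x hx' y hy' hne).2 (fun h => h2 (key.2 h))⟩
  · intro h
    have hne : x ≠ y := h.2.2.1.ne
    refine ⟨fun hf => hne (congrArg Subtype.val (f.injective hf)), fun h2 => ?_⟩
    exact (hP x hx' y hy' hne).1 h.2.2.2 (key.1 h2)

lemma mem_pieceOf {V : Type} (G : SimpleGraph V) (b : Finset V) (P : Sym2 V → Prop) (x y : V) :
    s(x, y) ∈ (pieceOf G b P).edgeSet ↔ x ∈ b ∧ y ∈ b ∧ G.Adj x y ∧ P s(x, y) := Iff.rfl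

lemma assemble {V : Type} [Fintype V] (G : SimpleGraph V) (k : ℕ) (hk : 3 ≤ k)
    (h0 : 0 < 2 * k - 1) (h1 : 1 < 2 * k - 1)
    (R U : Finset (Finset V)) (hR : IsPacking (2 * k - 1) R)
    (hRG : ∀ b ∈ R, ∀ x ∈ b, ∀ y ∈ b, x ≠ y → G.Adj x y) (hU : U ⊆ R)
    (K : Sym2 V → Finset V)
    (hK1 : ∀ e ∈ uncov G R, (K e).card = k ∧ ∀ v ∈ e, v ∈ K e)
    (hK2 : ∀ e ∈ uncov G R, ∀ x ∈ K e, ∀ y ∈ K e, x ≠ y →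
      s(x, y) = e ∨ ∃ b ∈ U, x ∈ b ∧ y ∈ b)
    (hK3 : ∀ b ∈ U, ∀ e ∈ uncov G R, ∀ e' ∈ uncov G R, ∀ x y x' y', x ≠ y → x' ≠ y' →
        x ∈ b → y ∈ b → x' ∈ b → y' ∈ b →
        x ∈ K e → y ∈ K e → x' ∈ K e' → y' ∈ K e' → e = e' ∧ s(x, y) = s(x', y')) :
    ∃ L : Set G.Subgraph,
        (∀ c ∈ L, c.IsCopy (⊤ : SimpleGraph (Fin k)) ∨
          c.IsCopy (⊤ : SimpleGraph (Fin (2 * k - 1))) ∨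
          c.IsCopy ((⊤ : SimpleGraph (Fin (2 * k - 1))).deleteEdges
            {s((⟨0, h0⟩ : Fin (2 * k - 1)), (⟨1, h1⟩ : Fin (2 * k - 1)))})) ∧
        ∀ e ∈ G.edgeSet, ∃! c, c ∈ L ∧ e ∈ c.edgeSet := by
  set Q : Sym2 V → Prop := fun a => ∀ e ∈ uncov G R, ¬ ∀ x ∈ a, x ∈ K e with hQ
  have hQ' : ∀ x y, Q s(x, y) ↔ ∀ e ∈ uncov G R, ¬ (x ∈ K e ∧ y ∈ K e) := by
    intro x y; simp only [hQ, Sym2.ball]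
  -- pairs used inside a block force the block to be in `U`
  have hused : ∀ b ∈ R, ∀ e ∈ uncov G R, ∀ x y, x ≠ y → x ∈ b → y ∈ b → x ∈ K e → y ∈ K e →
      b ∈ U := by
    intro b hb e he x y hxy hxb hyb hx hy
    rcases hK2 e he x hx y hy hxy with h | ⟨b', hb', hx', hy'⟩
    · rw [← h, mem_uncov] at he
      exact absurd ⟨hxb, hyb⟩ (he.2 b hb)
    · rwa [hR.2 b hb b' (hU hb') x y hxy hxb hyb hx' hy']
  have hKG : ∀ e ∈ uncov G R, ∀ x ∈ K e, ∀ y ∈ K e, x ≠ y → G.Adj x y := by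
    intro e he x hx y hy hxy
    rcases hK2 e he x hx y hy hxy with h | ⟨b', hb', hx', hy'⟩
    · rw [← h, mem_uncov] at he
      exact he.1
    · exact hRG b' (hU hb') x hx' y hy' hxy
  refine ⟨{c | (∃ e ∈ uncov G R, c = pieceOf G (K e) (fun _ => True)) ∨
    ∃ b ∈ R, c = pieceOf G b Q}, ?_, ?_⟩
  · rintro c (⟨e, he, rfl⟩ | ⟨b, hb, rfl⟩)
    · left
      exact pieceOf_top G _ _ k (hK1 e he).1
        (fun x hx y hy hxy => ⟨hKG e he x hx y hy hxy, trivial⟩)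
    · right
      by_cases hall : ∀ x ∈ b, ∀ y ∈ b, x ≠ y → Q s(x, y)
      · left
        exact pieceOf_top G _ _ _ (hR.1 b hb)
          (fun x hx y hy hxy => ⟨hRG b hb x hx y hy hxy, hall x hx y hy hxy⟩)
      · right
        push Not at hall
        obtain ⟨u, hu, v, hv, huv, hQuv⟩ := hall
        rw [hQ'] at hQuv
        push Not at hQuv
        obtain ⟨e, he, hue, hve⟩ := hQuv
        have hbU := hused b hb e he u v huv hu hv hue hve
        refine pieceOf_minus G b Q _ (by omega) (hR.1 b hb) u v hu hv huv (hRG b hb) ?_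
        intro x hx y hy hxy
        constructor
        · intro h1 h2
          rw [h2, hQ'] at h1
          exact h1 e he ⟨hue, hve⟩
        · intro h1
          rw [hQ']
          rintro e' he' ⟨hx', hy'⟩
          exact h1 (hK3 b hbU e' he' e he x y u v hxy huv hx hy hu hv hx' hy' hue hve).2
  · intro a ha
    induction a using Sym2.ind with
    | _ x y =>
    have hadj : G.Adj x y := ha
    have hxy := hadj.ne
    by_cases hc : ∃ e ∈ uncov G R, x ∈ K e ∧ y ∈ K e
    · obtain ⟨e, he, hxe, hye⟩ := hc
      refine ⟨pieceOf G (K e) (fun _ => True), ⟨Or.inl ⟨e, he, rfl⟩, hxe, hye, hadj, trivial⟩, ?_⟩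
      rintro c ⟨⟨e', he', rfl⟩ | ⟨b, hb, rfl⟩, hmem⟩
      · rw [mem_pieceOf] at hmem
        obtain ⟨hxe', hye', -, -⟩ := hmem
        have : e = e' := by
          rcases hK2 e he x hxe y hye hxy with h | ⟨b, hb, hxb, hyb⟩
          · rcases hK2 e' he' x hxe' y hye' hxy with h' | ⟨b, hb, hxb, hyb⟩
            · exact h.symm.trans h'
            · rw [← h, mem_uncov] at he
              exact absurd ⟨hxb, hyb⟩ (he.2 b (hU hb))
          · exact (hK3 b hb e he e' he' x y x y hxy hxy hxb hyb hxb hyb hxe hye hxe' hye').1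
        rw [this]
      · rw [mem_pieceOf] at hmem
        exact absurd ⟨hxe, hye⟩ ((hQ' x y).1 hmem.2.2.2 e he)
    · push Not at hc
      have hQxy : Q s(x, y) := (hQ' x y).2 (fun e he h => hc e he h.1 h.2)
      have hcov : ∃ b ∈ R, x ∈ b ∧ y ∈ b := by
        by_contra hno
        push Not at hno
        have he : s(x, y) ∈ uncov G R :=
          (mem_uncov G R x y).2 ⟨hadj, fun b hb h => hno b hb h.1 h.2⟩
        have := (hK1 _ he).2
        exact hc _ he (this x (by simp)) (this y (by simp))
      obtain ⟨b, hb, hxb, hyb⟩ := hcov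
      refine ⟨pieceOf G b Q, ⟨Or.inr ⟨b, hb, rfl⟩, hxb, hyb, hadj, hQxy⟩, ?_⟩
      rintro c ⟨⟨e', he', rfl⟩ | ⟨b', hb', rfl⟩, hmem⟩
      · rw [mem_pieceOf] at hmem
        exact absurd hmem.2.1 (hc e' he' hmem.1)
      · rw [mem_pieceOf] at hmem
        rw [hR.2 b hb b' hb' x y hxy hxb hyb hmem.1 hmem.2.1]

end PartD2

section PartE
open Finset
open scoped Classical

lemma decomposition_generic (k : ℕ) (hk : 3 ≤ k)
    (h0 : 0 < 2 * k - 1) (h1 : 1 < 2 * k - 1) : ∃ n₀ : ℕ, ∀ (V : Type) [Fintype V] (n : ℕ),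
    Fintype.card V = n → n₀ ≤ n → ∀ G : SimpleGraph V,
      (∀ v, 9 * k ^ 10 * (univ.filter (fun w => ¬ G.Adj v w)).card ≤ n) →
    ∃ L : Set G.Subgraph,
        (∀ c ∈ L, c.IsCopy (⊤ : SimpleGraph (Fin k)) ∨
          c.IsCopy (⊤ : SimpleGraph (Fin (2 * k - 1))) ∨
          c.IsCopy ((⊤ : SimpleGraph (Fin (2 * k - 1))).deleteEdges
            {s((⟨0, h0⟩ : Fin (2 * k - 1)), (⟨1, h1⟩ : Fin (2 * k - 1)))})) ∧
        ∀ e ∈ G.edgeSet, ∃! c, c ∈ L ∧ e ∈ c.edgeSet := by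
  obtain ⟨n₁, hn₁⟩ := exists_blocks k hk
  obtain ⟨n₂, hn₂⟩ := greedy_numerics k hk
  refine ⟨max n₁ n₂, ?_⟩
  intro V _ n hn hle G hG
  obtain ⟨R, hR, hRG, hRh⟩ := hn₁ V n hn ((le_max_left _ _).trans hle) G hG
  have p1 : 0 < 9 * k ^ 10 := by positivity
  have p2 : 0 < k ^ 8 := by positivity
  have hd : ∀ v, (univ.filter (fun w => ¬ G.Adj v w)).card ≤ n / (9 * k ^ 10) := fun v =>
    (Nat.le_div_iff_mul_le p1).2 (by rw [mul_comm]; exact hG v)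
  have hh : ∀ v, (univ.filter (fun u => G.Adj v u ∧ ∀ b ∈ R, ¬ (v ∈ b ∧ u ∈ b))).card
      ≤ n / k ^ 8 := fun v =>
    (Nat.le_div_iff_mul_le p2).2 (by rw [mul_comm]; exact hRh v)
  obtain ⟨τ, hτ⟩ := hn₂ n ((le_max_right _ _).trans hle) (n / (9 * k ^ 10)) (n / k ^ 8)
    (Nat.mul_div_le _ _) (Nat.mul_div_le _ _)
  obtain ⟨K, U, hU, hK1, hK2, hK3, -, -⟩ := greedy G (2 * k - 1) k (n / (9 * k ^ 10)) (n / k ^ 8) τ n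
    hn (by omega) R hR hd hh (uncov G R)
    (fun u v he => ⟨((mem_uncov G R u v).1 he).1.ne, ((mem_uncov G R u v).1 he).2⟩)
    (uncov_deg G R _ hh) (uncov_card G R _ n hn hh) hτ (uncov G R) (Subset.refl _)
  exact assemble G k hk h0 h1 R U hR hRG hU K hK1 hK2 hK3

lemma nonadj_card {V : Type} [Fintype V] (k : ℕ) (hk : 3 ≤ k) (ε : ℝ) (hε : 0 < ε) (n : ℕ)
    (hn : Fintype.card V = n) (G : SimpleGraph V) (v : V)
    (h : (n : ℝ) * (1 - 1 / (9 * (k : ℝ) ^ 10) + ε) ≤ ((G.neighborSet v).ncard : ℝ)) :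
    9 * k ^ 10 * (univ.filter (fun w => ¬ G.Adj v w)).card ≤ n := by
  have h1 : (G.neighborSet v).ncard = (univ.filter (fun w => G.Adj v w)).card := by
    rw [← Set.ncard_coe_finset]
    congr 1
    ext w
    simp
  have h2 : (univ.filter (fun w => G.Adj v w)).card + (univ.filter (fun w => ¬ G.Adj v w)).card
      = n := by
    rw [card_filter_add_card_filter_not, card_univ, hn]
  rw [h1] at h
  have h3 : ((univ.filter (fun w => G.Adj v w)).card : ℝ)
      + ((univ.filter (fun w => ¬ G.Adj v w)).card : ℝ) = n := by exact_mod_cast h2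
  have hk0 : (0 : ℝ) < 9 * (k : ℝ) ^ 10 := by
    have : (0 : ℝ) < k := by exact_mod_cast (by omega : 0 < k)
    positivity
  have h4 : 0 ≤ (n : ℝ) * ε := by positivity
  have h5 : ((univ.filter (fun w => ¬ G.Adj v w)).card : ℝ) ≤ n / (9 * (k : ℝ) ^ 10) := by
    have : (n : ℝ) * (1 - 1 / (9 * (k : ℝ) ^ 10) + ε) = n - n / (9 * (k : ℝ) ^ 10) + n * ε := by ring
    linarith
  rw [le_div_iff₀ hk0] at h5
  have h6 : (9 * (k : ℝ) ^ 10) * ((univ.filter (fun w => ¬ G.Adj v w)).card : ℝ) ≤ n := by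
    rw [mul_comm]; exact h5
  exact_mod_cast h6

lemma decomposition_real (k : ℕ) (hk : 3 ≤ k)
    (h0 : 0 < 2 * k - 1) (h1 : 1 < 2 * k - 1)
    (ε : ℝ) (hε : 0 < ε) :
    ∃ n₀ : ℕ, ∀ (V : Type) [Fintype V] (n : ℕ),
    Fintype.card V = n → n₀ ≤ n → ∀ G : SimpleGraph V,
      (∀ v, (n : ℝ) * (1 - 1 / (9 * (k : ℝ) ^ 10) + ε) ≤ ((G.neighborSet v).ncard : ℝ)) →
    ∃ L : Set G.Subgraph,
        (∀ c ∈ L, c.IsCopy (⊤ : SimpleGraph (Fin k)) ∨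
          c.IsCopy (⊤ : SimpleGraph (Fin (2 * k - 1))) ∨
          c.IsCopy ((⊤ : SimpleGraph (Fin (2 * k - 1))).deleteEdges
            {s((⟨0, h0⟩ : Fin (2 * k - 1)), (⟨1, h1⟩ : Fin (2 * k - 1)))})) ∧
        ∀ e ∈ G.edgeSet, ∃! c, c ∈ L ∧ e ∈ c.edgeSet := by
  obtain ⟨n₀, h⟩ := decomposition_generic k hk h0 h1
  exact ⟨n₀, fun V _ n hn hle G hG =>
    h V n hn hle G (fun v => nonadj_card k hk ε hε n hn G v (hG v))⟩

end PartE

/-- For every integer `k ≥ 3` and every `ε > 0` there exists `n₀` such that every graph `G` on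
`n ≥ n₀` vertices with minimum degree at least `n·(1 - 1/(9k^10) + ε)` has an
`F_k`-decomposition, where `F_k = {K_k, K_{2k-1}, K_{2k-1}⁻}`: a set `L` of subgraphs of `G`,
each isomorphic to `K_k`, `K_{2k-1}` or `K_{2k-1}` minus an edge, such that each edge of `G`
appears in precisely one element of `L`. -/
theorem Fk_decomposition_of_min_degree (k : ℕ) (hk : 3 ≤ k) (ε : ℝ) (hε : 0 < ε) :
    ∃ n₀ : ℕ, ∀ n : ℕ, n₀ ≤ n → ∀ G : SimpleGraph (Fin n),
      (∀ v, (n : ℝ) * (1 - 1 / (9 * (k : ℝ) ^ 10) + ε) ≤ ((G.neighborSet v).ncard : ℝ)) →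
      ∃ L : Set G.Subgraph,
        (∀ c ∈ L, c.IsCopy (⊤ : SimpleGraph (Fin k)) ∨
          c.IsCopy (⊤ : SimpleGraph (Fin (2 * k - 1))) ∨
          c.IsCopy ((⊤ : SimpleGraph (Fin (2 * k - 1))).deleteEdges
            {s((⟨0, by omega⟩ : Fin (2 * k - 1)), (⟨1, by omega⟩ : Fin (2 * k - 1)))})) ∧
        ∀ e ∈ G.edgeSet, ∃! c, c ∈ L ∧ e ∈ c.edgeSet := by
  obtain ⟨n₀, h⟩ := decomposition_real k hk (by omega) (by omega) ε hε
  exact ⟨n₀, fun n hn G hG => h (Fin n) n (Fintype.card_fin n) hn G hG⟩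
end

section
/- For every integer k ≥ 2, the graph K_{2k-1}⁻ (the complete graph on 2k-1 vertices with one edge removed) has a fractional K_k-decomposition. -/
/-- A fractional `H`-decomposition of `G`: an assignment of nonnegative real weights to the
copies of `H` in `G` such that for each edge `e` of `G`, the sum of the weights of the copies
of `H` containing `e` equals `1`. -/
def IsFracDecomp {α β : Type*} (G : SimpleGraph α) (H : SimpleGraph β)
    (ψ : G.Subgraph → ℝ) : Prop :=
  (∀ c, 0 ≤ ψ c) ∧ (∀ c, ¬ c.IsCopy H → ψ c = 0) ∧
  ∀ e ∈ G.edgeSet, (∑ᶠ c ∈ {c : G.Subgraph | c.IsCopy H ∧ e ∈ c.edgeSet}, ψ c) = 1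

open Finset in
lemma fkd_count {V : Type*} [Fintype V] [DecidableEq V] (A B : Finset V) (hAB : Disjoint A B)
    (k : ℕ) (hk : #A ≤ k) :
    #{S : Finset V | #S = k ∧ A ⊆ S ∧ Disjoint S B}
      = (Fintype.card V - #A - #B).choose (k - #A) := by
  have h1 : #((A ∪ B)ᶜ) = Fintype.card V - #A - #B := by
    rw [card_compl, card_union_of_disjoint hAB]; omega
  rw [← h1, ← card_powersetCard]
  refine card_nbij' (fun S => S \ A) (fun S => S ∪ A) ?_ ?_ ?_ ?_
  · intro S hS
    simp only [coe_filter, mem_univ, true_and, Set.mem_ofPred_eq] at hS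
    obtain ⟨h, hA, hB⟩ := hS
    simp only [mem_coe, mem_powersetCard]
    refine ⟨?_, by rw [card_sdiff_of_subset hA, h]⟩
    intro x hx
    have hxS : x ∈ S := (Finset.mem_sdiff.mp hx).1
    have hxB : x ∉ B := Finset.disjoint_left.mp hB hxS
    simp_all
  · intro S hS
    simp only [mem_coe, mem_powersetCard] at hS
    obtain ⟨h, hc⟩ := hS
    have hd : Disjoint S A := by
      rw [Finset.disjoint_left]
      intro x hx
      have := h hx
      simp_all
    simp only [coe_filter, mem_univ, true_and, Set.mem_ofPred_eq]
    refine ⟨by rw [card_union_of_disjoint hd]; omega, subset_union_right, ?_⟩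
    rw [disjoint_union_left]
    refine ⟨?_, hAB⟩
    rw [Finset.disjoint_left]
    intro x hx
    have := h hx
    simp_all
  · intro S hS
    simp only [coe_filter, mem_univ, true_and, Set.mem_ofPred_eq] at hS
    exact sdiff_union_of_subset hS.2.1
  · intro S hS
    simp only [mem_coe, mem_powersetCard] at hS
    obtain ⟨h, hc⟩ := hS
    have hd : Disjoint S A := by
      rw [Finset.disjoint_left]
      intro x hx
      have := h hx
      simp_all
    simp only [union_sdiff_right]
    exact sdiff_eq_self_of_disjoint hd

open Finset in
lemma fkd_count_uw {V : Type*} [Fintype V] [DecidableEq V] (k : ℕ) (hk : 2 ≤ k)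
    (hV : Fintype.card V = 2 * k - 1) (u v w : V) (huv : u ≠ v) (hwu : w ≠ u) (hwv : w ≠ v) :
    #{S : Finset V | (#S = k ∧ ¬ (u ∈ S ↔ v ∈ S)) ∧ u ∈ S ∧ w ∈ S}
      = (2 * k - 4).choose (k - 2) := by
  have hA : #({u, w} : Finset V) = 2 := card_pair hwu.symm
  have h := fkd_count ({u, w} : Finset V) {v} (by simp [huv, hwv, huv.symm, hwv.symm]) k (by omega)
  rw [hA, hV, card_singleton, show 2 * k - 1 - 2 - 1 = 2 * k - 4 by omega] at h
  rw [← h]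
  congr 1
  ext S
  simp [insert_subset_iff]
  tauto

open Finset in
lemma fkd_count_ww {V : Type*} [Fintype V] [DecidableEq V] (k : ℕ) (hk : 3 ≤ k)
    (hV : Fintype.card V = 2 * k - 1) (u v w x : V) (huv : u ≠ v) (hwu : w ≠ u) (hwv : w ≠ v)
    (hxu : x ≠ u) (hxv : x ≠ v) (hwx : w ≠ x) :
    #{S : Finset V | (#S = k ∧ ¬ (u ∈ S ↔ v ∈ S)) ∧ w ∈ S ∧ x ∈ S}
      = (2 * k - 4).choose (k - 2) := by
  have key : ∀ a b : V, a ≠ b → w ≠ a → w ≠ b → x ≠ a → x ≠ b →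
      #{S : Finset V | #S = k ∧ {a, w, x} ⊆ S ∧ Disjoint S {b}} = (2 * k - 5).choose (k - 3) := by
    intro a b hab hwa hwb hxa hxb
    have hA : #({a, w, x} : Finset V) = 3 := card_eq_three.mpr ⟨a, w, x, hwa.symm, hxa.symm, hwx, rfl⟩
    have h := fkd_count ({a, w, x} : Finset V) {b}
      (by simp [hab.symm, hwb.symm, hxb.symm]) k (by omega)
    rw [hA, hV, card_singleton, show 2 * k - 1 - 3 - 1 = 2 * k - 5 by omega] at h
    exact h
  have h1 := key u v huv hwu hwv hxu hxv
  have h2 := key v u huv.symm hwv hwu hxv hxu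
  have hb : (2 * k - 4).choose (k - 2) = (2 * k - 5).choose (k - 3) + (2 * k - 5).choose (k - 3) := by
    obtain ⟨m, rfl⟩ := Nat.exists_eq_add_of_le hk
    rw [show 2 * (3 + m) - 4 = (2 * m + 1) + 1 by omega, show 3 + m - 2 = m + 1 by omega,
      show 2 * (3 + m) - 5 = 2 * m + 1 by omega, show 3 + m - 3 = m by omega,
      Nat.choose_succ_succ, Nat.choose_symm_half]
  rw [hb]
  nth_rewrite 1 [← h1]
  rw [← h2, ← card_union_of_disjoint]
  · congr 1
    ext S
    simp [insert_subset_iff]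
    tauto
  · rw [Finset.disjoint_left]
    intro S h1 h2
    simp [insert_subset_iff] at h1 h2
    tauto

open Finset in
lemma fkd_main {V : Type*} [Fintype V] [DecidableEq V] (k : ℕ) (hk : 2 ≤ k)
    (hV : Fintype.card V = 2 * k - 1) (u v : V) (huv : u ≠ v) (G : SimpleGraph V)
    (hG : ∀ x y, G.Adj x y ↔ x ≠ y ∧ s(x, y) ≠ s(u, v)) :
    ∃ ψ : G.Subgraph → ℝ, IsFracDecomp G (⊤ : SimpleGraph (Fin k)) ψ := by
  classical
  have count : ∀ x y, G.Adj x y →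
      #{S : Finset V | (#S = k ∧ ¬ (u ∈ S ↔ v ∈ S)) ∧ x ∈ S ∧ y ∈ S}
        = (2 * k - 4).choose (k - 2) := by
    have c1 : ∀ w, w ≠ u → w ≠ v →
      #{S : Finset V | (#S = k ∧ ¬ (u ∈ S ↔ v ∈ S)) ∧ u ∈ S ∧ w ∈ S}
        = (2 * k - 4).choose (k - 2) := fun w h1 h2 => fkd_count_uw k hk hV u v w huv h1 h2
    have c2 : ∀ w, w ≠ u → w ≠ v →
      #{S : Finset V | (#S = k ∧ ¬ (u ∈ S ↔ v ∈ S)) ∧ v ∈ S ∧ w ∈ S}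
        = (2 * k - 4).choose (k - 2) := fun w h1 h2 => by
      have := fkd_count_uw k hk hV v u w huv.symm h2 h1
      simpa only [iff_comm (a := v ∈ _)] using this
    intro x y hxy
    obtain ⟨hne, hs⟩ := (hG x y).1 hxy
    have hs1 : ¬ (x = u ∧ y = v) := by rintro ⟨rfl, rfl⟩; exact hs rfl
    have hs2 : ¬ (x = v ∧ y = u) := by rintro ⟨rfl, rfl⟩; exact hs Sym2.eq_swap
    by_cases hxu : x = u
    · subst hxu
      exact c1 y hne.symm (by tauto)
    by_cases hxv : x = v
    · subst hxv
      exact c2 y (by tauto) hne.symm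
    by_cases hyu : y = u
    · subst hyu
      have := c1 x hxu hxv
      simpa only [and_comm (a := x ∈ _)] using this
    by_cases hyv : y = v
    · subst hyv
      have := c2 x hxu hxv
      simpa only [and_comm (a := x ∈ _)] using this
    have h3 : 3 ≤ k := by
      have h4 : #({u, v, x, y} : Finset V) = 4 := by
        rw [card_insert_of_notMem, card_insert_of_notMem, card_pair hne]
        · simp [Ne.symm hxv, Ne.symm hyv]
        · simp [huv, Ne.symm hxu, Ne.symm hyu]
      have := card_le_univ ({u, v, x, y} : Finset V)
      omega
    exact fkd_count_ww k h3 hV u v x y huv hxu hxv hyu hyv hne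
  set f : Finset V → G.Subgraph := fun S => (⊤ : G.Subgraph).induce (S : Set V) with hf
  have finj : Function.Injective f := by
    intro S T h
    have : (f S).verts = (f T).verts := by rw [h]
    simpa [hf] using this
  have fadj : ∀ S x y, (f S).Adj x y ↔ x ∈ S ∧ y ∈ S ∧ G.Adj x y := by
    intro S x y; simp [hf]
  let P : Finset V → Prop := fun S => #S = k ∧ ¬ (u ∈ S ↔ v ∈ S)
  have fcopy : ∀ S, P S → (f S).IsCopy (⊤ : SimpleGraph (Fin k)) := by
    intro S ⟨hc, hx⟩
    refine ⟨⟨(S.equivFinOfCardEq hc : (S : Set V) ≃ Fin k), ?_⟩⟩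
    rintro ⟨a, ha⟩ ⟨b, hb⟩
    replace ha : a ∈ S := ha
    replace hb : b ∈ S := hb
    have hs : s(a, b) ≠ s(u, v) := by
      intro h
      rw [Sym2.eq_iff] at h
      rcases h with ⟨rfl, rfl⟩ | ⟨rfl, rfl⟩ <;> tauto
    simp only [SimpleGraph.top_adj, ne_eq,
      SimpleGraph.Subgraph.coe_adj, fadj, hG]
    constructor
    · intro h
      exact ⟨ha, hb, fun e => h (congrArg _ (Subtype.ext e)), hs⟩
    · intro h e
      exact h.2.2.1 (congrArg Subtype.val ((S.equivFinOfCardEq hc).injective e))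
  have hpos : (0 : ℝ) < ((2 * k - 4).choose (k - 2) : ℕ) := by
    exact_mod_cast Nat.choose_pos (by omega)
  refine ⟨fun c => if ∃ S, P S ∧ f S = c then (((2 * k - 4).choose (k - 2) : ℕ) : ℝ)⁻¹ else 0,
    ?_, ?_, ?_⟩
  · intro c
    dsimp only
    split_ifs
    · exact (inv_pos.mpr hpos).le
    · exact le_rfl
  · intro c hc
    apply if_neg
    rintro ⟨S, hS, rfl⟩
    exact hc (fcopy S hS)
  · intro e
    induction e using Sym2.ind with
    | _ x y =>
    intro he
    rw [SimpleGraph.mem_edgeSet] at he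
    rw [finsum_mem_inter_support_eq (t := f '' (({S : Finset V | P S ∧ x ∈ S ∧ y ∈ S} : Finset (Finset V)) : Set (Finset V)))]
    · rw [finsum_mem_image finj.injOn, finsum_mem_coe_finset]
      rw [Finset.sum_congr rfl (g := fun _ => (((2 * k - 4).choose (k - 2) : ℕ) : ℝ)⁻¹)]
      · rw [sum_const, count x y he, nsmul_eq_mul, mul_inv_cancel₀ hpos.ne']
      · intro S hS
        exact if_pos ⟨S, (by simpa using hS : P S ∧ x ∈ S ∧ y ∈ S).1, rfl⟩
    · ext c
      simp only [Set.mem_inter_iff, Set.mem_ofPred_eq, Function.mem_support, ne_eq,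
        Set.mem_image, coe_filter, mem_univ, true_and]
      constructor
      · rintro ⟨⟨h1, h2⟩, h3⟩
        refine ⟨?_, h3⟩
        by_cases hE : ∃ S, P S ∧ f S = c
        · obtain ⟨S, hS, rfl⟩ := hE
          rw [SimpleGraph.Subgraph.mem_edgeSet, fadj] at h2
          exact ⟨S, ⟨hS, h2.1, h2.2.1⟩, rfl⟩
        · exact absurd (if_neg hE) h3
      · rintro ⟨⟨S, ⟨hS, hx, hy⟩, rfl⟩, h3⟩
        refine ⟨⟨fcopy S hS, ?_⟩, h3⟩
        rw [SimpleGraph.Subgraph.mem_edgeSet, fadj]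
        exact ⟨hx, hy, he⟩

/-- For every integer `k ≥ 2`, the graph `K_{2k-1}⁻` (the complete graph on `2k-1` vertices
with one edge removed) has a fractional `K_k`-decomposition. -/
theorem frac_kk_decomposition_of_complete_minus_edge (k : ℕ) (hk : 2 ≤ k) :
    ∃ ψ : ((⊤ : SimpleGraph (Fin (2 * k - 1))).deleteEdges
        {s((⟨0, by omega⟩ : Fin (2 * k - 1)), (⟨1, by omega⟩ : Fin (2 * k - 1)))}).Subgraph → ℝ,
      IsFracDecomp ((⊤ : SimpleGraph (Fin (2 * k - 1))).deleteEdges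
        {s((⟨0, by omega⟩ : Fin (2 * k - 1)), (⟨1, by omega⟩ : Fin (2 * k - 1)))})
        (⊤ : SimpleGraph (Fin k)) ψ := by

  refine fkd_main k hk (by simp) ⟨0, by omega⟩ ⟨1, by omega⟩
    (fun h => absurd (congrArg Fin.val h) Nat.zero_ne_one) _ ?_
  intro x y
  simp [SimpleGraph.deleteEdges_adj]
end

section
/- For every integer t > 2 there exists N = N(t) such that for all n > N with n ≡ 1 (mod t(t-1)) or n ≡ t (mod t(t-1)), the complete graph K_n has a K_t-decomposition, i.e. its edge set can be partitioned into copies of K_t. (Wilson's theorem for complete graphs.) -/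
/-! ### Transversal designs -/

/-- A transversal design (orthogonal array of strength two and index one) with groups indexed by
`ι` and each group a copy of `S`. -/
def TD (ι S : Type) : Prop :=
  ∃ (P : Type) (F : P → ι → S), ∀ i j, i ≠ j → ∀ x y, ∃! p, F p i = x ∧ F p j = y

theorem TD.map {ι ι' S S' : Type} (h : TD ι S) (f : ι' ↪ ι) (e : S ≃ S') : TD ι' S' := by
  obtain ⟨P, F, hF⟩ := h
  refine ⟨P, fun p i => e (F p (f i)), fun i j hij x y => ?_⟩
  obtain ⟨p, hp, hu⟩ := hF (f i) (f j) (fun h => hij (f.injective h)) (e.symm x) (e.symm y)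
  refine ⟨p, by simp [hp.1, hp.2], fun q hq => hu q ?_⟩
  simp [← hq.1, ← hq.2]

theorem TD.ofRing {ι A : Type} [CommRing A] (α : ι → A)
    (hα : ∀ i j, i ≠ j → IsUnit (α i - α j)) : TD ι A := by
  refine ⟨A × A, fun p i => p.1 + α i * p.2, fun i j hij x y => ?_⟩
  obtain ⟨u, hu⟩ := hα i j hij
  have hinv : (↑u⁻¹ : A) * (α i - α j) = 1 := by rw [← hu]; simp
  refine ⟨(x - α i * (↑u⁻¹ * (x - y)), ↑u⁻¹ * (x - y)), ⟨by ring, ?_⟩, ?_⟩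
  · simp only
    linear_combination (-(x - y)) * hinv
  · rintro ⟨a, b⟩ ⟨h1, h2⟩
    simp only at h1 h2
    have hb : b = ↑u⁻¹ * (x - y) := by
      rw [← h1, ← h2]
      linear_combination (-b) * hinv
    ext
    · simp only [← hb]; linear_combination h1
    · exact hb

theorem TD.ofCoprime {K n : ℕ} (hn : Nat.Coprime n K.factorial) : TD (Fin (K + 1)) (Fin n) := by
  have hn0 : n ≠ 0 ∨ K ≤ 1 := by
    by_contra! h
    obtain ⟨h, h'⟩ := h
    subst h
    rw [Nat.coprime_zero_left] at hn
    have := Nat.self_le_factorial K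
    omega
  rcases Nat.eq_zero_or_pos n with h0 | hpos
  · subst h0
    exact ⟨Fin 0, fun p => p.elim0, fun i j _ x => x.elim0⟩
  have : NeZero n := ⟨hpos.ne'⟩
  have : TD (Fin (K + 1)) (ZMod n) := by
    have key : ∀ d : ℕ, 0 < d → d ≤ K → IsUnit ((d : ℕ) : ZMod n) := fun d hd hdK =>
      (ZMod.isUnit_iff_coprime d n).2
        ((Nat.Coprime.coprime_dvd_right (Nat.dvd_factorial hd hdK) hn).symm)
    refine TD.ofRing (fun i : Fin (K + 1) => ((i : ℕ) : ZMod n)) fun i j hij => ?_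
    rcases lt_or_gt_of_ne (fun h => hij (Fin.ext h) : (i : ℕ) ≠ j) with h | h
    · have := key (j - i) (by omega) (by omega)
      rw [Nat.cast_sub h.le] at this
      rw [← neg_sub]
      exact this.neg
    · have := key (i - j) (by omega) (by omega)
      rwa [Nat.cast_sub h.le] at this
  exact this.map (Function.Embedding.refl _)
    (Fintype.equivFinOfCardEq (ZMod.card n))

theorem TD.ofTwoPow {K e : ℕ} (he : e ≠ 0) (h : K ≤ 2 ^ e) : TD (Fin K) (Fin (2 ^ e)) := by
  have : Fact (Nat.Prime 2) := ⟨Nat.prime_two⟩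
  have : Fintype (GaloisField 2 e) := Fintype.ofFinite _
  have hc : Fintype.card (GaloisField 2 e) = 2 ^ e := by
    rw [← Nat.card_eq_fintype_card]; exact GaloisField.card 2 e he
  let eq := (Fintype.equivFinOfCardEq hc)
  have : TD (Fin K) (GaloisField 2 e) := by
    refine TD.ofRing (fun i => eq.symm (Fin.castLE h i)) fun i j hij => ?_
    rw [isUnit_iff_ne_zero, sub_ne_zero]
    intro h'
    exact hij (Fin.castLE_injective h (eq.symm.injective h'))
  exact this.map (Function.Embedding.refl _) eq

/-- Relabel a transversal design such that it contains a constant block. -/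
theorem TD.normalize {ι S : Type} (h : TD ι S) (s : S) (hne : ∃ i j : ι, i ≠ j) :
    ∃ (P : Type) (F : P → ι → S) (p₀ : P), (∀ i, F p₀ i = s) ∧
      ∀ i j, i ≠ j → ∀ x y, ∃! p, F p i = x ∧ F p j = y := by
  classical
  obtain ⟨P, F, hF⟩ := h
  obtain ⟨i₀, j₀, hij⟩ := hne
  obtain ⟨p₀, -, -⟩ := hF i₀ j₀ hij s s
  refine ⟨P, fun p i => Equiv.swap (F p₀ i) s (F p i), p₀, fun i => by simp,
    fun i j hij x y => ?_⟩
  obtain ⟨p, hp, hu⟩ := hF i j hij (Equiv.swap (F p₀ i) s x) (Equiv.swap (F p₀ j) s y)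
  refine ⟨p, by simp [hp.1, hp.2], fun q hq => hu q ?_⟩
  simp [← hq.1, ← hq.2]

/-- Wilson's composition for transversal designs. -/
theorem TD.wilson {ι M T U : Type} (hne : ∃ i j : ι, i ≠ j) (f : U ↪ T)
    (h1 : TD ι M) (h2 : TD ι (Option M)) (h3 : TD (Option ι) T) (h4 : TD ι U) :
    TD ι ((T × M) ⊕ U) := by
  classical
  obtain ⟨P1, F1, H1⟩ := h1
  obtain ⟨P2, F2, p0, hp0, H2⟩ := h2.normalize none hne
  obtain ⟨P3, F3, H3⟩ := h3
  obtain ⟨P4, F4, H4⟩ := h4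
  let lift : T → U → Option M → (T × M) ⊕ U := fun x w o =>
    o.elim (Sum.inr w) (fun μ => Sum.inl (x, μ))
  -- blocks
  let P : Type := ({b : P3 // F3 b none ∉ Set.range f} × P1) ⊕
    ({bw : P3 × U // F3 bw.1 none = f bw.2} × {c : P2 // c ≠ p0}) ⊕ P4
  let F : P → ι → (T × M) ⊕ U := fun p i =>
    match p with
    | Sum.inl (b, c) => Sum.inl (F3 b.1 (some i), F1 c i)
    | Sum.inr (Sum.inl (b, c)) => lift (F3 b.1.1 (some i)) b.1.2 (F2 c.1 i)
    | Sum.inr (Sum.inr c) => Sum.inr (F4 c i)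
  have Fa : ∀ b c i, F (Sum.inl (b, c)) i = Sum.inl (F3 b.1 (some i), F1 c i) := fun _ _ _ => rfl
  have Fb : ∀ b c i, F (Sum.inr (Sum.inl (b, c))) i
    = lift (F3 b.1.1 (some i)) b.1.2 (F2 c.1 i) := fun _ _ _ => rfl
  have Fc : ∀ c i, F (Sum.inr (Sum.inr c)) i = Sum.inr (F4 c i) := fun _ _ => rfl
  have lift_inl : ∀ x w o y μ, lift x w o = Sum.inl (y, μ) ↔ x = y ∧ o = some μ := by
    intro x w o y μ
    cases o <;> simp [lift]
  have lift_inr : ∀ x w o w', lift x w o = Sum.inr w' ↔ w = w' ∧ o = none := by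
    intro x w o y
    cases o <;> simp [lift]
  have n0 : ∀ c i j, i ≠ j → F2 c i = none → F2 c j = none → c = p0 := fun c i j hij hi hj =>
    (H2 i j hij none none).unique ⟨hi, hj⟩ ⟨hp0 i, hp0 j⟩
  refine ⟨P, F, fun i j hij x y => ?_⟩
  have hs : (some i) ≠ some j := fun h => hij (Option.some.inj h)
  rcases x with ⟨x, μ⟩ | w <;> rcases y with ⟨y, ν⟩ | w'
  · obtain ⟨b, hb, hbu⟩ := H3 (some i) (some j) hs x y
    by_cases hr : F3 b none ∈ Set.range f
    · obtain ⟨w, hw⟩ := hr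
      obtain ⟨c, hc, hcu⟩ := H2 i j hij (some μ) (some ν)
      have hc0 : c ≠ p0 := by rintro rfl; rw [hp0] at hc; simp at hc
      refine ⟨Sum.inr (Sum.inl (⟨(b, w), hw.symm⟩, ⟨c, hc0⟩)), ?_, ?_⟩
      · simp [Fb, lift_inl, hb, hc]
      · rintro (⟨⟨b', hb'⟩, c'⟩ | ⟨⟨⟨b', w'⟩, hb'⟩, ⟨c', hc'⟩⟩ | c') h
        · simp only [Fa, Sum.inl.injEq, Prod.mk.injEq] at h
          have : b' = b := hbu b' ⟨h.1.1, h.2.1⟩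
          subst this
          exact absurd ⟨w, hw⟩ hb'
        · simp only [Fb, lift_inl] at h
          have h1 : b' = b := hbu b' ⟨h.1.1, h.2.1⟩
          have h2 : c' = c := hcu c' ⟨h.1.2, h.2.2⟩
          subst h1 h2
          have h3 : w' = w := f.injective (hb'.symm.trans hw.symm)
          subst h3
          rfl
        · simp [Fc] at h
    · obtain ⟨c, hc, hcu⟩ := H1 i j hij μ ν
      refine ⟨Sum.inl (⟨b, hr⟩, c), ?_, ?_⟩
      · simp [Fa, hb, hc]
      · rintro (⟨⟨b', hb'⟩, c'⟩ | ⟨⟨⟨b', w'⟩, hb'⟩, ⟨c', hc'⟩⟩ | c') h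
        · simp only [Fa, Sum.inl.injEq, Prod.mk.injEq] at h
          have h1 : b' = b := hbu b' ⟨h.1.1, h.2.1⟩
          have h2 : c' = c := hcu c' ⟨h.1.2, h.2.2⟩
          subst h1 h2
          rfl
        · simp only [Fb, lift_inl] at h
          have h1 : b' = b := hbu b' ⟨h.1.1, h.2.1⟩
          subst h1
          exact absurd ⟨w', hb'.symm⟩ hr
        · simp [Fc] at h
  · obtain ⟨b, hb, hbu⟩ := H3 (some i) none (by simp) x (f w')
    obtain ⟨c, hc, hcu⟩ := H2 i j hij (some μ) none
    have hc0 : c ≠ p0 := by rintro rfl; rw [hp0] at hc; simp at hc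
    refine ⟨Sum.inr (Sum.inl (⟨(b, w'), hb.2⟩, ⟨c, hc0⟩)), ?_, ?_⟩
    · simp [Fb, lift_inl, lift_inr, hb, hc]
    · rintro (⟨⟨b', hb'⟩, c'⟩ | ⟨⟨⟨b', w''⟩, hb'⟩, ⟨c', hc'⟩⟩ | c') h
      · simp [Fa] at h
      · simp only [Fb, lift_inl, lift_inr] at h
        obtain ⟨⟨h1, h2⟩, h3, h4⟩ := h
        subst h3
        have h1 : b' = b := hbu b' ⟨h1, hb'⟩
        have h2 : c' = c := hcu c' ⟨h2, h4⟩
        subst h1 h2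
        rfl
      · simp [Fc] at h
  · obtain ⟨b, hb, hbu⟩ := H3 (some j) none (by simp) y (f w)
    obtain ⟨c, hc, hcu⟩ := H2 i j hij none (some ν)
    have hc0 : c ≠ p0 := by rintro rfl; rw [hp0, hp0] at hc; simp at hc
    refine ⟨Sum.inr (Sum.inl (⟨(b, w), hb.2⟩, ⟨c, hc0⟩)), ?_, ?_⟩
    · simp [Fb, lift_inl, lift_inr, hb, hc]
    · rintro (⟨⟨b', hb'⟩, c'⟩ | ⟨⟨⟨b', w''⟩, hb'⟩, ⟨c', hc'⟩⟩ | c') h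
      · simp [Fa] at h
      · simp only [Fb, lift_inl, lift_inr] at h
        obtain ⟨⟨h3, h4⟩, h1, h2⟩ := h
        subst h3
        have h1 : b' = b := hbu b' ⟨h1, hb'⟩
        have h2 : c' = c := hcu c' ⟨h4, h2⟩
        subst h1 h2
        rfl
      · simp [Fc] at h
  · obtain ⟨c, hc, hcu⟩ := H4 i j hij w w'
    refine ⟨Sum.inr (Sum.inr c), by simp [Fc, hc], ?_⟩
    rintro (⟨⟨b', hb'⟩, c'⟩ | ⟨⟨⟨b', w''⟩, hb'⟩, ⟨c', hc'⟩⟩ | c') h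
    · simp [Fa] at h
    · simp only [Fb, lift_inr] at h
      exact absurd (n0 c' i j hij h.1.2 h.2.2) hc'
    · simp only [Fc, Sum.inr.injEq] at h
      rw [hcu c' h]

theorem TD.wilson_nat {K m t u : ℕ} (hK : 2 ≤ K) (hut : u ≤ t)
    (h1 : TD (Fin K) (Fin m)) (h2 : TD (Fin K) (Fin (m + 1))) (h3 : TD (Fin (K + 1)) (Fin t))
    (h4 : TD (Fin K) (Fin u)) : TD (Fin K) (Fin (m * t + u)) := by
  have e2 : Fin (m + 1) ≃ Option (Fin m) := Fintype.equivOfCardEq (by simp)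
  have e3 : Option (Fin K) ≃ Fin (K + 1) := Fintype.equivOfCardEq (by simp)
  have := TD.wilson (ι := Fin K) ⟨⟨0, by omega⟩, ⟨1, by omega⟩, by simp⟩
    (Fin.castLEEmb hut) h1 (h2.map (Function.Embedding.refl _) e2)
    (h3.map e3.toEmbedding (Equiv.refl _)) h4
  exact this.map (Function.Embedding.refl _) (Fintype.equivOfCardEq (by simp [mul_comm]))

theorem exists_residue (m n p : ℕ) (hp : p.Prime) (hm : p = 2 ∨ ¬ p ∣ m)
    (h2 : (m + n) % 2 = 1) :
    ∃ t : ℕ, ¬ p ∣ t ∧ ¬ (p : ℤ) ∣ ((n : ℤ) - m * t) := by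
  by_cases hp2 : p = 2
  · subst hp2
    exact ⟨1, by norm_num, by omega⟩
  · have hm := hm.resolve_left hp2
    have h3 : 3 ≤ p := by have := hp.two_le; omega
    have : ¬ (p : ℤ) ∣ (n : ℤ) - m * (1 : ℕ) ∨ ¬ (p : ℤ) ∣ (n : ℤ) - m * (2 : ℕ) := by
      by_contra! h
      have := dvd_sub h.1 h.2
      apply hm
      have h' : (p : ℤ) ∣ m := by
        have e : (n : ℤ) - m * (1 : ℕ) - ((n : ℤ) - m * (2 : ℕ)) = m := by push_cast; ring
        rwa [e] at this
      exact_mod_cast h'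
    rcases this with h | h
    · exact ⟨1, by intro h; have := Nat.le_of_dvd (by norm_num) h; omega, h⟩
    · exact ⟨2, by intro h; have := Nat.le_of_dvd (by norm_num) h; omega, h⟩

theorem exists_coprime_pair (L m n : ℕ) (hL : L ≠ 0)
    (hm : ∀ p, p.Prime → p ∣ L → p = 2 ∨ ¬ p ∣ m)
    (h2 : (m + n) % 2 = 1) :
    ∃ t : ℕ, t < L ∧ ∀ s : ℕ, Nat.Coprime (t + L * s) L ∧
      ∀ u : ℕ, n = m * (t + L * s) + u → Nat.Coprime u L := by
  classical
  have key : ∀ p : ℕ, ∃ t : ℕ, p ∈ L.primeFactors → ¬ p ∣ t ∧ ¬ (p : ℤ) ∣ ((n : ℤ) - m * t) := by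
    intro p
    by_cases h : p ∈ L.primeFactors
    · rw [Nat.mem_primeFactors] at h
      obtain ⟨t, ht⟩ := exists_residue m n p h.1 (hm p h.1 h.2.1) h2
      exact ⟨t, fun _ => ht⟩
    · exact ⟨0, fun h' => absurd h' h⟩
  choose a ha using key
  obtain ⟨t', ht'⟩ := Nat.chineseRemainderOfFinset a id L.primeFactors
    (fun p hp => (Nat.prime_of_mem_primeFactors hp).ne_zero)
    (fun p hp q hq hpq => (Nat.coprime_primes (Nat.prime_of_mem_primeFactors hp)
      (Nat.prime_of_mem_primeFactors hq)).2 hpq)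
  obtain ⟨t, ht0⟩ : ∃ t, t = t' % L := ⟨_, rfl⟩
  have ht : ∀ p ∈ L.primeFactors, t ≡ a p [MOD p] := fun p hp =>
    (ht0 ▸ ((Nat.mod_modEq t' L).of_dvd (Nat.dvd_of_mem_primeFactors hp)) : t ≡ t' [MOD p]).trans
      (ht' p hp)
  refine ⟨t, ht0 ▸ Nat.mod_lt _ (Nat.pos_of_ne_zero hL), fun s => ?_⟩
  have hmod : ∀ p ∈ L.primeFactors, ((t + L * s : ℕ) : ℤ) ≡ a p [ZMOD p] := by
    intro p hp
    have h1 : (t : ℤ) ≡ a p [ZMOD p] := (Int.natCast_modEq_iff.2 (ht p hp))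
    have h2 : ((L * s : ℕ) : ℤ) ≡ 0 [ZMOD p] := by
      rw [Int.modEq_zero_iff_dvd]
      exact_mod_cast (Nat.dvd_of_mem_primeFactors hp).mul_right s
    have := h1.add h2
    simpa using this
  constructor
  · refine Nat.Coprime.symm (Nat.coprime_of_dvd ?_)
    intro p hp hpL hpt
    have hp' : p ∈ L.primeFactors := Nat.mem_primeFactors.2 ⟨hp, hpL, hL⟩
    apply (ha p hp').1
    have : (p : ℤ) ∣ ((t + L * s : ℕ) : ℤ) := by exact_mod_cast hpt
    have := ((hmod p hp').dvd_iff).1 this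
    exact_mod_cast this
  · intro u hu
    refine Nat.Coprime.symm (Nat.coprime_of_dvd ?_)
    intro p hp hpL hpt
    have hp' : p ∈ L.primeFactors := Nat.mem_primeFactors.2 ⟨hp, hpL, hL⟩
    apply (ha p hp').2
    have h1 : (p : ℤ) ∣ (u : ℤ) := by exact_mod_cast hpt
    have h2 : (u : ℤ) = n - m * ((t + L * s : ℕ) : ℤ) := by rw [hu]; push_cast; ring
    rw [h2] at h1
    have := (Int.ModEq.sub (Int.ModEq.refl (n : ℤ)) ((hmod p hp').mul_left m))
    exact (this.dvd_iff).1 h1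

theorem TD.large_of_pair {K m : ℕ} (hK : 2 ≤ K) (hm0 : 0 < m)
    (hm : ∀ p, p.Prime → p ∣ K.factorial → p = 2 ∨ ¬ p ∣ m)
    (h1 : TD (Fin K) (Fin m)) (h2 : TD (Fin K) (Fin (m + 1))) :
    ∃ N, ∀ n ≥ N, (m + n) % 2 = 1 → TD (Fin K) (Fin n) := by
  set L := K.factorial with hLdef
  have hL : 0 < L := Nat.factorial_pos K
  refine ⟨(m + 1) * m * (2 * L + 2), fun n hn hpar => ?_⟩
  obtain ⟨r, hrL, ht⟩ := exists_coprime_pair L m n hL.ne' hm hpar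
  set q := n / m with hq
  have hq1 : m * q ≤ n := Nat.mul_div_le n m
  have hq2 : n < m * q + m := by
    have := Nat.lt_mul_div_succ n hm0
    rw [← hq] at this; linarith
  have hqL : (m + 1) * (2 * L + 2) ≤ q := by
    rw [hq, Nat.le_div_iff_mul_le hm0]; nlinarith
  set s := (q - r) / L with hs
  have hs1 : L * s ≤ q - r := Nat.mul_div_le _ _
  have hs2 : q - r < L * s + L := by
    have := Nat.lt_mul_div_succ (q - r) hL
    rw [← hs] at this; linarith
  have hrq : r ≤ q := by nlinarith
  have hs1' : L * s + r ≤ q := by omega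
  have hs2' : q < L * s + r + L := by omega
  have hT1 : m * (r + L * s) ≤ n :=
    calc m * (r + L * s) ≤ m * q := Nat.mul_le_mul_left _ (by omega)
      _ ≤ n := hq1
  have hT2 : n ≤ m * (r + L * s) + (r + L * s) := by
    have h3 : m * q + m ≤ m * (r + L * s) + m * L + m := by nlinarith
    have h4 : (m + 1) * (2 * L + 2) ≤ L * s + r + L := by omega
    nlinarith
  obtain ⟨u, hu⟩ := Nat.exists_eq_add_of_le hT1
  rw [hu]
  refine TD.wilson_nat hK (by omega) h1 h2 (TD.ofCoprime (ht s).1) ?_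
  exact (TD.ofCoprime ((ht s).2 u hu)).map (Fin.castLEEmb (by omega)) (Equiv.refl _)

/-- Chowla, Erdős and Straus: transversal designs of all large orders exist. -/
theorem TD.large (K : ℕ) : ∃ N, ∀ n ≥ N, TD (Fin K) (Fin n) := by
  -- reduce to `2 ≤ K`
  suffices H : ∀ K : ℕ, 2 ≤ K → ∃ N, ∀ n ≥ N, TD (Fin K) (Fin n) by
    obtain ⟨N, hN⟩ := H (K + 2) (by omega)
    exact ⟨N, fun n hn => (hN n hn).map (Fin.castLEEmb (by omega)) (Equiv.refl _)⟩
  clear K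
  intro K hK
  set L := K.factorial with hLdef
  have hL : 0 < L := Nat.factorial_pos K
  -- the exponent `E` is divisible by `p - 1` for all small primes
  have hE : ∀ p, p.Prime → p ∣ L → p ≠ 2 → 2 ^ L ≡ 1 [MOD p] := by
    intro p hp hpL hp2
    have hpK : p ≤ K := (hp.dvd_factorial).1 hpL
    have hd : p - 1 ∣ L := Nat.dvd_factorial (by have := hp.two_le; omega) (by omega)
    obtain ⟨c, hc⟩ := hd
    have hcop : Nat.Coprime 2 p :=
      (Nat.coprime_primes Nat.prime_two hp).2 (Ne.symm hp2)
    have := (Nat.ModEq.pow_totient hcop).pow c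
    rwa [Nat.totient_prime hp, ← pow_mul, ← hc, one_pow] at this
  have hKL : K ≤ L := Nat.self_le_factorial K
  have hK2 : K ≤ 2 ^ L := hKL.trans Nat.lt_two_pow_self.le
  have hK3 : K ≤ 2 ^ (L + 1) := hK2.trans (Nat.pow_le_pow_right (by norm_num) (by omega))
  have hnd : ∀ p, p.Prime → p ∣ L → p ≠ 2 → ¬ p ∣ 2 := by
    intro p hp _ hp2 h
    exact hp2 ((Nat.prime_dvd_prime_iff_eq hp Nat.prime_two).1 h)
  have hev : Even (2 ^ L) := (Nat.even_pow.2 ⟨even_two, hL.ne'⟩)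
  obtain ⟨N1, hN1⟩ := TD.large_of_pair (K := K) (m := 2 ^ L) hK (by positivity)
    (by
      intro p hp hpL
      by_cases h2 : p = 2
      · exact Or.inl h2
      · exact Or.inr fun h => hnd p hp hpL h2 (hp.dvd_of_dvd_pow h))
    (TD.ofTwoPow hL.ne' hK2)
    (by
      refine (TD.ofCoprime (K := K) ?_).map (Fin.castLEEmb (by omega)) (Equiv.refl _)
      refine Nat.Coprime.symm (Nat.coprime_of_dvd ?_)
      intro p hp hpL hpd
      by_cases h2 : p = 2
      · subst h2
        obtain ⟨c, hc⟩ := hev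
        omega
      · have h1 : 2 ^ L + 1 ≡ 1 + 1 [MOD p] := (hE p hp hpL h2).add_right 1
        exact hnd p hp hpL h2 ((h1.dvd_iff (dvd_refl p)).1 hpd))
  have hsub : 2 ^ (L + 1) - 1 + 1 = 2 ^ (L + 1) :=
    Nat.sub_add_cancel (Nat.one_le_two_pow)
  have hodd : (2 ^ (L + 1) - 1) % 2 = 1 := by
    have : 2 ^ (L + 1) = 2 * 2 ^ L := by ring
    have := Nat.one_le_two_pow (n := L)
    omega
  have hcop : ∀ p, p.Prime → p ∣ L → ¬ p ∣ 2 ^ (L + 1) - 1 := by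
    intro p hp hpL hpd
    by_cases h2 : p = 2
    · subst h2
      omega
    · have h1 : 2 ^ (L + 1) - 1 + 1 ≡ 1 + 1 [MOD p] := by
        rw [hsub, pow_succ]
        exact (hE p hp hpL h2).mul_right 2
      have h3 := Nat.ModEq.add_right_cancel' 1 h1
      have := (h3.dvd_iff (dvd_refl p)).1 hpd
      exact hp.one_lt.ne' (Nat.dvd_one.1 this)
  obtain ⟨N2, hN2⟩ := TD.large_of_pair (K := K) (m := 2 ^ (L + 1) - 1) hK (by omega)
    (fun p hp hpL => Or.inr (hcop p hp hpL))
    (by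
      refine (TD.ofCoprime (K := K) ?_).map (Fin.castLEEmb (by omega)) (Equiv.refl _)
      exact Nat.Coprime.symm (Nat.coprime_of_dvd hcop))
    (by rw [hsub]; exact TD.ofTwoPow (by omega) hK3)
  refine ⟨max N1 N2, fun n hn => ?_⟩
  rcases Nat.mod_two_eq_zero_or_one n with h | h
  · exact hN2 n (le_trans (le_max_right _ _) hn) (by omega)
  · refine hN1 n (le_trans (le_max_left _ _) hn) ?_
    obtain ⟨c, hc⟩ := hev
    omega


/-! ### Decompositions -/

/-- The edges of the graph `Γ` (given by a relation, of which only the pairs of distinct elements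
matter) can be partitioned into cliques with sizes in `K`. -/
def Dec {V : Type} (Γ : V → V → Prop) (K : Set ℕ) : Prop :=
  ∃ B : Set (Finset V), (∀ b ∈ B, b.card ∈ K) ∧
    (∀ b ∈ B, ∀ x ∈ b, ∀ y ∈ b, x ≠ y → Γ x y) ∧
    ∀ x y, x ≠ y → Γ x y → ∃! b, b ∈ B ∧ x ∈ b ∧ y ∈ b

theorem Dec.glue {V ι : Type} {W : ι → Type} {K : Set ℕ} (f : ∀ i, W i → V)
    (hf : ∀ i, Function.Injective (f i)) {Γ : V → V → Prop} {Δ : ∀ i, W i → W i → Prop}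
    (hΔ : ∀ i, Dec (Δ i) K)
    (hsub : ∀ i a b, a ≠ b → Δ i a b → Γ (f i a) (f i b))
    (hcov : ∀ x y, x ≠ y → Γ x y → ∃ i a b, f i a = x ∧ f i b = y ∧ Δ i a b)
    (huniq : ∀ i j a b a' b', a ≠ b → f i a = f j a' → f i b = f j b' → Δ i a b → Δ j a' b' →
      i = j) : Dec Γ K := by
  classical
  choose B hB1 hB2 hB3 using hΔ
  refine ⟨{c | ∃ i, ∃ b ∈ B i, c = b.map ⟨f i, hf i⟩}, ?_, ?_, ?_⟩
  · rintro c ⟨i, b, hb, rfl⟩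
    rw [Finset.card_map]
    exact hB1 i b hb
  · rintro c ⟨i, b, hb, rfl⟩ x hx y hy hxy
    simp only [Finset.mem_map, Function.Embedding.coeFn_mk] at hx hy
    obtain ⟨a, ha, rfl⟩ := hx
    obtain ⟨a', ha', rfl⟩ := hy
    have hne : a ≠ a' := fun h => hxy (h ▸ rfl)
    exact hsub i a a' hne (hB2 i b hb a ha a' ha' hne)
  · intro x y hxy hΓ
    obtain ⟨i, a, a', rfl, rfl, hd⟩ := hcov x y hxy hΓ
    have hne : a ≠ a' := fun h => hxy (h ▸ rfl)
    obtain ⟨b, ⟨hb, hab, hab'⟩, hbu⟩ := hB3 i a a' hne hd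
    refine ⟨b.map ⟨f i, hf i⟩, ⟨⟨i, b, hb, rfl⟩, ?_, ?_⟩, ?_⟩
    · exact Finset.mem_map_of_mem _ hab
    · exact Finset.mem_map_of_mem _ hab'
    · rintro c ⟨⟨j, b', hb', rfl⟩, hx, hy⟩
      simp only [Finset.mem_map, Function.Embedding.coeFn_mk] at hx hy
      obtain ⟨d, hdb, hd1⟩ := hx
      obtain ⟨d', hdb', hd2⟩ := hy
      have hne' : d ≠ d' := by
        rintro rfl
        exact hxy (hd1.symm.trans hd2)
      have hij := huniq i j a a' d d' hne hd1.symm hd2.symm hd (hB2 j b' hb' d hdb d' hdb' hne')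
      subst hij
      have e1 := hf i hd1
      have e2 := hf i hd2
      subst e1 e2
      rw [hbu b' ⟨hb', hdb, hdb'⟩]

theorem Dec.complete (W : Type) [Fintype W] {K : Set ℕ} (h : Fintype.card W ∈ K) :
    Dec (fun _ _ : W => True) K := by
  refine ⟨{Finset.univ}, ?_, ?_, ?_⟩
  · rintro b rfl
    simpa using h
  · intros; trivial
  · intro x y _ _
    exact ⟨Finset.univ, by simp, fun b hb => hb.1⟩

theorem Dec.equiv {V V' : Type} (e : V ≃ V') {Γ : V → V → Prop} {Γ' : V' → V' → Prop} {K : Set ℕ}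
    (he : ∀ x y, Γ x y ↔ Γ' (e x) (e y)) (h : Dec Γ K) : Dec Γ' K := by
  refine Dec.glue (ι := Unit) (W := fun _ => V) (fun _ => e) (fun _ => e.injective)
    (Δ := fun _ => Γ) (fun _ => h) (fun _ a b _ => (he a b).1) ?_ (fun _ _ _ _ _ _ _ _ _ _ _ => rfl)
  intro x y _ hxy
  exact ⟨(), e.symm x, e.symm y, by simp, by simp, (he _ _).2 (by simpa using hxy)⟩

/-- A transversal design as a decomposition. -/
theorem TD.dec {ι S : Type} [Fintype ι] (h : TD ι S) :
    Dec (fun x y : ι × S => x.1 ≠ y.1) {Fintype.card ι} := by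
  obtain ⟨P, F, hF⟩ := h
  refine Dec.glue (ι := P) (W := fun _ => ι) (fun p i => (i, F p i))
    (fun p i j h => (Prod.mk.inj h).1) (Δ := fun _ _ _ => True)
    (fun _ => Dec.complete ι (by simp)) (fun p a b h _ => h) ?_ ?_
  · rintro ⟨i, x⟩ ⟨j, y⟩ _ hij
    obtain ⟨p, hp, -⟩ := hF i j hij x y
    exact ⟨p, i, j, by simp [hp.1], by simp [hp.2], trivial⟩
  · intro p q a b a' b' hne h1 h2 _ _
    simp only [Prod.mk.injEq] at h1 h2
    obtain ⟨rfl, h1⟩ := h1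
    obtain ⟨rfl, h2⟩ := h2
    exact (hF a b hne _ _).unique ⟨h1, h2⟩ ⟨rfl, rfl⟩

/-- Group divisible designs with block size `k` and groups `{w} × Fin (k - 1)`. -/
def RT (k : ℕ) (W : Type) : Prop :=
  Dec (fun x y : W × Fin (k - 1) => x.1 ≠ y.1) {k}

theorem RT.equiv {k : ℕ} {W W' : Type} (e : W ≃ W') (h : RT k W) : RT k W' :=
  Dec.equiv (e.prodCongr (Equiv.refl _)) (by simp) h

theorem RT.glue {k : ℕ} {V ι : Type} {W : ι → Type} (f : ∀ i, W i → V)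
    (hf : ∀ i, Function.Injective (f i)) (hW : ∀ i, RT k (W i))
    (hcov : ∀ x y, x ≠ y → ∃ i a b, f i a = x ∧ f i b = y)
    (huniq : ∀ i j a b a' b', a ≠ b → f i a = f j a' → f i b = f j b' → i = j) : RT k V := by
  refine Dec.glue (W := fun i => W i × Fin (k - 1)) (fun i x => (f i x.1, x.2)) ?_ hW ?_ ?_ ?_
  · rintro i ⟨a, c⟩ ⟨b, d⟩ h
    simp only [Prod.mk.injEq] at h
    exact Prod.ext (hf i h.1) h.2
  · rintro i a b _ h h'
    exact h (hf i h')
  · rintro ⟨x, c⟩ ⟨y, d⟩ _ hxy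
    obtain ⟨i, a, b, rfl, rfl⟩ := hcov x y hxy
    exact ⟨i, (a, c), (b, d), rfl, rfl, fun h => hxy (congrArg (f i) h)⟩
  · rintro i j ⟨a, c⟩ ⟨b, d⟩ ⟨a', c'⟩ ⟨b', d'⟩ _ h1 h2 hab _
    simp only [Prod.mk.injEq] at h1 h2
    exact huniq i j a b a' b' hab h1.1 h2.1

/-- Truncated transversal designs. -/
theorem RT.truncated {k a m x : ℕ} (hxm : x ≤ m) (hTD : TD (Fin (a + 1)) (Fin m))
    (ha : RT k (Fin a)) (ha1 : RT k (Fin (a + 1))) (hm : RT k (Fin m)) (hx : RT k (Fin x)) :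
    RT k (Fin (a * m + x)) := by
  classical
  have e3 : Option (Fin a) ≃ Fin (a + 1) := Fintype.equivOfCardEq (by simp)
  obtain ⟨P, F, hF⟩ := hTD.map e3.toEmbedding (Equiv.refl _)
  suffices H : RT k ((Fin a × Fin m) ⊕ Fin x) from H.equiv (Fintype.equivOfCardEq (by simp))
  let c : Fin x → Fin m := Fin.castLE hxm
  have hc : Function.Injective c := Fin.castLE_injective hxm
  -- the pieces: truncated blocks, full groups, and the truncated group
  let W : P ⊕ Option (Fin a) → Type := fun i =>
    match i with
    | Sum.inl p => Fin a ⊕ {w : Fin x // c w = F p none}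
    | Sum.inr (some _) => Fin m
    | Sum.inr none => Fin x
  let f : ∀ i, W i → (Fin a × Fin m) ⊕ Fin x := fun i =>
    match i with
    | Sum.inl p => Sum.map (fun i => (i, F p (some i))) (fun w => w.1)
    | Sum.inr (some i) => fun y => Sum.inl (i, y)
    | Sum.inr none => Sum.inr
  have f1 : ∀ p, f (Sum.inl p) = Sum.map (fun i => (i, F p (some i))) (fun w => w.1) :=
    fun _ => rfl
  refine RT.glue f ?_ ?_ ?_ ?_
  · rintro (p | _ | i)
    · exact Sum.map_injective.2 ⟨fun i j h => (Prod.mk.inj h).1, Subtype.val_injective⟩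
    · exact Sum.inr_injective
    · intro y z h
      exact (Prod.mk.inj (Sum.inl.inj h)).2
  · rintro (p | _ | i)
    · by_cases h : ∃ w, c w = F p none
      · obtain ⟨w, hw⟩ := h
        let u : Unique {w : Fin x // c w = F p none} :=
          ⟨⟨⟨w, hw⟩⟩, fun v => Subtype.ext (hc (v.2.trans hw.symm))⟩
        show RT k (Fin a ⊕ {w : Fin x // c w = F p none})
        exact ha1.equiv (Fintype.equivOfCardEq (by simp))
      · have : IsEmpty {w : Fin x // c w = F p none} := ⟨fun v => h ⟨v.1, v.2⟩⟩
        exact ha.equiv (Equiv.sumEmpty _ _).symm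
    · exact hx
    · exact hm
  · rintro (⟨i, y⟩ | w) (⟨j, z⟩ | w') hne
    · by_cases hij : i = j
      · subst hij
        exact ⟨Sum.inr (some i), y, z, rfl, rfl⟩
      · obtain ⟨p, hp, -⟩ := hF (some i) (some j) (by simpa using hij) y z
        exact ⟨Sum.inl p, Sum.inl i, Sum.inl j, by simp [f1, hp.1], by simp [f1, hp.2]⟩
    · obtain ⟨p, hp, -⟩ := hF (some i) none (by simp) y (c w')
      exact ⟨Sum.inl p, Sum.inl i, Sum.inr ⟨w', hp.2.symm⟩, by simp [f1, hp.1], by simp [f1]⟩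
    · obtain ⟨p, hp, -⟩ := hF (some j) none (by simp) z (c w)
      exact ⟨Sum.inl p, Sum.inr ⟨w, hp.2.symm⟩, Sum.inl j, by simp [f1], by simp [f1, hp.1]⟩
    · exact ⟨Sum.inr none, w, w', rfl, rfl⟩
  · rintro (p | _ | i) (q | _ | j) u v u' v' hne h1 h2
    · congr 1
      rcases u with i | ⟨w, hw⟩ <;> rcases v with j | ⟨z, hz⟩ <;>
        rcases u' with i' | ⟨w', hw'⟩ <;> rcases v' with j' | ⟨z', hz'⟩ <;>
        simp [f1] at h1 h2 hne
      · obtain ⟨rfl, h1⟩ := h1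
        obtain ⟨rfl, h2⟩ := h2
        exact (hF (some i) (some j) (fun h => hne (congrArg Sum.inl (Option.some.inj h))) _ _).unique ⟨h1, h2⟩ ⟨rfl, rfl⟩
      · obtain ⟨rfl, h1⟩ := h1
        subst h2
        exact (hF (some i) none (by simp) _ _).unique ⟨h1, rfl⟩ ⟨rfl, by rw [← hz, ← hz']⟩
      · obtain ⟨rfl, h2⟩ := h2
        subst h1
        exact (hF (some j) none (by simp) _ _).unique ⟨h2, rfl⟩ ⟨rfl, by rw [← hw, ← hw']⟩
      · subst h1 h2
        exact absurd (congrArg Sum.inr (Subtype.ext (hc (hw.trans hz.symm)))) hne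
    · exfalso
      rcases u with i | ⟨w, hw⟩ <;> rcases v with j | ⟨z, hz⟩ <;> simp [f] at h1 h2 hne
      exact hne (congrArg Sum.inr (Subtype.ext (hc (hw.trans hz.symm))))
    · exfalso
      rcases u with i | ⟨w, hw⟩ <;> rcases v with j | ⟨z, hz⟩ <;> simp [f] at h1 h2 hne
      exact hne (congrArg Sum.inl (h1.1.trans h2.1.symm))
    · exfalso
      rcases u' with i | ⟨w, hw⟩ <;> rcases v' with j | ⟨z, hz⟩ <;> simp [f] at h1 h2 hne
      subst h1 h2
      exact hne (hc (hw.trans hz.symm))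
    · rfl
    · simp [f] at h1
    · exfalso
      rcases u' with i' | ⟨w, hw⟩ <;> rcases v' with j | ⟨z, hz⟩ <;> simp [f] at h1 h2 hne
      obtain ⟨rfl, rfl⟩ := h1
      obtain ⟨rfl, rfl⟩ := h2
      exact hne rfl
    · simp [f] at h1
    · simp only [f, Sum.inl.injEq, Prod.mk.injEq] at h1
      rw [h1.1]

theorem RT.mul_k {k r : ℕ} (hTD : TD (Fin k) (Fin r × Fin (k - 1))) (h : RT k (Fin r)) :
    RT k (Fin (k * r)) := by
  suffices H : RT k (Fin k × Fin r) from H.equiv (Fintype.equivOfCardEq (by simp))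
  have hT := hTD.dec
  rw [Fintype.card_fin] at hT
  let W : Option (Fin k) → Type := fun i =>
    match i with
    | none => Fin k × (Fin r × Fin (k - 1))
    | some _ => Fin r × Fin (k - 1)
  let f : ∀ i, W i → (Fin k × Fin r) × Fin (k - 1) := fun i =>
    match i with
    | none => fun x => ((x.1, x.2.1), x.2.2)
    | some i => fun x => ((i, x.1), x.2)
  let Δ : ∀ i, W i → W i → Prop := fun i =>
    match i with
    | none => fun x y => x.1 ≠ y.1
    | some i => fun x y => x.1 ≠ y.1
  refine Dec.glue (W := W) f ?_ (Δ := Δ) ?_ ?_ ?_ ?_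
  · rintro (_ | i)
    · rintro ⟨a, b, c⟩ ⟨a', b', c'⟩ h
      simp [f] at h
      simp [h]
    · rintro ⟨b, c⟩ ⟨b', c'⟩ h
      simp [f] at h
      simp [h]
  · rintro (_ | i)
    · exact hT
    · exact h
  · rintro (_ | i)
    · rintro ⟨a, b, c⟩ ⟨a', b', c'⟩ _ h
      simp only [Δ] at h
      simp [f, h]
    · rintro ⟨b, c⟩ ⟨b', c'⟩ _ h
      simp only [Δ] at h
      simp [f, h]
  · rintro ⟨⟨a, b⟩, c⟩ ⟨⟨a', b'⟩, c'⟩ _ h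
    by_cases ha : a = a'
    · subst ha
      exact ⟨some a, (b, c), (b', c'), rfl, rfl, fun hb => h (by simp at hb; rw [hb])⟩
    · exact ⟨none, (a, b, c), (a', b', c'), rfl, rfl, ha⟩
  · rintro (_ | i) (_ | j) u v u' v' hne h1 h2 hd hd'
    · rfl
    · exfalso
      obtain ⟨a, b, c⟩ := u
      obtain ⟨a', b', c'⟩ := v
      simp [f] at h1 h2
      simp only [Δ] at hd
      exact hd (h1.1.1.trans h2.1.1.symm)
    · exfalso
      obtain ⟨a, b, c⟩ := u'
      obtain ⟨a', b', c'⟩ := v'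
      simp [f] at h1 h2
      simp only [Δ] at hd'
      exact hd' (h1.1.1.symm.trans h2.1.1)
    · simp [f] at h1
      rw [h1.1.1]

/-- Adding a point at infinity. -/
theorem RT.add_point {k : ℕ} (hk : 0 < k) {W : Type} (h : RT k W) :
    Dec (fun _ _ : Option (W × Fin (k - 1)) => True) {k} := by
  let T : Option W → Type := fun i =>
    match i with
    | none => W × Fin (k - 1)
    | some _ => Option (Fin (k - 1))
  let f : ∀ i, T i → Option (W × Fin (k - 1)) := fun i =>
    match i with
    | none => fun x => some x
    | some i => Option.map (fun x => (i, x))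
  let Δ : ∀ i, T i → T i → Prop := fun i =>
    match i with
    | none => fun x y => x.1 ≠ y.1
    | some i => fun x y => True
  refine Dec.glue (W := T) f ?_ (Δ := Δ) ?_ ?_ ?_ ?_
  · rintro (_ | i)
    · exact Option.some_injective _
    · exact Option.map_injective (fun x y h => (Prod.mk.inj h).2)
  · rintro (_ | i)
    · exact h
    · exact Dec.complete (Option (Fin (k - 1))) (by simp; omega)
  · intros; trivial
  · rintro (_ | ⟨w, c⟩) (_ | ⟨w', c'⟩) hne -
    · exact absurd rfl hne
    · exact ⟨some w', none, some c', rfl, rfl, trivial⟩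
    · exact ⟨some w, some c, none, rfl, rfl, trivial⟩
    · by_cases hw : w = w'
      · subst hw
        exact ⟨some w, some c, some c', rfl, rfl, trivial⟩
      · exact ⟨none, (w, c), (w', c'), rfl, rfl, hw⟩
  · rintro (_ | i) (_ | j) u v u' v' hne h1 h2 hd hd'
    · rfl
    · exfalso
      obtain ⟨a, b⟩ := u
      obtain ⟨a', b'⟩ := v
      rcases u' with _ | u' <;> rcases v' with _ | v' <;> simp [f] at h1 h2
      simp only [Δ] at hd
      exact hd (h1.1.trans h2.1.symm)
    · exfalso
      obtain ⟨a, b⟩ := u'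
      obtain ⟨a', b'⟩ := v'
      rcases u with _ | u <;> rcases v with _ | v <;> simp [f] at h1 h2
      simp only [Δ] at hd'
      exact hd' (h1.1.symm.trans h2.1)
    · rcases u with _ | u <;> rcases v with _ | v <;> rcases u' with _ | u' <;>
        rcases v' with _ | v' <;> simp [f] at h1 h2 hne ⊢
      · exact h2.1
      · exact h1.1
      · exact h1.1

theorem Dec.mul_k {k : ℕ} {Z : Type} (hTD : TD (Fin k) Z)
    (h : Dec (fun _ _ : Z => True) {k}) : Dec (fun _ _ : Fin k × Z => True) {k} := by
  have hT := hTD.dec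
  rw [Fintype.card_fin] at hT
  let W : Option (Fin k) → Type := fun i =>
    match i with
    | none => Fin k × Z
    | some _ => Z
  let f : ∀ i, W i → Fin k × Z := fun i =>
    match i with
    | none => fun x => x
    | some i => fun x => (i, x)
  let Δ : ∀ i, W i → W i → Prop := fun i =>
    match i with
    | none => fun x y => x.1 ≠ y.1
    | some i => fun x y => True
  refine Dec.glue (W := W) f ?_ (Δ := Δ) ?_ ?_ ?_ ?_
  · rintro (_ | i)
    · exact Function.injective_id
    · exact fun x y h => (Prod.mk.inj h).2
  · rintro (_ | i)
    · exact hT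
    · exact h
  · intros; trivial
  · rintro ⟨a, b⟩ ⟨a', b'⟩ _ h
    by_cases ha : a = a'
    · subst ha
      exact ⟨some a, b, b', rfl, rfl, trivial⟩
    · exact ⟨none, (a, b), (a', b'), rfl, rfl, ha⟩
  · rintro (_ | i) (_ | j) u v u' v' hne h1 h2 hd hd'
    · rfl
    · exfalso
      simp only [f] at h1 h2
      simp only [Δ] at hd
      subst h1 h2
      exact hd rfl
    · exfalso
      simp only [f] at h1 h2
      simp only [Δ] at hd'
      subst h1 h2
      exact hd' rfl
    · simp [f] at h1
      rw [h1.1]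

/-- Deleting a point. -/
theorem Dec.delete_point {k r : ℕ} (hk : 2 ≤ k) {V : Type} [Fintype V]
    (hV : Fintype.card V = (k - 1) * r + 1) (h : Dec (fun _ _ : V => True) {k}) :
    RT k (Fin r) := by
  classical
  obtain ⟨B, hB1, -, hB3⟩ := h
  have hne : Nonempty V := Fintype.card_pos_iff.1 (by omega)
  obtain ⟨o⟩ := hne
  let W : Type := {b : Finset V // b ∈ B ∧ o ∈ b}
  have : Fintype W := Fintype.ofFinite W
  have hcard : ∀ w : W, Fintype.card {x // x ∈ w.1.erase o} = Fintype.card (Fin (k - 1)) := by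
    intro w
    have := hB1 w.1 w.2.1
    simp only [Set.mem_singleton_iff] at this
    rw [Fintype.card_coe, Finset.card_erase_of_mem w.2.2, this, Fintype.card_fin]
  choose β hβ hβu using fun x : {x : V // x ≠ o} => hB3 o x.1 x.2.symm trivial
  simp only at hβu hβ
  let wo : {x : V // x ≠ o} → W := fun x => ⟨β x, (hβ x).1, (hβ x).2.1⟩
  let e1 : (Σ w : W, {x // x ∈ w.1.erase o}) ≃ {x : V // x ≠ o} :=
    { toFun := fun s => ⟨s.2.1, Finset.ne_of_mem_erase s.2.2⟩
      invFun := fun x => ⟨wo x, ⟨x.1, Finset.mem_erase.2 ⟨x.2, (hβ x).2.2⟩⟩⟩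
      left_inv := by
        rintro ⟨⟨w, hw, how⟩, ⟨x, hx⟩⟩
        have hxo : x ≠ o := Finset.ne_of_mem_erase hx
        have hw' : w = β ⟨x, hxo⟩ := hβu ⟨x, hxo⟩ w ⟨hw, how, Finset.mem_of_mem_erase hx⟩
        subst hw'
        rfl
      right_inv := fun x => rfl }
  let e2 : (Σ w : W, {x // x ∈ w.1.erase o}) ≃ W × Fin (k - 1) :=
    (Equiv.sigmaCongrRight fun w => Fintype.equivOfCardEq (hcard w)).trans
      (Equiv.sigmaEquivProd W _)
  have hWr : Fintype.card W = r := by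
    have h1 := Fintype.card_congr (e1.symm.trans e2)
    rw [Fintype.card_prod, Fintype.card_fin, Fintype.card_subtype_compl,
      Fintype.card_subtype_eq, hV] at h1
    simp only [Nat.add_sub_cancel] at h1
    rw [mul_comm] at h1
    exact (Nat.eq_of_mul_eq_mul_right (by omega) h1).symm
  suffices H : RT k W from H.equiv (Fintype.equivOfCardEq (by simp [hWr]))
  let ve : {x : V // x ≠ o} ↪ V := Function.Embedding.subtype _
  have hY : Dec (fun x y : {x : V // x ≠ o} => wo x ≠ wo y) {k} := by
    refine ⟨{b | b.map ve ∈ B}, ?_, ?_, ?_⟩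
    · intro b hb
      rw [← Finset.card_map ve]
      exact hB1 _ hb
    · intro b hb x hx y hy hxy hw
      have hw' : β x = β y := congrArg Subtype.val hw
      have hne : x.1 ≠ y.1 := fun h => hxy (Subtype.ext h)
      have e := (hB3 x.1 y.1 hne trivial).unique
        ⟨hb, Finset.mem_map_of_mem ve hx, Finset.mem_map_of_mem ve hy⟩
        ⟨(hβ x).1, (hβ x).2.2, hw' ▸ (hβ y).2.2⟩
      have ho : o ∈ b.map ve := e ▸ (hβ x).2.1
      rw [Finset.mem_map] at ho
      obtain ⟨z, -, hz⟩ := ho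
      exact z.2 hz
    · intro x y hxy hw
      have hne : x.1 ≠ y.1 := fun h => hxy (Subtype.ext h)
      obtain ⟨b, ⟨hb, hxb, hyb⟩, hbu⟩ := hB3 x.1 y.1 hne trivial
      have hob : o ∉ b := by
        intro hob
        apply hw
        have h1 := hβu x b ⟨hb, hob, hxb⟩
        have h2 := hβu y b ⟨hb, hob, hyb⟩
        exact Subtype.ext (h1.symm.trans h2)
      have hmap : (b.subtype (fun x => x ≠ o)).map ve = b := by
        rw [Finset.subtype_map]
        exact Finset.filter_true_of_mem fun z hz h => hob (h ▸ hz)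
      refine ⟨b.subtype (fun x => x ≠ o), ⟨?_, ?_, ?_⟩, ?_⟩
      · simpa only [Set.mem_ofPred_eq, hmap] using hb
      · simpa using hxb
      · simpa using hyb
      · rintro c ⟨hc, hxc, hyc⟩
        apply Finset.map_injective ve
        rw [hmap]
        exact hbu _ ⟨hc, Finset.mem_map_of_mem ve hxc, Finset.mem_map_of_mem ve hyc⟩
  exact Dec.equiv (e1.symm.trans e2) (fun x y => Iff.rfl) hY

theorem RT.mul_k_add_one {k r : ℕ} (hk : 2 ≤ k)
    (hTD : TD (Fin k) (Option (Fin r × Fin (k - 1)))) (h : RT k (Fin r)) :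
    RT k (Fin (k * r + 1)) := by
  refine Dec.delete_point hk ?_ (Dec.mul_k hTD (h.add_point (by omega)))
  obtain ⟨j, rfl⟩ : ∃ j, k = j + 1 := ⟨k - 1, by omega⟩
  simp
  ring


/-! ### Closure of sets of integers -/

/-- `c` has `e` digits in base `k`, all at most `j`. -/
def Dg (k j : ℕ) : ℕ → ℕ → Prop
  | 0, c => c = 0
  | e + 1, c => ∃ c' d, Dg k j e c' ∧ d ≤ j ∧ c = k * c' + d

theorem Dg.split {k j : ℕ} : ∀ {e c : ℕ}, Dg k (j + 1) e c →
    ∃ c' c'', Dg k j e c' ∧ Dg k 1 e c'' ∧ c = c' + c''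
  | 0, c, h => ⟨0, 0, rfl, rfl, h⟩
  | e + 1, c, h => by
    obtain ⟨b, d, hb, hd, rfl⟩ := h
    obtain ⟨b', b'', h1, h2, rfl⟩ := Dg.split hb
    by_cases hdj : d ≤ j
    · exact ⟨k * b' + d, k * b'' + 0, ⟨b', d, h1, hdj, rfl⟩, ⟨b'', 0, h2, by omega, rfl⟩, by ring⟩
    · obtain rfl : d = j + 1 := by omega
      exact ⟨k * b' + j, k * b'' + 1, ⟨b', j, h1, le_rfl, rfl⟩, ⟨b'', 1, h2, le_rfl, rfl⟩, by ring⟩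

theorem Dg.full {k : ℕ} (hk : 2 ≤ k) : ∀ {e c : ℕ}, c < k ^ e → Dg k (k - 1) e c
  | 0, c, h => by
    simp at h
    exact h
  | e + 1, c, h => by
    refine ⟨c / k, c % k, Dg.full hk ?_, ?_, (Nat.div_add_mod c k).symm⟩
    · rw [Nat.div_lt_iff_lt_mul (by omega)]
      rwa [pow_succ] at h
    · have := Nat.mod_lt c (show 0 < k by omega)
      omega

theorem Dg.bound {k j : ℕ} (hk : 2 ≤ k) : ∀ {e c : ℕ}, Dg k j e c → c + j ≤ j * k ^ e
  | 0, c, h => by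
    have : c = 0 := h
    simp [this]
  | e + 1, c, h => by
    obtain ⟨b, d, hb, hd, rfl⟩ := h
    have := Dg.bound hk hb
    rw [pow_succ]
    nlinarith

section closure

variable {k : ℕ} {R : ℕ → Prop}

theorem digits_one (hk : 2 ≤ k) {N0 : ℕ} (h1 : ∀ r ≥ N0, R r → R (k * r) ∧ R (k * r + 1))
    {r : ℕ} (hr : N0 ≤ r) (hR : R r) : ∀ {e c : ℕ}, Dg k 1 e c → R (k ^ e * r + c)
  | 0, c, h => by
    have : c = 0 := h
    simpa [this] using hR
  | e + 1, c, h => by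
    obtain ⟨b, d, hb, hd, rfl⟩ := h
    have h3 := digits_one hk h1 hr hR hb
    have h4 : N0 ≤ k ^ e * r + b := by
      have : 1 ≤ k ^ e := Nat.one_le_pow _ _ (by omega)
      nlinarith
    have h5 := h1 _ h4 h3
    have e1 : k ^ (e + 1) * r + (k * b + d) = k * (k ^ e * r + b) + d := by ring
    rw [e1]
    interval_cases d
    · exact h5.1
    · exact h5.2

theorem digits_run (hk : 2 ≤ k) {N0 : ℕ} (h1 : ∀ r ≥ N0, R r → R (k * r) ∧ R (k * r + 1))
    {a Na : ℕ} (h2 : ∀ m ≥ Na, ∀ x ≤ m, R m → R x → R (a * m + x))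
    (h3 : ∀ N, ∃ r ≥ N, R r) {x : ℕ} (hx : R x) (j : ℕ) :
    ∃ A, ∀ e c, Dg k j e c → R (a * (A * k ^ e + c) + x) := by
  induction j with
  | zero =>
    obtain ⟨r, hr, hR⟩ := h3 (N0 + Na + x)
    refine ⟨r, fun e c hc => ?_⟩
    have hc0 : c = 0 := by
      have := hc.bound hk
      omega
    subst hc0
    have hd : Dg k 1 e 0 := by
      clear hc
      induction e with
      | zero => rfl
      | succ e ih => exact ⟨0, 0, ih, by omega, by simp⟩
    have h4 := digits_one hk h1 (by omega) hR hd
    have : 1 ≤ k ^ e := Nat.one_le_pow _ _ (by omega)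
    have h5 : r ≤ k ^ e * r := by nlinarith
    rw [mul_comm r]
    exact h2 _ (by omega) _ (by omega) h4 hx
  | succ j ih =>
    obtain ⟨A, hA⟩ := ih
    obtain ⟨r, hr, hR⟩ := h3 (N0 + Na + (a * (A + j) + x))
    refine ⟨A + r, fun e c hc => ?_⟩
    obtain ⟨c', c'', hc', hc'', rfl⟩ := hc.split
    have h4 := digits_one hk h1 (by omega) hR hc''
    have h5 := hA e c' hc'
    have hp : 1 ≤ k ^ e := Nat.one_le_pow _ _ (by omega)
    have h6 := hc'.bound hk
    have h7 : k ^ e * (N0 + Na + (a * (A + j) + x)) ≤ k ^ e * r := Nat.mul_le_mul_left _ hr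
    have h8 : Na ≤ k ^ e * r := by nlinarith
    have h9 : a * (A * k ^ e + c') + x ≤ k ^ e * (a * (A + j) + x) := by
      have : a * (A * k ^ e + c') ≤ a * (A * k ^ e + j * k ^ e) := by gcongr; omega
      nlinarith
    have h10 : a * (A * k ^ e + c') + x ≤ k ^ e * r := by nlinarith
    have h11 := h2 (k ^ e * r + c'') (by omega) _ (by omega) h4 h5
    convert h11 using 1
    ring

/-- Runs of ratio `ρ` in the class `c` modulo `a`. -/
def HasRun (k a : ℕ) (R : ℕ → Prop) (c : ℕ) (ρ : ℝ) : Prop :=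
  ∃ l : ℝ, 0 < l ∧ ∀ᶠ e : ℕ in Filter.atTop, ∀ y : ℕ, y ≡ c [MOD a] →
    l * (k : ℝ) ^ e ≤ y → (y : ℝ) ≤ ρ * l * (k : ℝ) ^ e → R y

theorem tendsto_pow_nat (hk : 2 ≤ k) :
    Filter.Tendsto (fun e : ℕ => (k : ℝ) ^ e) Filter.atTop Filter.atTop :=
  tendsto_pow_atTop_atTop_of_one_lt (by exact_mod_cast (by omega : 1 < k))

theorem HasRun.base (hk : 2 ≤ k) {N0 : ℕ} (h1 : ∀ r ≥ N0, R r → R (k * r) ∧ R (k * r + 1))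
    {a Na : ℕ} (ha : 2 ≤ a) (h2 : ∀ m ≥ Na, ∀ x ≤ m, R m → R x → R (a * m + x))
    (h3 : ∀ N, ∃ r ≥ N, R r) {x : ℕ} (hx : R x) (hx0 : 0 < x) :
    ∃ ρ : ℝ, 1 < ρ ∧ HasRun k a R x ρ := by
  obtain ⟨A, hA⟩ := digits_run hk h1 h2 h3 hx (k - 1)
  have hl : (0 : ℝ) < a * A + 1 := by positivity
  refine ⟨(a * (A + 1)) / (a * A + 1), ?_, a * A + 1, hl, ?_⟩
  · rw [lt_div_iff₀ hl]
    have : (2 : ℝ) ≤ a := by exact_mod_cast ha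
    linarith
  · filter_upwards [(tendsto_pow_nat hk).eventually_ge_atTop (x : ℝ)] with e he y hy hl1 hl2
    rw [div_mul_cancel₀ _ hl.ne'] at hl2
    have he' : x ≤ k ^ e := by exact_mod_cast he
    have hl1' : (a * A + 1) * k ^ e ≤ y := by exact_mod_cast hl1
    have hl2' : y ≤ a * (A + 1) * k ^ e := by exact_mod_cast hl2
    have h4 : a * (A * k ^ e) + x ≤ y := by nlinarith
    obtain ⟨q, hq⟩ := (Nat.modEq_iff_dvd' (by omega : a * (A * k ^ e) + x ≤ y)).1
      (show a * (A * k ^ e) + x ≡ y [MOD a] by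
        refine Nat.ModEq.trans ?_ hy.symm
        simp [Nat.ModEq])
    have h5 : y = a * (A * k ^ e + q) + x := by
      rw [mul_add]
      omega
    rw [h5]
    refine hA e q (Dg.full hk ?_)
    by_contra hcon
    push Not at hcon
    have : a * k ^ e ≤ a * q := Nat.mul_le_mul_left _ hcon
    nlinarith

theorem exists_class_le {a c t : ℕ} (ha : 0 < a) (h : c ≤ t) :
    ∃ m, m ≡ c [MOD a] ∧ m ≤ t ∧ t < m + a := by
  refine ⟨c + a * ((t - c) / a), by simp [Nat.ModEq], ?_, ?_⟩
  · have := Nat.mul_div_le (t - c) a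
    omega
  · have := Nat.lt_mul_div_succ (t - c) ha
    rw [mul_add] at this
    omega

theorem HasRun.step (hk : 2 ≤ k) {a : ℕ} (ha : 2 ≤ a)
    (h2 : ∀ b, ∃ N, ∀ m ≥ N, ∀ x ≤ m, R b → R (b + 1) → R m → R x → R (b * m + x))
    {c : ℕ} {ρ σ : ℝ} (hρ : 1 < ρ) (hσ : 1 < σ) (h : HasRun k a R c ρ) {p q : ℕ} (hp : 1 < (ρ - 1) * p)
    (hpq : σ * p < q) (hR : ∀ i, p ≤ i → i ≤ q → R (k * (a * i)) ∧ R (k * (a * i) + 1)) :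
    HasRun k a R c (σ * ρ) := by
  obtain ⟨l, hl, hrun⟩ := h
  have hk0 : (0 : ℝ) < k := by exact_mod_cast (by omega : 0 < k)
  have ha0 : (0 : ℝ) < a := by exact_mod_cast (by omega : 0 < a)
  have hp0 : (0 : ℝ) < p := by
    by_contra hcon
    have : (p : ℝ) = 0 := le_antisymm (not_lt.1 hcon) (Nat.cast_nonneg p)
    rw [this] at hp
    linarith
  have hpq' : (p : ℝ) < q := by nlinarith
  have hq0 : (0 : ℝ) < q := hp0.trans hpq'
  have hT := tendsto_pow_nat hk
  -- the window for the small summand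
  obtain ⟨e0, he0, he0'⟩ := ((hrun.and ((hT.const_mul_atTop
    (show 0 < (ρ - 1) * l by nlinarith)).eventually_ge_atTop
    ((k : ℝ) * (a * q) * a + 1)))).exists
  set X0 : ℕ := ⌈l * (k : ℝ) ^ e0⌉₊ with hX0
  have hX0a : l * (k : ℝ) ^ e0 ≤ X0 := Nat.le_ceil _
  have hX0b : (X0 : ℝ) < l * (k : ℝ) ^ e0 + 1 := Nat.ceil_lt_add_one (by positivity)
  have hsmall : ∀ x : ℕ, x ≡ c [MOD a] → X0 ≤ x → x ≤ X0 + k * (a * q) * a → R x := by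
    intro x hxc hx1 hx2
    have hx1' : (X0 : ℝ) ≤ x := by exact_mod_cast hx1
    have hx2' : (x : ℝ) ≤ X0 + k * (a * q) * a := by exact_mod_cast hx2
    refine he0 x hxc (by linarith) ?_
    nlinarith
  -- uniform bound from `h2`
  choose NN hNN using h2
  let N : ℕ := ∑ i ∈ Finset.range (q + 1), NN (k * (a * i))
  have hN : ∀ i ≤ q, NN (k * (a * i)) ≤ N := fun i hi =>
    Finset.single_le_sum (f := fun i => NN (k * (a * i))) (fun _ _ => Nat.zero_le _)
      (Finset.mem_range.2 (by omega))
  set X : ℕ := X0 + k * (a * q) * (a + c) with hX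
  refine ⟨k * (a * q) * l / σ, by positivity, ?_⟩
  have hgap : 0 < k * (a * q) * l / σ - k * (a * p) * l := by
    rw [sub_pos, lt_div_iff₀ (by linarith)]
    have : 0 < (k : ℝ) * a * l := by positivity
    nlinarith
  have hgap2 : 0 < (ρ - 1) * p - 1 := by linarith
  filter_upwards [hrun, (hT.const_mul_atTop hgap).eventually_ge_atTop (X : ℝ),
    (hT.const_mul_atTop (show 0 < k * a * l * ((ρ - 1) * p - 1) by positivity)).eventually_ge_atTop
      (X : ℝ),
    (hT.const_mul_atTop hl).eventually_ge_atTop ((N + X : ℕ) : ℝ)] with e hrun he1 he2 he3 y hy hy1 hy2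
  set K : ℝ := (k : ℝ) ^ e with hK
  have hK0 : 0 < K := by positivity
  -- choose the multiplier
  have hex : ∃ i, p ≤ i ∧ i ≤ q ∧ k * (a * i) * l * K + X ≤ y ∧ (y : ℝ) ≤ k * (a * i) * (ρ * l) * K := by
    have hyp : k * (a * p) * l * K + X ≤ y := by nlinarith
    by_cases hyq : k * (a * q) * l * K + X ≤ (y : ℝ)
    · refine ⟨q, by exact_mod_cast hpq'.le, le_rfl, hyq, ?_⟩
      calc (y : ℝ) ≤ _ := hy2
        _ = _ := by field_simp
    · have hlt : p ≤ q := by exact_mod_cast hpq'.le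
      obtain ⟨i, hi1, hi2, hi3, hi4⟩ : ∃ i, p ≤ i ∧ i < q ∧ k * (a * i) * l * K + X ≤ (y : ℝ) ∧
          ¬ k * (a * (i + 1 : ℕ)) * l * K + X ≤ (y : ℝ) := by
        by_contra hcon
        push Not at hcon
        have : ∀ i, p ≤ i → i ≤ q → k * (a * i) * l * K + X ≤ (y : ℝ) := by
          intro i hi
          induction i, hi using Nat.le_induction with
          | base => exact fun _ => hyp
          | succ i hi ih => exact fun h => hcon i hi (by omega) (ih (by omega))
        exact hyq (this q hlt le_rfl)
      refine ⟨i, hi1, hi2.le, hi3, ?_⟩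
      push Not at hi4
      push_cast at hi4
      have hi1' : (p : ℝ) ≤ i := by exact_mod_cast hi1
      have h5 : k * a * l * ((ρ - 1) * p - 1) * K ≤ k * a * l * ((ρ - 1) * i - 1) * K := by
        gcongr
      nlinarith
  obtain ⟨i, hi1, hi2, hi3, hi4⟩ := hex
  have hi0 : (0 : ℝ) < i := by
    have : (p : ℝ) ≤ i := by exact_mod_cast hi1
    linarith
  obtain ⟨hRb, hRb1⟩ := hR i hi1 hi2
  set b : ℕ := k * (a * i) with hb
  have hbr : (b : ℝ) = k * (a * i) := by rw [hb]; push_cast; ring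
  rw [← hbr] at hi3 hi4
  have hb0 : (0 : ℝ) < b := by rw [hbr]; positivity
  have hb0' : 0 < b := by exact_mod_cast hb0
  have hbq : b ≤ k * (a * q) := by rw [hb]; gcongr
  have hXy : X ≤ y := by
    have : (X : ℝ) ≤ y := by
      have : 0 ≤ (b : ℝ) * l * K := by positivity
      linarith
    exact_mod_cast this
  have hbX : X0 + b * (a + c) ≤ X := by
    rw [hX]
    gcongr
  have hct : c ≤ (y - X0) / b := by
    rw [Nat.le_div_iff_mul_le hb0']
    have : b * (a + c) = b * a + c * b := by ring
    omega
  obtain ⟨m, hmc, hm1, hm2⟩ := exists_class_le (a := a) (by omega) hct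
  rw [Nat.le_div_iff_mul_le hb0'] at hm1
  rw [Nat.div_lt_iff_lt_mul hb0'] at hm2
  have hba : b * a ≤ k * (a * q) * a := by gcongr
  have hmb : (m + a) * b = m * b + b * a := by ring
  obtain ⟨x, hx⟩ : ∃ x, y = b * m + x := ⟨y - m * b, by rw [mul_comm b m]; omega⟩
  have hmb' : m * b = b * m := mul_comm _ _
  have hxc : x ≡ c [MOD a] := by
    have hb' : b * m ≡ 0 [MOD a] := by
      rw [Nat.modEq_zero_iff_dvd, hb]
      exact ⟨k * i * m, by ring⟩
    have := hb'.add_right x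
    rw [← hx, zero_add] at this
    exact this.symm.trans hy
  have hRx : R x := hsmall x hxc (by omega) (by omega)
  have hyr : (y : ℝ) = b * m + x := by exact_mod_cast hx
  have hml : l * K ≤ m := by
    have h6 : (y : ℝ) + b * c ≤ b * m + X := by
      have : y + b * c ≤ b * m + X := by
        rw [mul_add] at hbX
        omega
      exact_mod_cast this
    have h7 : (b : ℝ) * (l * K) ≤ b * m := by
      have : 0 ≤ (b : ℝ) * c := by positivity
      linarith
    exact le_of_mul_le_mul_left h7 hb0
  have hmu : (m : ℝ) ≤ ρ * l * K := by
    have h7 : (b : ℝ) * m ≤ b * (ρ * l * K) := by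
      have : (0 : ℝ) ≤ x := Nat.cast_nonneg _
      linarith
    exact le_of_mul_le_mul_left h7 hb0
  have hRm := hrun m hmc hml hmu
  have hmN : N + X ≤ m := by exact_mod_cast he3.trans hml
  rw [hx]
  have hxX : x ≤ X := by
    rw [mul_add] at hbX
    omega
  exact hNN b m (by have : NN b ≤ N := hN i hi2; omega) x (by omega) hRb hRb1 hRm hRx

theorem HasRun.final (hk : 2 ≤ k) {a c : ℕ} {ρ : ℝ} (hρ : k ≤ ρ) (h : HasRun k a R c ρ) :
    ∃ N, ∀ y ≥ N, y ≡ c [MOD a] → R y := by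
  obtain ⟨l, hl, hrun⟩ := h
  obtain ⟨E, hE⟩ := Filter.eventually_atTop.1 hrun
  have hk0 : (1 : ℝ) < k := by exact_mod_cast (by omega : 1 < k)
  refine ⟨⌈l * (k : ℝ) ^ E⌉₊, fun y hy hyc => ?_⟩
  have hy' : l * (k : ℝ) ^ E ≤ y := Nat.ceil_le.1 hy
  have h1 : 1 ≤ (y : ℝ) / (l * (k : ℝ) ^ E) := by
    rw [le_div_iff₀ (by positivity)]
    linarith
  obtain ⟨n, hn1, hn2⟩ := exists_nat_pow_near h1 hk0
  rw [le_div_iff₀ (by positivity)] at hn1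
  rw [div_lt_iff₀ (by positivity)] at hn2
  refine hE (E + n) (by omega) y hyc ?_ ?_
  · rw [pow_add]
    linarith
  · rw [pow_add]
    rw [pow_succ] at hn2
    have : 0 ≤ (ρ - k) * (l * (k : ℝ) ^ E * (k : ℝ) ^ n) := by
      apply mul_nonneg <;> [linarith; positivity]
    nlinarith

theorem class_large (hk : 2 ≤ k) {N0 : ℕ} (h1 : ∀ r ≥ N0, R r → R (k * r) ∧ R (k * r + 1))
    (h2 : ∀ b, ∃ N, ∀ m ≥ N, ∀ x ≤ m, R b → R (b + 1) → R m → R x → R (b * m + x))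
    (h3 : ∀ N, ∃ r ≥ N, R r) {r0 : ℕ} (hr0 : N0 ≤ r0) (hr0' : 0 < r0) (hRr0 : R r0) {x : ℕ}
    (hx : R x) (hx0 : 0 < x) : ∃ N, ∀ y ≥ N, y ≡ x [MOD k * r0] → R y := by
  have ha : 2 ≤ k * r0 := by nlinarith
  obtain ⟨ha1, ha2⟩ := h1 r0 hr0 hRr0
  set a := k * r0 with haa
  obtain ⟨Na, hNa⟩ := h2 a
  have h2' : ∀ m ≥ Na, ∀ x ≤ m, R m → R x → R (a * m + x) :=
    fun m hm x hxm hRm hRx => hNa m hm x hxm ha1 ha2 hRm hRx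
  obtain ⟨ρ1, hρ1, l1, hl1, hrun1⟩ := HasRun.base hk h1 ha h2' h3 ha1 (by omega)
  obtain ⟨ρ, hρ, hrun⟩ := HasRun.base hk h1 ha h2' h3 hx hx0
  obtain ⟨σ, hσ, hσ1⟩ := exists_between hρ1
  have ha0 : (0 : ℝ) < a := by exact_mod_cast (by omega : 0 < a)
  have key : ∀ ρ : ℝ, 1 < ρ → HasRun k a R x ρ → HasRun k a R x (σ * ρ) := by
    intro ρ hρ h
    have hT := (tendsto_pow_nat hk).const_mul_atTop (show 0 < l1 / a by positivity)
    obtain ⟨f, ⟨⟨hf1, hf2⟩, hf3⟩, hf4⟩ := (((hrun1.and (hT.eventually_ge_atTop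
      ((2 + σ) / (ρ1 - σ)))).and (hT.eventually_ge_atTop (2 / (ρ - 1)))).and
      (hT.eventually_ge_atTop (N0 : ℝ))).exists
    set u : ℝ := l1 / a * (k : ℝ) ^ f with hu
    have hu0 : 0 ≤ u := by positivity
    have hua : a * u = l1 * (k : ℝ) ^ f := by rw [hu]; field_simp
    rw [div_le_iff₀ (by linarith)] at hf2 hf3
    have hp1 : u ≤ ⌈u⌉₊ := Nat.le_ceil _
    have hp2 : (⌈u⌉₊ : ℝ) < u + 1 := Nat.ceil_lt_add_one hu0
    have hq1 : (⌊ρ1 * u⌋₊ : ℝ) ≤ ρ1 * u := Nat.floor_le (by positivity)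
    have hq2 : ρ1 * u < ⌊ρ1 * u⌋₊ + 1 := Nat.lt_floor_add_one _
    refine HasRun.step hk ha h2 hρ hσ h (p := ⌈u⌉₊) (q := ⌊ρ1 * u⌋₊) ?_ ?_ ?_
    · nlinarith
    · nlinarith
    · intro i hi1 hi2
      have hi1' : (⌈u⌉₊ : ℝ) ≤ i := by exact_mod_cast hi1
      have hi2' : (i : ℝ) ≤ ⌊ρ1 * u⌋₊ := by exact_mod_cast hi2
      refine h1 _ ?_ (hf1 (a * i) (by simp [Nat.ModEq]) ?_ ?_)
      · have : (N0 : ℝ) ≤ i := by linarith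
        have : N0 ≤ i := by exact_mod_cast this
        nlinarith
      · push_cast
        rw [← hua]
        gcongr
        linarith
      · push_cast
        rw [mul_assoc, ← hua, mul_left_comm]
        gcongr
        linarith
  have key2 : ∀ n : ℕ, 1 < σ ^ n * ρ ∧ HasRun k a R x (σ ^ n * ρ) := by
    intro n
    induction n with
    | zero => simpa using ⟨hρ, hrun⟩
    | succ n ih =>
      have := key _ ih.1 ih.2
      rw [pow_succ', mul_assoc]
      exact ⟨by nlinarith [ih.1], this⟩
  obtain ⟨n, hn⟩ := pow_unbounded_of_one_lt (k : ℝ) hσ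
  refine HasRun.final hk ?_ (key2 n).2
  have : 0 < σ ^ n := by positivity
  nlinarith

theorem closure_large (hk : 2 ≤ k) (h1 : ∃ N0, ∀ r ≥ N0, R r → R (k * r) ∧ R (k * r + 1))
    (h2 : ∀ b, ∃ N, ∀ m ≥ N, ∀ x ≤ m, R b → R (b + 1) → R m → R x → R (b * m + x))
    (h3 : ∀ N, ∃ r ≥ N, R r) : ∃ N, ∀ r ≥ N, r % k = 0 ∨ r % k = 1 → R r := by
  obtain ⟨N0, h1⟩ := h1
  obtain ⟨r0, hr0, hRr0⟩ := h3 (N0 + 1)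
  obtain ⟨hR0, hR1⟩ := h1 r0 (by omega) hRr0
  have hkr : r0 ≤ k * r0 := by nlinarith
  have main : ∀ d, R (k * r0 + d) → ∃ N, ∀ y1 ≥ N, R (k * y1 + d) := by
    intro d hd
    obtain ⟨N1, hN1⟩ := class_large hk h1 h2 h3 (by omega) (by omega) hRr0 hd (by omega)
    have hco : Nat.Coprime r0 (k * r0 + 1) := by
      simp
    have hex : ∀ s, ∃ N, ∀ y1 ≥ N, y1 ≡ s [MOD k * r0 + 1] → R (k * y1 + d) := by
      intro s
      obtain ⟨w0, hw1, hw2⟩ := Nat.chineseRemainder hco 0 s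
      set w := w0 + r0 * (k * r0 + 1) * (N1 + 1) with hw
      have hwR : R (k * w + d) := by
        refine hN1 _ ?_ ?_
        · have : 1 * (N1 + 1) ≤ r0 * (k * r0 + 1) * (N1 + 1) := by
            gcongr
            nlinarith
          have : w ≤ k * w := by nlinarith
          omega
        · refine Nat.ModEq.add_right d (Nat.ModEq.mul_left' k ?_)
          have hw3 : w ≡ 0 [MOD r0] := by
            rw [Nat.modEq_zero_iff_dvd] at hw1 ⊢
            exact hw1.add (Dvd.intro _ (by rw [mul_assoc]))
          exact hw3.trans (by simp [Nat.ModEq])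
      obtain ⟨N2, hN2⟩ := class_large hk h1 h2 h3 (r0 := k * r0 + 1) (by omega) (by omega) hR1 hwR
        (by
          have : 0 < r0 * (k * r0 + 1) * (N1 + 1) := by
            have : 0 < r0 := by omega
            positivity
          have : 0 < k * w := Nat.mul_pos (by omega) (by omega)
          omega)
      refine ⟨N2, fun y1 hy1 hys => hN2 _ (by nlinarith) ?_⟩
      refine Nat.ModEq.add_right d (Nat.ModEq.mul_left' k ?_)
      refine hys.trans (hw2.symm.trans ?_)
      rw [hw]
      symm
      have : r0 * (k * r0 + 1) * (N1 + 1) ≡ 0 [MOD k * r0 + 1] := by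
        rw [Nat.modEq_zero_iff_dvd]
        exact ⟨r0 * (N1 + 1), by ring⟩
      simpa using this.add_left w0
    choose M hM using hex
    refine ⟨∑ s ∈ Finset.range (k * r0 + 1), M s, fun y1 hy1 => ?_⟩
    refine hM (y1 % (k * r0 + 1)) y1 (le_trans ?_ hy1) (Nat.mod_modEq _ _).symm
    exact Finset.single_le_sum (f := M) (fun _ _ => Nat.zero_le _)
      (Finset.mem_range.2 (Nat.mod_lt _ (by omega)))
  obtain ⟨N2, hN2⟩ := main 0 hR0
  obtain ⟨N3, hN3⟩ := main 1 hR1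
  refine ⟨k * (N2 + N3 + 1), fun r hr hrk => ?_⟩
  have hdiv : N2 + N3 + 1 ≤ r / k := by
    rw [Nat.le_div_iff_mul_le (by omega), mul_comm]
    exact hr
  have hdm := Nat.div_add_mod r k
  rcases hrk with h | h
  · rw [← hdm, h]
    exact hN2 _ (by omega)
  · rw [← hdm, h]
    exact hN3 _ (by omega)

end closure


/-! ### Seeds: cyclotomic designs -/

section seed

variable {F : Type} [Field F] [Fintype F] [DecidableEq F]

theorem card_pow_eq_one_le {n : ℕ} (hn : 0 < n) :
    (Finset.univ.filter fun x : F => x ^ n = 1).card ≤ n := by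
  calc (Finset.univ.filter fun x : F => x ^ n = 1).card
      ≤ (Polynomial.nthRoots n (1 : F)).toFinset.card := by
        apply Finset.card_le_card
        intro x hx
        rw [Multiset.mem_toFinset, Polynomial.mem_nthRoots hn]
        simpa using hx
    _ ≤ _ := (Multiset.toFinset_card_le _).trans (Polynomial.card_nthRoots _ _)

/-- Neighbours of `x` in `A` with colour `c`. -/
def nbr (s : ℕ) (A : Finset F) (c x : F) : Finset F := A.filter fun y => (y - x) ^ s = c

theorem card_common_le {s : ℕ} (hs : 0 < s) {y y' : F} (hy : y ≠ y') :
    (Finset.univ.filter fun x : F => (y - x) ^ s = (y' - x) ^ s ∧ (y - x) ^ s ≠ 0).card ≤ s := by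
  refine le_trans ?_ (card_pow_eq_one_le (F := F) hs)
  refine Finset.card_le_card_of_injOn (fun x => (y - x) / (y' - x)) ?_ ?_
  · intro x hx
    simp only [Finset.coe_filter, Finset.mem_univ, true_and, Set.mem_ofPred_eq] at hx ⊢
    rw [div_pow, hx.1, div_self]
    rw [← hx.1]
    exact hx.2
  · intro x hx x' hx' h
    simp only [Finset.coe_filter, Finset.mem_univ, true_and, Set.mem_ofPred_eq] at hx hx' h
    have h1 : y' - x ≠ 0 := by
      intro h0
      rw [hx.1, h0, zero_pow hs.ne'] at hx
      exact hx.2 rfl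
    have h2 : y' - x' ≠ 0 := by
      intro h0
      rw [hx'.1, h0, zero_pow hs.ne'] at hx'
      exact hx'.2 rfl
    rw [div_eq_div_iff h1 h2] at h
    have h3 : (y - y') * (x - x') = 0 := by linear_combination h
    rcases mul_eq_zero.1 h3 with h4 | h4
    · exact absurd (sub_eq_zero.1 h4) hy
    · exact sub_eq_zero.1 h4

theorem sum_sq_le {d s : ℕ} (hs : 0 < s) (hd : 0 < d) (A : Finset F) :
    ∑ x : F, ∑ c ∈ Finset.univ.filter (fun c : F => c ^ d = 1), (nbr s A c x).card ^ 2 ≤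
      A.card * Fintype.card F + A.card ^ 2 * s := by
  calc ∑ x : F, ∑ c ∈ Finset.univ.filter (fun c : F => c ^ d = 1), (nbr s A c x).card ^ 2
      ≤ ∑ x : F, ((A ×ˢ A).filter fun q => (q.1 - x) ^ s = (q.2 - x) ^ s ∧
          (q.1 - x) ^ s ≠ 0).card := by
        refine Finset.sum_le_sum fun x _ => ?_
        have e1 : ∀ c, (nbr s A c x).card ^ 2 = (nbr s A c x ×ˢ nbr s A c x).card := by
          intro c
          rw [Finset.card_product, sq]
        simp only [e1]
        rw [← Finset.card_biUnion]
        · apply Finset.card_le_card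
          intro q hq
          simp only [nbr, Finset.mem_biUnion, Finset.mem_filter, Finset.mem_univ, true_and,
            Finset.mem_product] at hq ⊢
          obtain ⟨c, hc, ⟨h1, h2⟩, h3, h4⟩ := hq
          refine ⟨⟨h1, h3⟩, h2.trans h4.symm, ?_⟩
          rw [h2]
          rintro rfl
          simp [hd.ne'] at hc
        · intro c _ c' _ hcc
          rw [Function.onFun, Finset.disjoint_left]
          intro q hq hq'
          simp only [nbr, Finset.mem_filter, Finset.mem_product] at hq hq'
          exact hcc (hq.1.2.symm.trans hq'.1.2)
    _ = ∑ q ∈ A ×ˢ A, (Finset.univ.filter fun x : F => (q.1 - x) ^ s = (q.2 - x) ^ s ∧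
          (q.1 - x) ^ s ≠ 0).card := by
        simp only [Finset.card_filter]
        rw [Finset.sum_comm]
    _ ≤ ∑ q ∈ A ×ˢ A, ((if q.1 = q.2 then Fintype.card F else 0) + s) := by
        refine Finset.sum_le_sum fun q _ => ?_
        split_ifs with h
        · exact le_trans (Finset.card_le_univ _) (Nat.le_add_right _ _)
        · simpa using card_common_le hs h
    _ = A.card * Fintype.card F + A.card ^ 2 * s := by
        rw [Finset.sum_add_distrib, Finset.sum_product]
        simp [sq]

theorem sum_eq {d s : ℕ} (hs : 0 < s) (hcard : Fintype.card F = d * s + 1) (A : Finset F) :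
    ∑ x : F, ∑ c ∈ Finset.univ.filter (fun c : F => c ^ d = 1), (nbr s A c x).card =
      A.card * (d * s) := by
  calc ∑ x : F, ∑ c ∈ Finset.univ.filter (fun c : F => c ^ d = 1), (nbr s A c x).card
      = ∑ x : F, (A.filter fun y => y ≠ x).card := by
        refine Finset.sum_congr rfl fun x _ => ?_
        rw [← Finset.card_biUnion]
        · congr 1
          ext y
          simp only [nbr, Finset.mem_biUnion, Finset.mem_filter, Finset.mem_univ, true_and]
          constructor
          · rintro ⟨c, hc, hy, hyc⟩
            refine ⟨hy, ?_⟩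
            rintro rfl
            rw [sub_self, zero_pow hs.ne'] at hyc
            rw [← hyc] at hc
            rcases Nat.eq_zero_or_pos d with h | h
            · rw [h] at hcard
              have := Fintype.one_lt_card (α := F)
              omega
            · simp [h.ne'] at hc
          · rintro ⟨hy, hne⟩
            refine ⟨(y - x) ^ s, ?_, hy, rfl⟩
            rw [← pow_mul, mul_comm]
            have := FiniteField.pow_card_sub_one_eq_one (y - x) (sub_ne_zero.2 hne)
            rwa [hcard, Nat.add_sub_cancel] at this
        · intro c _ c' _ hcc
          rw [Function.onFun, Finset.disjoint_left]
          intro q hq hq'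
          simp only [nbr, Finset.mem_filter] at hq hq'
          exact hcc (hq.2.symm.trans hq'.2)
    _ = ∑ y ∈ A, (Finset.univ.filter fun x : F => y ≠ x).card := by
        simp only [Finset.card_filter]
        rw [Finset.sum_comm]
    _ = A.card * (d * s) := by
        rw [Finset.sum_const_nat]
        intro y _
        have : (Finset.univ.filter fun x : F => y ≠ x) = Finset.univ.erase y := by
          ext x
          simp [eq_comm]
        rw [this, Finset.card_erase_of_mem (Finset.mem_univ _), Finset.card_univ, hcard]
        rfl

theorem bad_le {d s : ℕ} (hs : 0 < s) (hd : 0 < d) (hcard : Fintype.card F = d * s + 1)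
    (A : Finset F) (hA : 0 < A.card) {c : F} (hc : c ^ d = 1) :
    ((Finset.univ.filter fun x : F => ((nbr s A c x).card : ℝ) < A.card / (2 * d)).card : ℝ) *
      A.card ≤ 8 * d ^ 2 * Fintype.card F := by
  set C := Finset.univ.filter (fun c : F => c ^ d = 1) with hC
  have hCd : (C.card : ℝ) ≤ d := by exact_mod_cast card_pow_eq_one_le (F := F) hd
  set α : ℝ := (A.card : ℝ) with hα
  have hα0 : 0 < α := by rw [hα]; exact_mod_cast hA
  have hd0 : (0 : ℝ) < d := by exact_mod_cast hd
  have h1 : ∑ x : F, ∑ c ∈ C, ((nbr s A c x).card : ℝ) ^ 2 ≤ α * Fintype.card F + α ^ 2 * s := by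
    have := sum_sq_le hs hd A
    rw [← hC] at this
    rw [hα]
    exact_mod_cast this
  have h2 : ∑ x : F, ∑ c ∈ C, ((nbr s A c x).card : ℝ) = α * (d * s) := by
    have := sum_eq hs hcard A
    rw [← hC] at this
    rw [hα]
    exact_mod_cast this
  have hcard' : (Fintype.card F : ℝ) = d * s + 1 := by exact_mod_cast hcard
  set p : ℝ := (Fintype.card F : ℝ) with hp
  have hαp : α ≤ p := by
    rw [hα, hp]
    exact_mod_cast Finset.card_le_univ A
  have h3 : ∑ x : F, ∑ c ∈ C, (((nbr s A c x).card : ℝ) - α / d) ^ 2 ≤ 2 * α * p := by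
    have e1 : ∑ x : F, ∑ c ∈ C, (((nbr s A c x).card : ℝ) - α / d) ^ 2 =
        ∑ x : F, ∑ c ∈ C, ((nbr s A c x).card : ℝ) ^ 2 -
          2 * (α / d) * ∑ x : F, ∑ c ∈ C, ((nbr s A c x).card : ℝ) + p * C.card * (α / d) ^ 2 := by
      simp only [sub_sq, Finset.sum_add_distrib, Finset.sum_sub_distrib, Finset.mul_sum,
        Finset.sum_const, nsmul_eq_mul, Finset.card_univ]
      rw [← hp]
      congr 1
      · congr 1
        refine Finset.sum_congr rfl fun x _ => Finset.sum_congr rfl fun c _ => by ring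
      · ring
    rw [e1, h2]
    have h4 : p * C.card * (α / d) ^ 2 ≤ p * d * (α / d) ^ 2 := by gcongr
    have h5 : 2 * (α / d) * (α * (d * s)) = 2 * α ^ 2 * s := by field_simp
    have h6 : p * d * (α / d) ^ 2 = α ^ 2 * s + α ^ 2 / d := by
      rw [hcard']
      field_simp
    have h7 : α ^ 2 / d ≤ α * p := by
      rw [div_le_iff₀ hd0]
      have : (1 : ℝ) ≤ d := by exact_mod_cast hd
      have h8 : 0 ≤ α * p := by positivity
      nlinarith
    nlinarith
  set B := Finset.univ.filter fun x : F => ((nbr s A c x).card : ℝ) < α / (2 * d) with hB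
  have h4 : (B.card : ℝ) * (α / (2 * d)) ^ 2 ≤ 2 * α * p := by
    refine le_trans ?_ h3
    calc (B.card : ℝ) * (α / (2 * d)) ^ 2 = ∑ x ∈ B, (α / (2 * d)) ^ 2 := by simp
      _ ≤ ∑ x ∈ B, ∑ c ∈ C, (((nbr s A c x).card : ℝ) - α / d) ^ 2 := by
        refine Finset.sum_le_sum fun x hx => ?_
        have hx' : ((nbr s A c x).card : ℝ) < α / (2 * d) := by simpa [hB] using hx
        refine le_trans ?_ (Finset.single_le_sum
          (f := fun c => (((nbr s A c x).card : ℝ) - α / d) ^ 2) (fun _ _ => sq_nonneg _)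
          (show c ∈ C by simpa [hC] using hc))
        have e2 : α / d = 2 * (α / (2 * d)) := by field_simp
        have h9 : 0 < α / (2 * d) := by positivity
        simp only [e2]
        nlinarith
      _ ≤ _ := Finset.sum_le_sum_of_subset_of_nonneg (Finset.subset_univ _)
          (fun _ _ _ => Finset.sum_nonneg fun _ _ => sq_nonneg _)
  have h5 : (B.card : ℝ) * (α / (2 * d)) ^ 2 = (B.card * α) * (α / (4 * d ^ 2)) := by
    field_simp
    ring
  have h6 : 2 * α * p = (8 * d ^ 2 * p) * (α / (4 * d ^ 2)) := by
    field_simp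
    ring
  rw [h5, h6] at h4
  exact le_of_mul_le_mul_right h4 (by positivity)

theorem exists_points (d : ℕ) (hd : 0 < d) (n : ℕ) : ∀ δ : ℝ, 0 < δ → ∃ P : ℕ,
    ∀ (F : Type) [Field F] [Fintype F] [DecidableEq F] (s : ℕ), 0 < s →
      Fintype.card F = d * s + 1 → P ≤ Fintype.card F →
      ∀ A : Fin n → Finset F, (∀ i, δ * Fintype.card F ≤ (A i).card) →
      ∀ c : Fin n → Fin n → F, (∀ i j, i < j → c i j ^ d = 1) →
      ∃ b : Fin n → F, (∀ i, b i ∈ A i) ∧ ∀ i j, i < j → (b j - b i) ^ s = c i j := by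
  induction n with
  | zero =>
    intro δ _
    refine ⟨0, fun F _ _ _ s _ _ _ A _ c _ => ⟨fun i => i.elim0, fun i => i.elim0, fun i => i.elim0⟩⟩
  | succ n ih =>
    intro δ hδ
    have hd0 : (0 : ℝ) < d := by exact_mod_cast hd
    obtain ⟨P, hP⟩ := ih (δ / (2 * d)) (by positivity)
    obtain ⟨P', hP'⟩ := exists_nat_gt (n * (8 * d ^ 2 / δ) / δ)
    refine ⟨P + P', fun F _ _ _ s hs hcard hPF A hA c hc => ?_⟩
    set p : ℝ := (Fintype.card F : ℝ) with hp
    have hp0 : 0 < p := by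
      rw [hp]
      exact_mod_cast Fintype.card_pos
    have hPp : (P' : ℝ) ≤ p := by
      rw [hp]
      exact_mod_cast (by omega : P' ≤ Fintype.card F)
    have hApos : ∀ i, 0 < (A i).card := by
      intro i
      have : (0 : ℝ) < (A i).card := lt_of_lt_of_le (by positivity) (hA i)
      exact_mod_cast this
    let B : Fin n → Finset F := fun j => Finset.univ.filter fun x : F =>
      ((nbr s (A j.succ) (c 0 j.succ) x).card : ℝ) < (A j.succ).card / (2 * d)
    have hB : ∀ j, ((B j).card : ℝ) ≤ 8 * d ^ 2 / δ := by
      intro j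
      have h1 := bad_le hs hd hcard (A j.succ) (hApos _) (hc 0 j.succ (Fin.succ_pos j))
      have h2 : ((B j).card : ℝ) * (δ * p) ≤ 8 * d ^ 2 * p :=
        le_trans (by gcongr; exact hA _) h1
      rw [le_div_iff₀ hδ]
      refine le_of_mul_le_mul_right ?_ hp0
      linarith
    have hex : ∃ x ∈ A 0, x ∉ Finset.univ.biUnion B := by
      by_contra hcon
      push Not at hcon
      have h1 : ((A 0).card : ℝ) ≤ ∑ j, ((B j).card : ℝ) := by
        exact_mod_cast (Finset.card_le_card hcon).trans Finset.card_biUnion_le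
      have h2 : ∑ j, ((B j).card : ℝ) ≤ n * (8 * d ^ 2 / δ) := by
        refine (Finset.sum_le_sum fun j _ => hB j).trans ?_
        simp
      have h3 := hA 0
      rw [div_lt_iff₀ hδ] at hP'
      have h4 : (P' : ℝ) * δ ≤ p * δ := by gcongr
      linarith
    obtain ⟨x, hx, hxB⟩ := hex
    have hxB' : ∀ j : Fin n, ((A j.succ).card : ℝ) / (2 * d) ≤
        (nbr s (A j.succ) (c 0 j.succ) x).card := by
      intro j
      by_contra hcon
      push Not at hcon
      exact hxB (Finset.mem_biUnion.2 ⟨j, Finset.mem_univ _, by simpa [B] using hcon⟩)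
    obtain ⟨b, hb1, hb2⟩ := hP F s hs hcard (by omega)
      (fun j => nbr s (A j.succ) (c 0 j.succ) x) (by
        intro j
        refine le_trans ?_ (hxB' j)
        rw [div_mul_eq_mul_div]
        gcongr
        exact hA _) (fun i j => c i.succ j.succ)
      (fun i j hij => hc _ _ (Fin.succ_lt_succ_iff.2 hij))
    have hb1' : ∀ j, b j ∈ A j.succ ∧ (b j - x) ^ s = c 0 j.succ := by
      intro j
      simpa [nbr] using hb1 j
    refine ⟨Fin.cons x b, ?_, ?_⟩
    · intro i
      refine Fin.cases ?_ (fun i => ?_) i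
      · simpa using hx
      · simpa using (hb1' i).1
    · intro i j
      refine Fin.cases ?_ (fun j => ?_) j
      · intro h
        exact absurd h (Fin.not_lt_zero i)
      · refine Fin.cases ?_ (fun i => ?_) i
        · intro _
          simpa using (hb1' j).2
        · intro h
          simpa using hb2 i j (Fin.succ_lt_succ_iff.1 h)

theorem exists_primitive {d s : ℕ} (hs : 0 < s) (hd : 0 < d)
    (hcard : Fintype.card F = d * s + 1) : ∃ ζ : F, IsPrimitiveRoot ζ d := by
  obtain ⟨g, hg⟩ := IsCyclic.exists_generator (α := Fˣ)
  have h1 : orderOf g = d * s := by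
    rw [orderOf_eq_card_of_forall_mem_zpowers hg, Nat.card_eq_fintype_card, Fintype.card_units, hcard]
    rfl
  have h2 : IsPrimitiveRoot g (d * s) := h1 ▸ IsPrimitiveRoot.orderOf g
  have h3 := h2.pow (Nat.mul_pos hd hs) (mul_comm d s)
  exact ⟨_, IsPrimitiveRoot.coe_units_iff.2 h3⟩

/-- A cyclotomic design from a configuration with distinct colours. -/
theorem cyclotomic_dec {d s k : ℕ} (hs : Odd s) (hk : 2 ≤ k) (hd : d = k * (k - 1))
    (hcard : Fintype.card F = d * s + 1)
    (hex : ∀ c : Fin k → Fin k → F, (∀ i j, i < j → c i j ^ d = 1) →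
      ∃ b : Fin k → F, ∀ i j, i < j → (b j - b i) ^ s = c i j) :
    Dec (fun _ _ : F => True) {k} := by
  have hs0 : 0 < s := hs.pos
  have hd0 : 0 < d := by rw [hd]; exact Nat.mul_pos (by omega) (by omega)
  obtain ⟨ζ, hζ⟩ := exists_primitive hs0 hd0 hcard
  set g := k.choose 2 with hg
  have hdg : d = g * 2 := by
    rw [hd, hg, Nat.choose_two_right, Nat.div_mul_cancel]
    exact (Nat.even_mul_pred_self k).two_dvd
  have hneg : ζ ^ g = -1 := (hζ.pow hd0 hdg).eq_neg_one_of_two_right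
  let φ : {e : Sym2 (Fin k) // ¬ e.IsDiag} ≃ Fin g :=
    Fintype.equivOfCardEq (by rw [Sym2.card_subtype_not_diag]; simp [hg])
  let ψ : Fin k → Fin k → ℕ := fun i j =>
    if h : i = j then 0 else φ ⟨s(i, j), by simpa using h⟩
  have hψg : ∀ i j, i ≠ j → ψ i j < g := by
    intro i j h
    simp only [ψ, dif_neg h]
    exact (φ _).2
  have hψs : ∀ i j, ψ i j = ψ j i := by
    intro i j
    by_cases h : i = j
    · rw [h]
    · have h' : ¬ j = i := fun h' => h h'.symm
      simp only [ψ, dif_neg h, dif_neg h', Sym2.eq_swap]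
  have hψi : ∀ i j i' j', i ≠ j → i' ≠ j' → ψ i j = ψ i' j' → s(i, j) = s(i', j') := by
    intro i j i' j' h h' he
    simp only [ψ, dif_neg h, dif_neg h'] at he
    exact congrArg Subtype.val (φ.injective (Fin.ext he))
  have hψc : ∀ n < g, ∃ i j, i < j ∧ ψ i j = n := by
    intro n hn
    obtain ⟨⟨e, he⟩, hφ⟩ := φ.surjective ⟨n, hn⟩
    induction e with
    | h i j =>
      have hij : i ≠ j := by simpa using he
      have : ψ i j = n := by
        simp only [ψ, dif_neg hij, hφ]
      rcases lt_or_gt_of_ne hij with h | h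
      · exact ⟨i, j, h, this⟩
      · exact ⟨j, i, h, by rw [hψs, this]⟩
  obtain ⟨b, hb⟩ := hex (fun i j => ζ ^ ψ i j) (fun i j _ => by
    rw [← pow_mul, mul_comm, pow_mul, hζ.pow_eq_one, one_pow])
  -- exponents of all ordered differences
  have hb2 : ∀ i j, i < j → (b i - b j) ^ s = ζ ^ (ψ i j + g) := by
    intro i j hij
    rw [← neg_sub, hs.neg_pow, hb i j hij, pow_add, hneg]
    ring
  let χ : Fin k → Fin k → ℕ := fun i j => if i < j then ψ i j else ψ i j + g
  have hχ : ∀ i j, i ≠ j → (b j - b i) ^ s = ζ ^ χ i j := by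
    intro i j hij
    by_cases h : i < j
    · simp only [χ, if_pos h, hb i j h]
    · simp only [χ, if_neg h]
      rw [hψs]
      exact hb2 j i (lt_of_le_of_ne (not_lt.1 h) hij.symm)
  have hχd : ∀ i j, i ≠ j → χ i j < d := by
    intro i j hij
    have := hψg i j hij
    simp only [χ]
    split_ifs <;> omega
  have hχi : ∀ i j i' j', i ≠ j → i' ≠ j' → χ i j = χ i' j' → i = i' ∧ j = j' := by
    intro i j i' j' h h' he
    have h1 := hψg i j h
    have h2 := hψg i' j' h'
    have h3 : ψ i j = ψ i' j' ∧ (i < j ↔ i' < j') := by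
      simp only [χ] at he
      split_ifs at he with h4 h5 h5
      · exact ⟨he, by simp [h4, h5]⟩
      · omega
      · omega
      · exact ⟨by omega, by simp [h4, h5]⟩
    have h4 := hψi i j i' j' h h' h3.1
    rw [Sym2.eq_iff] at h4
    rcases h4 with h4 | ⟨rfl, rfl⟩
    · exact h4
    · exfalso
      have := h3.2
      rcases lt_or_gt_of_ne h with h5 | h5
      · exact lt_asymm h5 (this.1 h5)
      · exact lt_asymm h5 (this.2 h5)
  have hζ0 : ζ ≠ 0 := hζ.ne_zero hd0.ne'
  have hbne : ∀ i j, i ≠ j → b j - b i ≠ 0 := by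
    intro i j hij h0
    have := hχ i j hij
    rw [h0, zero_pow hs0.ne'] at this
    exact pow_ne_zero _ hζ0 this.symm
  have hh0 : ∀ h : {h : F // h ^ s = 1}, h.1 ≠ 0 := by
    rintro ⟨h, hh⟩ h0
    simp only at h0
    rw [h0, zero_pow hs0.ne'] at hh
    exact zero_ne_one hh
  refine Dec.glue (ι := {h : F // h ^ s = 1} × F) (W := fun _ => Fin k)
    (fun q i => q.1.1 * b i + q.2) ?_ (Δ := fun _ _ _ => True)
    (fun _ => Dec.complete (Fin k) (by simp)) (fun _ _ _ _ _ => trivial) ?_ ?_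
  · rintro ⟨h, x⟩ i j hij
    by_contra hne
    simp only [add_left_inj] at hij
    exact hbne i j hne (sub_eq_zero.2 (mul_left_cancel₀ (hh0 h) hij).symm)
  · intro x y hxy _
    have hyx : y - x ≠ 0 := sub_ne_zero.2 hxy.symm
    have h1 : ((y - x) ^ s) ^ d = 1 := by
      rw [← pow_mul, mul_comm]
      have := FiniteField.pow_card_sub_one_eq_one (y - x) hyx
      rwa [hcard, Nat.add_sub_cancel] at this
    have : NeZero d := ⟨hd0.ne'⟩
    obtain ⟨n, hn, hn'⟩ := hζ.eq_pow_of_pow_eq_one h1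
    have hij : ∃ i j, i ≠ j ∧ χ i j = n := by
      by_cases hng : n < g
      · obtain ⟨i, j, hij, h⟩ := hψc n hng
        exact ⟨i, j, hij.ne, by simp only [χ, if_pos hij, h]⟩
      · obtain ⟨i, j, hij, h⟩ := hψc (n - g) (by omega)
        refine ⟨j, i, hij.ne', ?_⟩
        simp only [χ, if_neg (lt_asymm hij)]
        rw [hψs, h]
        omega
    obtain ⟨i, j, hij, hn2⟩ := hij
    have hbij := hbne i j hij
    have hh : ((y - x) / (b j - b i)) ^ s = 1 := by
      rw [div_pow, hχ i j hij, hn2, ← hn', div_self]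
      exact pow_ne_zero _ hζ0
    refine ⟨(⟨_, hh⟩, x - (y - x) / (b j - b i) * b i), i, j, ?_, ?_, trivial⟩
    · simp
    · field_simp
      ring
  · rintro ⟨h, x⟩ ⟨h', x'⟩ i j i' j' hij h1 h2 _ _
    simp only at h1 h2
    have h3 : h.1 * (b j - b i) = h'.1 * (b j' - b i') := by linear_combination h2 - h1
    have hij' : i' ≠ j' := by
      rintro rfl
      rw [sub_self, mul_zero] at h3
      exact mul_ne_zero (hh0 h) (hbne i j hij) h3
    have h4 := congrArg (· ^ s) h3
    simp only [mul_pow, h.2, h'.2, one_mul] at h4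
    rw [hχ i j hij, hχ i' j' hij'] at h4
    obtain ⟨rfl, rfl⟩ := hχi i j i' j' hij hij' (hζ.pow_inj (hχd _ _ hij) (hχd _ _ hij') h4)
    have h5 : h = h' := Subtype.ext (mul_right_cancel₀ (hbne i j hij) h3)
    subst h5
    have h6 : x = x' := by linear_combination h1
    rw [h6]

end seed

theorem exists_seed {k : ℕ} (hk : 2 ≤ k) (N : ℕ) : ∃ r ≥ N, RT k (Fin r) := by
  obtain ⟨d, hd⟩ : ∃ d, d = k * (k - 1) := ⟨_, rfl⟩
  have hd0 : 0 < d := by rw [hd]; exact Nat.mul_pos (by omega) (by omega)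
  have hev : Even d := by rw [hd]; exact Nat.even_mul_pred_self k
  obtain ⟨P, hP⟩ := exists_points d hd0 k 1 one_pos
  have hco : Nat.Coprime (d + 1) (2 * d) := by
    refine Nat.Coprime.mul_right ?_ (by simp)
    rw [Nat.coprime_two_right]
    exact hev.add_one
  obtain ⟨p, hp, hpp, hmod⟩ := Nat.forall_exists_prime_gt_and_modEq (P + (d + 1) + k * N)
    (by omega : 2 * d ≠ 0) hco
  obtain ⟨q, hq⟩ := (Nat.modEq_iff_dvd' (by omega : d + 1 ≤ p)).1 hmod.symm
  have hps : p = d * (2 * q + 1) + 1 := by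
    have : d * (2 * q + 1) = 2 * d * q + d := by ring
    omega
  have : Fact p.Prime := ⟨hpp⟩
  have hcard : Fintype.card (ZMod p) = d * (2 * q + 1) + 1 := by rw [ZMod.card, hps]
  have hdec : Dec (fun _ _ : ZMod p => True) {k} := by
    refine cyclotomic_dec (odd_two_mul_add_one q) hk hd hcard fun c hc => ?_
    obtain ⟨b, -, hb⟩ := hP (ZMod p) (2 * q + 1) (by omega) hcard (by rw [ZMod.card]; omega)
      (fun _ => Finset.univ) (by simp) c hc
    exact ⟨b, hb⟩
  refine ⟨k * (2 * q + 1), ?_, Dec.delete_point hk ?_ hdec⟩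
  · have h1 : k * N < p := by omega
    have h2 : p ≤ k * (k * (2 * q + 1)) := by
      rw [hps, hd]
      obtain ⟨j, rfl⟩ : ∃ j, k = j + 1 := ⟨k - 1, by omega⟩
      simp only [Nat.add_sub_cancel]
      nlinarith
    exact (Nat.lt_of_mul_lt_mul_left (h1.trans_le h2)).le
  · rw [hcard, hd]
    ring


theorem RT.large {k : ℕ} (hk : 2 ≤ k) :
    ∃ N, ∀ r ≥ N, r % k = 0 ∨ r % k = 1 → RT k (Fin r) := by
  refine closure_large (R := fun r => RT k (Fin r)) hk ?_ ?_ (fun N => exists_seed hk N)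
  · obtain ⟨N, hN⟩ := TD.large k
    refine ⟨N, fun r hr h => ⟨RT.mul_k ?_ h, RT.mul_k_add_one hk ?_ h⟩⟩
    · exact (hN (r * (k - 1)) (by have : 1 ≤ k - 1 := (by omega); nlinarith)).map
        (Function.Embedding.refl _) (Fintype.equivOfCardEq (by simp))
    · exact (hN (r * (k - 1) + 1) (by have : 1 ≤ k - 1 := (by omega); nlinarith)).map
        (Function.Embedding.refl _) (Fintype.equivOfCardEq (by simp))
  · intro a
    obtain ⟨N, hN⟩ := TD.large (a + 1)
    exact ⟨N, fun m hm x hx h1 h2 h3 h4 => RT.truncated hx (hN m hm) h1 h2 h3 h4⟩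

theorem Dec.large {k : ℕ} (hk : 2 < k) : ∃ N, ∀ n, N < n →
    (n % (k * (k - 1)) = 1 % (k * (k - 1)) ∨ n % (k * (k - 1)) = k % (k * (k - 1))) →
    Dec (fun _ _ : Fin n => True) {k} := by
  obtain ⟨N, hN⟩ := RT.large (k := k) (by omega)
  refine ⟨(k - 1) * (N + 1) + k, fun n hn hmod => ?_⟩
  obtain ⟨j, rfl⟩ : ∃ j, k = j + 1 := ⟨k - 1, by omega⟩
  simp only [Nat.add_sub_cancel] at *
  have key : ∃ r, (r % (j + 1) = 0 ∨ r % (j + 1) = 1) ∧ n = r * j + 1 := by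
    rcases hmod with h | h
    · obtain ⟨q, hq⟩ := (Nat.modEq_iff_dvd' (by omega : 1 ≤ n)).1
        (show 1 ≡ n [MOD (j + 1) * j] from h.symm)
      refine ⟨(j + 1) * q, Or.inl (by simp), ?_⟩
      have : (j + 1) * q * j = (j + 1) * j * q := by ring
      omega
    · obtain ⟨q, hq⟩ := (Nat.modEq_iff_dvd' (by omega : j + 1 ≤ n)).1
        (show j + 1 ≡ n [MOD (j + 1) * j] from h.symm)
      refine ⟨(j + 1) * q + 1, Or.inr ?_, ?_⟩
      · rw [Nat.mul_add_mod, Nat.mod_eq_of_lt (by omega)]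
      · have : ((j + 1) * q + 1) * j = (j + 1) * j * q + j := by ring
        omega
  obtain ⟨r, hr, rfl⟩ := key
  have hrN : N ≤ r := by
    by_contra hcon
    push Not at hcon
    have : r * j ≤ j * (N + 1) := by rw [mul_comm]; gcongr; omega
    omega
  have h := (hN r hrN hr).add_point (by omega)
  exact h.equiv (Fintype.equivOfCardEq (by simp)) (by simp)


/-- Wilson's theorem for complete graphs: for every integer `t > 2` there exists `N` such that
for all `n > N` with `n ≡ 1 (mod t(t-1))` or `n ≡ t (mod t(t-1))`, the complete graph `K_n`
has a `K_t`-decomposition: a set of subgraphs, each isomorphic to `K_t`, such that each edge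
appears in precisely one of them. -/
theorem wilson (t : ℕ) (ht : 2 < t) :
    ∃ N : ℕ, ∀ n : ℕ, N < n →
      (n % (t * (t - 1)) = 1 % (t * (t - 1)) ∨ n % (t * (t - 1)) = t % (t * (t - 1))) →
      ∃ L : Set (⊤ : SimpleGraph (Fin n)).Subgraph,
        (∀ c ∈ L, c.IsCopy (⊤ : SimpleGraph (Fin t))) ∧
        ∀ e ∈ (⊤ : SimpleGraph (Fin n)).edgeSet, ∃! c, c ∈ L ∧ e ∈ c.edgeSet := by
  obtain ⟨N, hN⟩ := Dec.large ht
  refine ⟨N, fun n hn hmod => ?_⟩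
  obtain ⟨B, hB1, -, hB3⟩ := hN n hn hmod
  refine ⟨{c | ∃ b ∈ B, c = (⊤ : (⊤ : SimpleGraph (Fin n)).Subgraph).induce (b : Set (Fin n))},
    ?_, ?_⟩
  · rintro c ⟨b, hb, rfl⟩
    have hcard : Fintype.card (b : Set (Fin n)) = t := by
      have : b.card = t := hB1 b hb
      simpa using this
    let e : (b : Set (Fin n)) ≃ Fin t := Fintype.equivOfCardEq (by simpa using hcard)
    refine ⟨⟨e, ?_⟩⟩
    rintro ⟨x, hx⟩ ⟨y, hy⟩
    have hx' : x ∈ b := hx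
    have hy' : y ∈ b := hy
    simp [hx', hy']
    rw [not_iff_not]
    exact ⟨fun h => congrArg Subtype.val (e.injective h), fun h => by subst h; rfl⟩
  · intro e he
    induction e with
    | h x y =>
      have hxy : x ≠ y := by simpa using he
      obtain ⟨b, ⟨hb, hx, hy⟩, hbu⟩ := hB3 x y hxy trivial
      refine ⟨_, ⟨⟨b, hb, rfl⟩, ?_⟩, ?_⟩
      · simp [hx, hy, hxy]
      · rintro c ⟨⟨b', hb', rfl⟩, hc⟩
        simp at hc
        rw [hbu b' ⟨hb', hc.1, hc.2.1⟩]
end
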